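/- arXiv:0711.0013 — 3 statements merged into one kernel-verified Lean document; each statement's English description precedes it below -/
import Mathlib

section
/- A one-parameter family of Sobolev inequalities on the hyperbolic plane (inequality (3.13)): Let n ≥ 5 be an integer, set k̃ = (n−2)/2 and p = 2 + 2/k̃ = 2n/(n−2). Let g : H → [0,∞) be a smooth compactly supported function on the upper half-plane. Then ∫_H g^p dμ ≤ ((k̃−1)/(k̃+1))^{1+1/k̃} · ((2k̃+1)/(2π))^{1/k̃} · [ ∫_H g² dμ + (1/(k̃(k̃−1))) ∫_H (|∂_t g|² + |∂_y g|²) dt dy ]^{1+1/k̃}. -/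
open MeasureTheory

/-- The hyperbolic area measure `μ = y^{−2} dt dy` on the upper half-plane
`H = {(t,y) : y > 0}`. -/
noncomputable def muUpper : Measure (ℝ × ℝ) :=
  (volume.restrict {p : ℝ × ℝ | 0 < p.2}).withDensity
    (fun p => ENNReal.ofReal ((p.2 ^ 2)⁻¹))

section
open Set

theorem transport1D (a b c d : ℝ) (_hab : a < b) (hcd : c < d) (F G : ℝ → ℝ)
    (hF : Continuous F) (hF0 : ∀ x, 0 ≤ F x) (hFs : ∀ x, x ∉ Icc a b → F x = 0)
    (hG : ContinuousOn G (Icc c d)) (hGpos : ∀ x ∈ Icc c d, 0 < G x)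
    (hm : ∫ x in a..b, F x = ∫ x in c..d, G x) :
    ∃ T : ℝ → ℝ, (∀ x, T x ∈ Icc c d) ∧ T a = c ∧ T b = d ∧
      ∀ x, HasDerivAt T (F x / G (T x)) x := by
  -- clamped extension of G
  set Gt : ℝ → ℝ := fun x => G (projIcc c d hcd.le x) with hGt
  have hGtc : Continuous Gt := by
    have h1 : Continuous (fun x : Icc c d => G x) := continuousOn_iff_continuous_domRestrict.1 hG
    exact h1.comp continuous_projIcc
  have hGtpos : ∀ x, 0 < Gt x := fun x => hGpos _ (projIcc c d hcd.le x).2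
  have hGteq : ∀ x ∈ Icc c d, Gt x = G x := by
    intro x hx
    simp [hGt, projIcc_of_mem hcd.le hx]
  obtain ⟨x0, hx0, hmin⟩ := (isCompact_Icc (a := c) (b := d)).exists_isMinOn
    (nonempty_Icc.2 hcd.le) hG
  set m := G x0 with hmdef
  have hmpos : 0 < m := hGpos _ hx0
  have hGtm : ∀ x, m ≤ Gt x := fun x => hmin (projIcc c d hcd.le x).2
  set B : ℝ → ℝ := fun s => ∫ x in c..s, Gt x with hB
  have hBd : ∀ s, HasDerivAt B (Gt s) s := fun s =>
    intervalIntegral.integral_hasDerivAt_right (hGtc.intervalIntegrable _ _)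
      (hGtc.stronglyMeasurableAtFilter _ _) hGtc.continuousAt
  have hBmono : StrictMono B := strictMono_of_hasDerivAt_pos hBd hGtpos
  have hBc : Continuous B := continuous_iff_continuousAt.2 fun s => (hBd s).continuousAt
  have hBc0 : B c = 0 := by simp [hB]
  have hBlow : Monotone (fun s => B s - m * s) := by
    apply monotone_of_deriv_nonneg
    · intro s; exact ((hBd s).sub ((hasDerivAt_id s).const_mul m)).differentiableAt
    · intro s
      have := ((hBd s).sub ((hasDerivAt_id s).const_mul m)).deriv
      simp only [Pi.sub_def, id] at this
      rw [this]; have := hGtm s; linarith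
  have hBsurj : Function.Surjective B := by
    apply hBc.surjective
    · refine Filter.tendsto_atTop_mono' _ (f₁ := fun s => m * s + (B c - m * c)) ?_ ?_
      · filter_upwards [Filter.eventually_ge_atTop c] with s hs
        have := hBlow hs; simp only at this; linarith
      · exact Filter.tendsto_atTop_add_const_right _ _ (Filter.tendsto_id.const_mul_atTop hmpos)
    · refine Filter.tendsto_atBot_mono' _ (f₁ := fun s => m * s + (B c - m * c)) ?_ ?_
      · filter_upwards [Filter.eventually_le_atBot c] with s hs
        have := hBlow hs; simp only at this; linarith
      · exact Filter.tendsto_atBot_add_const_right _ _ (Filter.tendsto_id.const_mul_atBot hmpos)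
  set e := StrictMono.orderIsoOfSurjective B hBmono hBsurj with he
  have heB : ∀ s, e s = B s := fun s => rfl
  set A : ℝ → ℝ := fun s => ∫ x in a..s, F x with hA
  have hAd : ∀ s, HasDerivAt A (F s) s := fun s =>
    intervalIntegral.integral_hasDerivAt_right (hF.intervalIntegrable _ _)
      (hF.stronglyMeasurableAtFilter _ _) hF.continuousAt
  have hAmono : Monotone A := by
    apply monotone_of_deriv_nonneg
    · intro s; exact (hAd s).differentiableAt
    · intro s; rw [(hAd s).deriv]; exact hF0 s
  have hAa : A a = 0 := by simp [hA]
  have hAb : A b = B d := by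
    simp only [hA, hB, hm]
    apply intervalIntegral.integral_congr
    intro x hx
    rw [uIcc_of_le hcd.le] at hx
    exact (hGteq x hx).symm
  have hAlow : ∀ x, 0 ≤ A x := by
    intro x
    rcases le_total a x with h | h
    · rw [← hAa]; exact hAmono h
    · simp only [hA]
      rw [intervalIntegral.integral_symm, intervalIntegral.integral_of_le h,
        ← integral_Ico_eq_integral_Ioc, setIntegral_eq_zero_of_forall_eq_zero]
      · simp
      · intro y hy
        exact hFs y (fun hh => absurd hh.1 (not_le.2 hy.2))
  have hAhigh : ∀ x, A x ≤ A b := by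
    intro x
    rcases le_total x b with h | h
    · exact hAmono h
    · have : A x = A b + ∫ y in b..x, F y :=
        (intervalIntegral.integral_add_adjacent_intervals (hF.intervalIntegrable _ _)
          (hF.intervalIntegrable _ _)).symm
      rw [this, intervalIntegral.integral_of_le h, setIntegral_eq_zero_of_forall_eq_zero]
      · simp
      · intro y hy
        exact hFs y (fun hh => absurd hh.2 (not_le.2 hy.1))
  have hTin : ∀ x, e.symm (A x) ∈ Icc c d := by
    intro x
    constructor
    · rw [OrderIso.le_symm_apply, heB, hBc0]; exact hAlow x
    · rw [OrderIso.symm_apply_le, heB, ← hAb]; exact hAhigh x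
  refine ⟨fun x => e.symm (A x), hTin, ?_, ?_, ?_⟩
  · show e.symm (A a) = c
    rw [hAa, ← hBc0, ← heB, e.symm_apply_apply]
  · show e.symm (A b) = d
    rw [hAb, ← heB, e.symm_apply_apply]
  · intro x
    have h1 : HasDerivAt e.symm (Gt (e.symm (A x)))⁻¹ (A x) := by
      refine HasDerivAt.of_local_left_inverse (f := B) e.symm.continuous.continuousAt
        (hBd _) (hGtpos _).ne' ?_
      exact Filter.Eventually.of_forall fun y => e.apply_symm_apply y
    have h2 := h1.comp x (hAd x)
    rw [hGteq _ (hTin x)] at h2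
    rw [div_eq_inv_mul]
    exact h2

theorem amgm_core (n : ℕ) (hn : 5 ≤ n) (u v x : ℝ) (hu : 0 ≤ u) (hv : 0 ≤ v) (hx : 0 ≤ x) :
    (n : ℝ) * (u * v * x ^ (n - 2)) ^ (1 / (n : ℝ)) ≤ u + v + ((n : ℝ) - 2) * x := by
  have hN : (5 : ℝ) ≤ n := by exact_mod_cast hn
  have h := Real.geom_mean_le_arith_mean3_weighted (w₁ := 1 / (n : ℝ)) (w₂ := 1 / (n : ℝ))
    (w₃ := ((n : ℝ) - 2) / n) (by positivity) (by positivity)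
    (div_nonneg (by linarith) (by linarith)) hu hv hx (by field_simp; ring)
  have e : (u * v * x ^ (n - 2)) ^ (1 / (n : ℝ))
      = u ^ (1 / (n : ℝ)) * v ^ (1 / (n : ℝ)) * x ^ (((n : ℝ) - 2) / n) := by
    rw [Real.mul_rpow (by positivity) (by positivity), Real.mul_rpow hu hv]
    congr 1
    rw [← Real.rpow_natCast, ← Real.rpow_mul hx]
    congr 1
    rw [Nat.cast_sub (by omega)]
    push_cast; ring
  rw [e]
  calc (n : ℝ) * _ ≤ n * (1 / (n : ℝ) * u + 1 / (n : ℝ) * v + ((n : ℝ) - 2) / n * x) := by gcongr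
    _ = _ := by field_simp

set_option maxHeartbeats 1000000 in
theorem inner_ineq (n : ℕ) (hn : 5 ≤ n) (p α : ℝ) (hp : p = 2 * n / (n - 2))
    (hα : α = 2 * (n - 1) / (n - 2))
    (c d : ℝ) (hc : 0 < c) (hcd : c < d) (f f' Γ : ℝ → ℝ) (τ lam : ℝ) (hτ : 0 ≤ τ)
    (hlam : 0 < lam)
    (hf : ∀ y, HasDerivAt f (f' y) y) (hf' : Continuous f') (hf0 : ∀ y, 0 ≤ f y)
    (hfs : ∀ y, y ∉ Ioo c d → f y = 0)
    (hΓ : Continuous Γ) (hΓpos : ∀ y, 0 < Γ y)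
    (hm : ∫ y in c..d, f y ^ p * y ^ (n - 2) = τ * ∫ y in c..d, Γ y * y ^ (n - 2)) :
    (n : ℝ) * (τ * ∫ y in c..d, Γ y ^ (1 - 1 / (n : ℝ)) * y ^ (n - 2)) ≤
      τ * (∫ y in c..d, f y ^ α * y ^ (n - 2)) +
      α / 2 * (lam * (∫ y in c..d, f' y ^ 2 * y ^ (n - 2)) +
        lam⁻¹ * (τ * ∫ y in c..d, Γ y * y ^ 2 * y ^ (n - 2))) := by
  have hN : (5 : ℝ) ≤ n := by exact_mod_cast hn
  have hN2 : (0 : ℝ) < n - 2 := by linarith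
  have hα1 : 1 ≤ α := by rw [hα, le_div_iff₀ hN2]; linarith
  have hα0 : 0 < α := by linarith
  have hp0 : 0 < p := by rw [hp]; apply div_pos <;> linarith
  have hpα : (α - 1) + (α - 1) = p := by rw [hα, hp]; field_simp; ring
  have hpα2 : α + p / n = p := by rw [hα, hp]; field_simp; ring
  have hfc : Continuous f := continuous_iff_continuousAt.2 fun s => (hf s).continuousAt
  have hpos : ∀ y ∈ Icc c d, 0 < y := fun y hy => lt_of_lt_of_le hc hy.1
  rcases hτ.eq_or_lt with h0 | hτp
  · rw [← h0]
    simp only [zero_mul, mul_zero, add_zero, zero_add]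
    have : 0 ≤ ∫ y in c..d, f' y ^ 2 * y ^ (n - 2) := by
      apply intervalIntegral.integral_nonneg hcd.le
      intro y hy; have := hpos y hy; positivity
    positivity
  have hfpc : Continuous fun y => f y ^ p := hfc.rpow_const fun _ => Or.inr hp0.le
  have hfac : Continuous fun y => f y ^ α := hfc.rpow_const fun _ => Or.inr hα0.le
  have hfa1c : Continuous fun y => f y ^ (α - 1) := hfc.rpow_const fun _ => Or.inr (by linarith)
  have hwc : Continuous fun y : ℝ => y ^ (n - 2) := by fun_prop
  obtain ⟨T, hTin, hTc, hTd, hTder⟩ := transport1D c d c d hcd hcd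
    (fun y => f y ^ p * y ^ (n - 2)) (fun y => τ * (Γ y * y ^ (n - 2)))
    (hfpc.mul hwc)
    (by
      intro y
      by_cases hy : y ∈ Ioo c d
      · have := hpos y ⟨hy.1.le, hy.2.le⟩; have := hf0 y; positivity
      · simp [hfs y hy, Real.zero_rpow hp0.ne'])
    (by
      intro y hy
      have : f y = 0 := hfs y fun h => hy ⟨h.1.le, h.2.le⟩
      simp [this, Real.zero_rpow hp0.ne'])
    (by fun_prop)
    (by intro y hy; have := hpos y hy; have := hΓpos y; positivity)
    (by rw [hm, intervalIntegral.integral_const_mul])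
  set T' : ℝ → ℝ := fun y => f y ^ p * y ^ (n - 2) / (τ * (Γ (T y) * T y ^ (n - 2))) with hT'
  have hTcont : Continuous T := continuous_iff_continuousAt.2 fun s => (hTder s).continuousAt
  have hTpos : ∀ y, 0 < T y := fun y => hpos _ (hTin y)
  have hT'c : Continuous T' := by
    apply (hfpc.mul hwc).div
    · fun_prop
    · intro y; have := hTpos y; have := hΓpos (T y); positivity
  -- change of variables
  have cov : ∀ H : ℝ → ℝ, Continuous H → ∫ y in c..d, H (T y) * T' y = ∫ r in c..d, H r := by
    intro H hH
    have := intervalIntegral.integral_comp_mul_deriv (a := c) (b := d) (f := T) (f' := T') (g := H)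
      (fun x _ => hTder x) hT'c.continuousOn hH
    rw [hTc, hTd] at this
    exact this
  have hΓr : Continuous fun y => Γ y ^ (1 - 1 / (n : ℝ)) :=
    hΓ.rpow_const fun y => Or.inl (hΓpos y).ne'
  have hΓrT : Continuous fun y => Γ (T y) ^ (1 - 1 / (n : ℝ)) := hΓr.comp hTcont
  -- pointwise
  have key : ∀ y ∈ Icc c d, (n : ℝ) * τ * ((Γ (T y) ^ (1 - 1 / (n : ℝ)) * T y ^ (n - 2)) * T' y) ≤
      τ * (f y ^ α * y ^ (n - 2)) +
        f y ^ α * (T' y * y ^ (n - 2) + T y * (((n - 2 : ℕ) : ℝ) * y ^ (n - 2 - 1))) := by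
    intro y hy
    have hy0 := hpos y hy
    have hT0 := hTpos y
    have hG0 := hΓpos (T y)
    have hcast : ((n - 2 : ℕ) : ℝ) = n - 2 := by rw [Nat.cast_sub (by omega)]; simp
    rcases (hf0 y).eq_or_lt with h | h
    · have e1 : T' y = 0 := by simp [hT', ← h, Real.zero_rpow hp0.ne']
      simp [e1, ← h, Real.zero_rpow hα0.ne']
    · have hv : 0 < T' y := by simp only [hT']; positivity
      have am := amgm_core n hn τ (T' y) (T y / y) hτp.le hv.le (by positivity)
      have e1 : τ * T' y * (T y / y) ^ (n - 2) = f y ^ p / Γ (T y) := by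
        simp only [hT', div_pow]; field_simp
      rw [e1] at am
      have e2 : (f y ^ p / Γ (T y)) ^ (1 / (n : ℝ)) = f y ^ (p / n) * Γ (T y) ^ (-(1 / (n : ℝ))) := by
        rw [Real.div_rpow (by positivity) hG0.le, ← Real.rpow_mul h.le, Real.rpow_neg hG0.le]
        rw [div_eq_mul_inv, mul_one_div]
      rw [e2] at am
      have hmul := mul_le_mul_of_nonneg_left am (show 0 ≤ f y ^ α * y ^ (n - 2) by positivity)
      have e3 : (n : ℝ) * τ * ((Γ (T y) ^ (1 - 1 / (n : ℝ)) * T y ^ (n - 2)) * T' y)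
          = f y ^ α * y ^ (n - 2) * (n * (f y ^ (p / n) * Γ (T y) ^ (-(1 / (n : ℝ))))) := by
        have : f y ^ p = f y ^ α * f y ^ (p / n) := by rw [← Real.rpow_add h, hpα2]
        have h2 : Γ (T y) ^ (1 - 1 / (n : ℝ)) = Γ (T y) * Γ (T y) ^ (-(1 / (n : ℝ))) := by
          rw [sub_eq_add_neg, Real.rpow_add hG0, Real.rpow_one]
        simp only [hT']
        rw [this, h2]
        field_simp
      rw [e3]
      refine hmul.trans (le_of_eq ?_)
      have h3 : y ^ (n - 2) = y ^ (n - 2 - 1) * y := by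
        rw [← pow_succ]; congr 1; omega
      rw [hcast, h3]
      field_simp
      ring
  -- integrate
  have int1 := intervalIntegral.integral_mono_on (μ := volume) hcd.le
    (Continuous.intervalIntegrable (by fun_prop) _ _)
    (Continuous.intervalIntegrable (by fun_prop) _ _) key
  rw [intervalIntegral.integral_const_mul, cov (fun r => Γ r ^ (1 - 1 / (n : ℝ)) * r ^ (n - 2))
    (by fun_prop), intervalIntegral.integral_add (Continuous.intervalIntegrable (by fun_prop) _ _)
    (Continuous.intervalIntegrable (by fun_prop) _ _), intervalIntegral.integral_const_mul] at int1
  -- by parts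
  have hfαd : ∀ y, HasDerivAt (fun y => f y ^ α) (f' y * α * f y ^ (α - 1)) y := fun y =>
    (hf y).rpow_const (Or.inr hα1)
  have parts := intervalIntegral.integral_mul_deriv_eq_deriv_mul (a := c) (b := d)
    (u := fun y => f y ^ α) (u' := fun y => f' y * α * f y ^ (α - 1))
    (v := fun y => T y * y ^ (n - 2))
    (v' := fun y => T' y * y ^ (n - 2) + T y * (((n - 2 : ℕ) : ℝ) * y ^ (n - 2 - 1)))
    (fun y _ => hfαd y) (fun y _ => (hTder y).mul (hasDerivAt_pow (n - 2) y))
    (Continuous.intervalIntegrable (by fun_prop) _ _)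
    (Continuous.intervalIntegrable (by fun_prop) _ _)
  simp only [hfs c (by simp), hfs d (by simp), Real.zero_rpow hα0.ne', zero_mul, sub_zero] at parts
  rw [parts] at int1
  have young : -(∫ y in c..d, f' y * α * f y ^ (α - 1) * (T y * y ^ (n - 2))) ≤
      ∫ y in c..d, α / 2 * (lam * (f' y ^ 2 * y ^ (n - 2)) +
        lam⁻¹ * (τ * (Γ (T y) * T y ^ 2 * T y ^ (n - 2) * T' y))) := by
    rw [← intervalIntegral.integral_neg]
    have hcc : Continuous fun y => Γ (T y) * T y ^ 2 * T y ^ (n - 2) * T' y := by fun_prop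
    apply intervalIntegral.integral_mono_on hcd.le
      (Continuous.intervalIntegrable (by fun_prop) _ _)
      (Continuous.intervalIntegrable (by fun_prop) _ _)
    intro y hy
    have hy0 := hpos y hy
    have hT0 := hTpos y
    have hG0 := hΓpos (T y)
    have e1 : τ * (Γ (T y) * T y ^ 2 * T y ^ (n - 2) * T' y) =
        (f y ^ (α - 1) * T y) ^ 2 * y ^ (n - 2) := by
      have : f y ^ p = (f y ^ (α - 1)) ^ 2 := by
        rw [← hpα, Real.rpow_add_of_nonneg (hf0 y) (by linarith) (by linarith), sq]
      simp only [hT']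
      rw [this]
      field_simp
    rw [e1]
    set X := f y ^ (α - 1) * T y
    have hsq : -(f' y * X) ≤ (lam * f' y ^ 2 + lam⁻¹ * X ^ 2) / 2 := by
      have h1 : 0 ≤ lam⁻¹ * (lam * f' y + X) ^ 2 := by positivity
      have h2 : lam⁻¹ * (lam * f' y + X) ^ 2 = lam * f' y ^ 2 + lam⁻¹ * X ^ 2 + 2 * (f' y * X) := by
        field_simp; ring
      linarith
    have := mul_le_mul_of_nonneg_left hsq (show 0 ≤ α * y ^ (n - 2) by positivity)
    calc _ = α * y ^ (n - 2) * (-(f' y * X)) := by simp only [X]; ring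
      _ ≤ _ := this
      _ = _ := by ring
  have hcc : Continuous fun y => Γ (T y) * T y ^ 2 * T y ^ (n - 2) * T' y := by fun_prop
  rw [intervalIntegral.integral_const_mul, intervalIntegral.integral_add
    (Continuous.intervalIntegrable (by fun_prop) _ _)
    (Continuous.intervalIntegrable (by fun_prop) _ _), intervalIntegral.integral_const_mul,
    intervalIntegral.integral_const_mul, intervalIntegral.integral_const_mul,
    cov (fun r => Γ r * r ^ 2 * r ^ (n - 2)) (by fun_prop)] at young
  linarith


theorem box_integral (a b c d : ℝ) (hab : a ≤ b) (hcd : c ≤ d) (Ψ : ℝ × ℝ → ℝ)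
    (hΨ : IntegrableOn Ψ (Ioc a b ×ˢ Ioc c d)) :
    ∫ t in a..b, ∫ y in c..d, Ψ (t, y) = ∫ z in Ioc a b ×ˢ Ioc c d, Ψ z := by
  rw [intervalIntegral.integral_of_le hab]
  simp_rw [intervalIntegral.integral_of_le hcd]
  rw [Measure.volume_eq_prod] at hΨ ⊢
  rw [setIntegral_prod _ hΨ]

theorem intOn_box (a b c d : ℝ) (Ψ : ℝ × ℝ → ℝ) (hΨ : Continuous Ψ) :
    IntegrableOn Ψ (Ioc a b ×ˢ Ioc c d) :=
  (hΨ.continuousOn.integrableOn_compact (isCompact_Icc.prod isCompact_Icc)).mono_set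
    (prod_mono Ioc_subset_Icc_self Ioc_subset_Icc_self)

theorem swapII (a b c d : ℝ) (hab : a ≤ b) (hcd : c ≤ d) (Ψ : ℝ × ℝ → ℝ) (hΨ : Continuous Ψ) :
    ∫ t in a..b, ∫ y in c..d, Ψ (t, y) = ∫ y in c..d, ∫ t in a..b, Ψ (t, y) := by
  simp_rw [intervalIntegral.integral_of_le hcd, intervalIntegral.integral_of_le hab]
  apply integral_integral_swap
  rw [Measure.prod_restrict]
  exact intOn_box a b c d Ψ hΨ

theorem contII (c d : ℝ) (Ψ : ℝ × ℝ → ℝ) (hΨ : Continuous Ψ) :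
    Continuous fun t => ∫ y in c..d, Ψ (t, y) :=
  intervalIntegral.continuous_parametric_intervalIntegral_of_continuous'
    (f := fun t y => Ψ (t, y)) hΨ c d

set_option maxHeartbeats 2000000 in
theorem outer_ineq (n : ℕ) (hn : 5 ≤ n) (p α : ℝ) (hp : p = 2 * n / (n - 2))
    (hα : α = 2 * (n - 1) / (n - 2))
    (a b c d : ℝ) (hab : a < b) (hc : 0 < c) (hcd : c < d) (f ft fy G : ℝ × ℝ → ℝ) (lam : ℝ)
    (hlam : 0 < lam)
    (hf : Continuous f)
    (hft : ∀ t y, HasDerivAt (fun s => f (s, y)) (ft (t, y)) t)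
    (hfy : ∀ t y, HasDerivAt (fun s => f (t, s)) (fy (t, y)) y)
    (hftc : Continuous ft) (hfyc : Continuous fy) (hf0 : ∀ z, 0 ≤ f z)
    (hfs : ∀ z, z ∉ Ioo a b ×ˢ Ioo c d → f z = 0)
    (hG : Continuous G) (hGpos : ∀ z, 0 < G z)
    (hm : ∫ t in a..b, ∫ y in c..d, f (t, y) ^ p * y ^ (n - 2)
      = ∫ t in a..b, ∫ y in c..d, G (t, y) * y ^ (n - 2)) :
    (n : ℝ) * (∫ t in a..b, ∫ y in c..d, G (t, y) ^ (1 - 1 / (n : ℝ)) * y ^ (n - 2)) ≤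
      α / 2 * (lam * (∫ t in a..b, ∫ y in c..d, (ft (t, y) ^ 2 + fy (t, y) ^ 2) * y ^ (n - 2)) +
        lam⁻¹ * (∫ t in a..b, ∫ y in c..d, G (t, y) * (t ^ 2 + y ^ 2) * y ^ (n - 2))) := by
  have hN : (5 : ℝ) ≤ n := by exact_mod_cast hn
  have hN2 : (0 : ℝ) < n - 2 := by linarith
  have hα1 : 1 ≤ α := by rw [hα, le_div_iff₀ hN2]; linarith
  have hα0 : 0 < α := by linarith
  have hp0 : 0 < p := by rw [hp]; apply div_pos <;> linarith
  have hpα : (α - 1) + (α - 1) = p := by rw [hα, hp]; field_simp; ring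
  have hpos : ∀ y ∈ Icc c d, 0 < y := fun y hy => lt_of_lt_of_le hc hy.1
  have hfp : Continuous fun z => f z ^ p := hf.rpow_const fun _ => Or.inr hp0.le
  have hfa : Continuous fun z => f z ^ α := hf.rpow_const fun _ => Or.inr hα0.le
  have hfa1 : Continuous fun z => f z ^ (α - 1) := hf.rpow_const fun _ => Or.inr (by linarith)
  have hGr : Continuous fun z => G z ^ (1 - 1 / (n : ℝ)) :=
    hG.rpow_const fun y => Or.inl (hGpos y).ne'
  have cF1 := contII c d (fun z => f z ^ p * z.2 ^ (n - 2)) (by fun_prop)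
  have cG1 := contII c d (fun z => G z * z.2 ^ (n - 2)) (by fun_prop)
  have cL := contII c d (fun z => G z ^ (1 - 1 / (n : ℝ)) * z.2 ^ (n - 2)) (by fun_prop)
  have cΦ := contII c d (fun z => f z ^ α * z.2 ^ (n - 2)) (by fun_prop)
  have cE1 := contII c d (fun z => ft z ^ 2 * z.2 ^ (n - 2)) (by fun_prop)
  have cE2 := contII c d (fun z => fy z ^ 2 * z.2 ^ (n - 2)) (by fun_prop)
  have cK2 := contII c d (fun z => G z * z.2 ^ 2 * z.2 ^ (n - 2)) (by fun_prop)
  simp only at cF1 cG1 cL cΦ cE1 cE2 cK2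
  have hF1 : ∀ t, 0 ≤ ∫ y in c..d, f (t, y) ^ p * y ^ (n - 2) := by
    intro t
    apply intervalIntegral.integral_nonneg hcd.le
    intro y hy; have := hpos y hy; have := hf0 (t, y); positivity
  have hG1 : ∀ t, 0 < ∫ y in c..d, G (t, y) * y ^ (n - 2) := by
    intro t
    apply intervalIntegral.intervalIntegral_pos_of_pos_on
      (Continuous.intervalIntegrable (by fun_prop) _ _) _ hcd
    intro y hy; have := hpos y ⟨hy.1.le, hy.2.le⟩; have := hGpos (t, y); positivity
  obtain ⟨T, hTin, hTa, hTb, hTder⟩ := transport1D a b a b hab hab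
    (fun t => ∫ y in c..d, f (t, y) ^ p * y ^ (n - 2))
    (fun t => ∫ y in c..d, G (t, y) * y ^ (n - 2)) cF1 hF1
    (by
      intro t ht
      have : ∀ y, f (t, y) = 0 := fun y => hfs _ fun h => ht ⟨h.1.1.le, h.1.2.le⟩
      simp [this, Real.zero_rpow hp0.ne'])
    cG1.continuousOn (fun t _ => hG1 t) hm
  set T' : ℝ → ℝ := fun t => (∫ y in c..d, f (t, y) ^ p * y ^ (n - 2)) /
    (∫ y in c..d, G (T t, y) * y ^ (n - 2)) with hT'
  have hTcont : Continuous T := continuous_iff_continuousAt.2 fun s => (hTder s).continuousAt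
  have hT'c : Continuous T' := cF1.div (cG1.comp hTcont) fun t => (hG1 _).ne'
  have hT'0 : ∀ t, 0 ≤ T' t := fun t => div_nonneg (hF1 t) (hG1 _).le
  have cov : ∀ H : ℝ → ℝ, Continuous H → ∫ y in a..b, H (T y) * T' y = ∫ r in a..b, H r := by
    intro H hH
    have := intervalIntegral.integral_comp_mul_deriv (a := a) (b := b) (f := T) (f' := T') (g := H)
      (fun x _ => hTder x) hT'c.continuousOn hH
    rw [hTa, hTb] at this
    exact this
  have cLT := cL.comp hTcont
  have cK2T := cK2.comp hTcont
  simp only [Function.comp_def] at cLT cK2T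
  have key : ∀ t ∈ Icc a b,
      (n : ℝ) * ((∫ y in c..d, G (T t, y) ^ (1 - 1 / (n : ℝ)) * y ^ (n - 2)) * T' t) ≤
      T' t * (∫ y in c..d, f (t, y) ^ α * y ^ (n - 2)) +
      α / 2 * (lam * (∫ y in c..d, fy (t, y) ^ 2 * y ^ (n - 2)) +
        lam⁻¹ * ((∫ y in c..d, G (T t, y) * y ^ 2 * y ^ (n - 2)) * T' t)) := by
    intro t _
    have := inner_ineq n hn p α hp hα c d hc hcd (fun y => f (t, y)) (fun y => fy (t, y))
      (fun y => G (T t, y)) (T' t) lam (hT'0 t) hlam (fun y => hfy t y) (by fun_prop)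
      (fun y => hf0 _) (fun y hy => hfs _ fun h => hy h.2) (by fun_prop) (fun y => hGpos _)
      (by simp only [hT']; rw [div_mul_cancel₀ _ (hG1 _).ne'])
    linarith
  have int1 := intervalIntegral.integral_mono_on (μ := volume) hab.le
    (Continuous.intervalIntegrable (by fun_prop) _ _)
    (Continuous.intervalIntegrable (by fun_prop) _ _) key
  rw [intervalIntegral.integral_const_mul,
    cov (fun s => ∫ y in c..d, G (s, y) ^ (1 - 1 / (n : ℝ)) * y ^ (n - 2)) cL,
    intervalIntegral.integral_add (Continuous.intervalIntegrable (by fun_prop) _ _)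
    (Continuous.intervalIntegrable (by fun_prop) _ _), intervalIntegral.integral_const_mul,
    intervalIntegral.integral_add (Continuous.intervalIntegrable (by fun_prop) _ _)
    (Continuous.intervalIntegrable (by fun_prop) _ _), intervalIntegral.integral_const_mul,
    intervalIntegral.integral_const_mul,
    cov (fun s => ∫ y in c..d, G (s, y) * y ^ 2 * y ^ (n - 2)) cK2] at int1
  -- the t-part
  have tpart : ∫ t in a..b, T' t * (∫ y in c..d, f (t, y) ^ α * y ^ (n - 2)) ≤
      α / 2 * (lam * (∫ t in a..b, ∫ y in c..d, ft (t, y) ^ 2 * y ^ (n - 2)) +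
        lam⁻¹ * (∫ t in a..b, ∫ y in c..d, G (t, y) * t ^ 2 * y ^ (n - 2))) := by
    have e1 : ∫ t in a..b, T' t * (∫ y in c..d, f (t, y) ^ α * y ^ (n - 2)) =
        ∫ y in c..d, ∫ t in a..b, T' t * (f (t, y) ^ α * y ^ (n - 2)) := by
      rw [← swapII a b c d hab.le hcd.le (fun z => T' z.1 * (f z ^ α * z.2 ^ (n - 2))) (by fun_prop)]
      simp_rw [intervalIntegral.integral_const_mul]
    have e2 : (∫ t in a..b, ∫ y in c..d, G (t, y) * t ^ 2 * y ^ (n - 2)) =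
        ∫ t in a..b, ∫ y in c..d, T t ^ 2 * (f (t, y) ^ p * y ^ (n - 2)) := by
      have h := cov (fun s => s ^ 2 * ∫ y in c..d, G (s, y) * y ^ (n - 2)) (by fun_prop)
      have h2 : ∀ t, (∫ y in c..d, G (t, y) * t ^ 2 * y ^ (n - 2)) =
          t ^ 2 * ∫ y in c..d, G (t, y) * y ^ (n - 2) := by
        intro t
        rw [← intervalIntegral.integral_const_mul]
        congr 1; ext y; ring
      simp_rw [h2]
      rw [← h]
      congr 1; ext t
      rw [intervalIntegral.integral_const_mul]
      simp only [hT']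
      rw [mul_assoc, mul_div_cancel₀ _ (hG1 _).ne']
    rw [e1, e2, swapII a b c d hab.le hcd.le (fun z => T z.1 ^ 2 * (f z ^ p * z.2 ^ (n - 2)))
      (by fun_prop), swapII a b c d hab.le hcd.le (fun z => ft z ^ 2 * z.2 ^ (n - 2))
      (by fun_prop)]
    have sw : ∀ Ψ : ℝ × ℝ → ℝ, Continuous Ψ → Continuous fun y => ∫ t in a..b, Ψ (t, y) :=
      fun Ψ hΨ => contII a b (fun z => Ψ (z.2, z.1)) (by fun_prop)
    have c1 := sw (fun z => T z.1 ^ 2 * (f z ^ p * z.2 ^ (n - 2))) (by fun_prop)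
    have c2 := sw (fun z => ft z ^ 2 * z.2 ^ (n - 2)) (by fun_prop)
    have c3 := sw (fun z => T' z.1 * (f z ^ α * z.2 ^ (n - 2))) (by fun_prop)
    simp only at c1 c2 c3
    rw [← intervalIntegral.integral_const_mul, ← intervalIntegral.integral_const_mul,
      ← intervalIntegral.integral_add (Continuous.intervalIntegrable (by fun_prop) _ _)
    (Continuous.intervalIntegrable (by fun_prop) _ _), ← intervalIntegral.integral_const_mul]
    apply intervalIntegral.integral_mono_on hcd.le
      (Continuous.intervalIntegrable (by fun_prop) _ _)
      (Continuous.intervalIntegrable (by fun_prop) _ _)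
    intro y hy
    have hy0 := hpos y hy
    have hfαd : ∀ t, HasDerivAt (fun t => f (t, y) ^ α * y ^ (n - 2))
        (ft (t, y) * α * f (t, y) ^ (α - 1) * y ^ (n - 2)) t := fun t =>
      ((hft t y).rpow_const (Or.inr hα1)).mul_const _
    have hfa1y : Continuous fun t => f (t, y) ^ (α - 1) := hfa1.comp (by fun_prop)
    have hfay : Continuous fun t => f (t, y) ^ α := hfa.comp (by fun_prop)
    have hfpy : Continuous fun t => f (t, y) ^ p := hfp.comp (by fun_prop)
    have parts := intervalIntegral.integral_mul_deriv_eq_deriv_mul (a := a) (b := b)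
      (u := fun t => f (t, y) ^ α * y ^ (n - 2))
      (u' := fun t => ft (t, y) * α * f (t, y) ^ (α - 1) * y ^ (n - 2))
      (v := T) (v' := T')
      (fun t _ => hfαd t) (fun y _ => hTder y)
      (Continuous.intervalIntegrable (by fun_prop) _ _)
      (Continuous.intervalIntegrable (by fun_prop) _ _)
    simp only [hfs (a, y) (by simp), hfs (b, y) (by simp), Real.zero_rpow hα0.ne', zero_mul,
      sub_zero, zero_sub] at parts
    simp_rw [mul_comm (T' _)]
    rw [parts, ← intervalIntegral.integral_neg, ← intervalIntegral.integral_const_mul,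
      ← intervalIntegral.integral_const_mul,
      ← intervalIntegral.integral_add (Continuous.intervalIntegrable (by fun_prop) _ _)
    (Continuous.intervalIntegrable (by fun_prop) _ _), ← intervalIntegral.integral_const_mul]
    apply intervalIntegral.integral_mono_on hab.le
      (Continuous.intervalIntegrable (by fun_prop) _ _)
      (Continuous.intervalIntegrable (by fun_prop) _ _)
    intro t _
    have e3 : f (t, y) ^ p = (f (t, y) ^ (α - 1)) ^ 2 := by
      rw [← hpα, Real.rpow_add_of_nonneg (hf0 _) (by linarith) (by linarith), sq]
    rw [e3]
    set X := f (t, y) ^ (α - 1) * T t with hX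
    have hsq : -(ft (t, y) * X) ≤ (lam * ft (t, y) ^ 2 + lam⁻¹ * X ^ 2) / 2 := by
      have h1 : 0 ≤ lam⁻¹ * (lam * ft (t, y) + X) ^ 2 := by positivity
      have h2 : lam⁻¹ * (lam * ft (t, y) + X) ^ 2 =
          lam * ft (t, y) ^ 2 + lam⁻¹ * X ^ 2 + 2 * (ft (t, y) * X) := by
        field_simp; ring
      linarith
    have := mul_le_mul_of_nonneg_left hsq (show 0 ≤ α * y ^ (n - 2) by positivity)
    calc _ = α * y ^ (n - 2) * (-(ft (t, y) * X)) := by simp only [hX]; ring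
      _ ≤ _ := this
      _ = _ := by simp only [hX]; ring
  have s1 : ∫ t in a..b, ∫ y in c..d, (ft (t, y) ^ 2 + fy (t, y) ^ 2) * y ^ (n - 2) =
      (∫ t in a..b, ∫ y in c..d, ft (t, y) ^ 2 * y ^ (n - 2)) +
      ∫ t in a..b, ∫ y in c..d, fy (t, y) ^ 2 * y ^ (n - 2) := by
    rw [← intervalIntegral.integral_add (cE1.intervalIntegrable _ _) (cE2.intervalIntegrable _ _)]
    congr 1; ext t
    rw [← intervalIntegral.integral_add (Continuous.intervalIntegrable (by fun_prop) _ _)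
      (Continuous.intervalIntegrable (by fun_prop) _ _)]
    congr 1; ext y; ring
  have s2 : ∫ t in a..b, ∫ y in c..d, G (t, y) * (t ^ 2 + y ^ 2) * y ^ (n - 2) =
      (∫ t in a..b, ∫ y in c..d, G (t, y) * t ^ 2 * y ^ (n - 2)) +
      ∫ t in a..b, ∫ y in c..d, G (t, y) * y ^ 2 * y ^ (n - 2) := by
    have cK1 := contII c d (fun z => G z * z.1 ^ 2 * z.2 ^ (n - 2)) (by fun_prop)
    simp only at cK1
    rw [← intervalIntegral.integral_add (cK1.intervalIntegrable _ _) (cK2.intervalIntegrable _ _)]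
    congr 1; ext t
    rw [← intervalIntegral.integral_add (Continuous.intervalIntegrable (by fun_prop) _ _)
      (Continuous.intervalIntegrable (by fun_prop) _ _)]
    congr 1; ext y; ring
  rw [s1, s2]
  linarith


theorem lint_eq {μ : Measure ℝ} (f : ℝ → ℝ) (hf : ∀ᵐ x ∂μ, 0 ≤ f x) (v : ℝ) (hv : 0 < v)
    (h : ∫ x, f x ∂μ = v) : ∫⁻ x, ENNReal.ofReal (f x) ∂μ = ENNReal.ofReal v := by
  have hi : Integrable f μ := by
    by_contra hh
    rw [integral_undef hh] at h
    exact hv.ne h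
  rw [← h, ofReal_integral_eq_lintegral_ofReal hi hf]

/-- The value of the Euclidean integral of the bubble to the power `q`. -/
noncomputable def bubI (n q : ℕ) : ℝ :=
  Real.sqrt Real.pi * (1 / 2 * Real.Gamma (((n : ℝ) - 1) / 2)) * Real.Gamma ((q : ℝ) - n / 2)
    / Real.Gamma q

theorem bubble_lint (n q : ℕ) (hn : 5 ≤ n) (hq : n < 2 * q) :
    ∫⁻ z in (univ : Set ℝ) ×ˢ Ioi (0 : ℝ),
      ENNReal.ofReal (((1 + z.1 ^ 2 + z.2 ^ 2) ^ q)⁻¹ * z.2 ^ (n - 2)) =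
    ENNReal.ofReal (bubI n q) := by
  have hN : (5 : ℝ) ≤ n := by exact_mod_cast hn
  have hQ : (n : ℝ) < 2 * q := by exact_mod_cast hq
  have hq0 : (0 : ℝ) < q := by linarith
  have hΓq : 0 < Real.Gamma q := Real.Gamma_pos_of_pos hq0
  have hcast : ((n - 2 : ℕ) : ℝ) = n - 2 := by rw [Nat.cast_sub (by omega)]; simp
  rw [Measure.volume_eq_prod, ← Measure.prod_restrict, Measure.restrict_univ]
  set ν := (volume : Measure ℝ).restrict (Ioi 0) with hν
  have hνpos : ∀ᵐ x ∂ν, (0 : ℝ) < x := ae_restrict_mem measurableSet_Ioi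
  have hzpos : ∀ᵐ z ∂((volume : Measure ℝ).prod ν), (0 : ℝ) < z.2 :=
    Measure.quasiMeasurePreserving_snd.ae hνpos
  have step1 : ∀ᵐ z ∂((volume : Measure ℝ).prod ν),
      ENNReal.ofReal (((1 + z.1 ^ 2 + z.2 ^ 2) ^ q)⁻¹ * z.2 ^ (n - 2)) =
      ∫⁻ x, ENNReal.ofReal ((Real.Gamma q)⁻¹ * (x ^ ((q : ℝ) - 1) * Real.exp (-x))) *
        (ENNReal.ofReal (Real.exp (-x * z.1 ^ 2)) *
          ENNReal.ofReal (z.2 ^ ((n : ℝ) - 2) * Real.exp (-x * z.2 ^ (2 : ℝ)))) ∂ν := by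
    filter_upwards [hzpos] with z hz
    have hr : 0 < 1 + z.1 ^ 2 + z.2 ^ 2 := by positivity
    have h := Real.integral_rpow_mul_exp_neg_mul_Ioi hq0 hr
    have h2 : ∫ x, (Real.Gamma q)⁻¹ * z.2 ^ ((n : ℝ) - 2) *
        (x ^ ((q : ℝ) - 1) * Real.exp (-((1 + z.1 ^ 2 + z.2 ^ 2) * x))) ∂ν =
        ((1 + z.1 ^ 2 + z.2 ^ 2) ^ q)⁻¹ * z.2 ^ (n - 2) := by
      rw [integral_const_mul, h, ← hcast, Real.rpow_natCast, Real.rpow_natCast, one_div, inv_pow]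
      field_simp
    rw [← lint_eq _ _ _ (by positivity) h2]
    · apply lintegral_congr_ae
      filter_upwards [hνpos] with x hx
      rw [← ENNReal.ofReal_mul (by positivity), ← ENNReal.ofReal_mul (by positivity)]
      congr 1
      have : Real.exp (-((1 + z.1 ^ 2 + z.2 ^ 2) * x)) =
          Real.exp (-x) * Real.exp (-x * z.1 ^ 2) * Real.exp (-x * z.2 ^ (2 : ℝ)) := by
        rw [← Real.exp_add, ← Real.exp_add, Real.rpow_two]; congr 1; ring
      rw [this]; ring
    · filter_upwards [hνpos] with x hx
      positivity
  rw [lintegral_congr_ae step1, lintegral_lintegral_swap (by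
    apply Measurable.aemeasurable
    unfold Function.uncurry
    fun_prop)]
  have step2 : ∀ᵐ x ∂ν, (∫⁻ z, ENNReal.ofReal ((Real.Gamma q)⁻¹ * (x ^ ((q : ℝ) - 1) * Real.exp (-x))) *
        (ENNReal.ofReal (Real.exp (-x * z.1 ^ 2)) *
          ENNReal.ofReal (z.2 ^ ((n : ℝ) - 2) * Real.exp (-x * z.2 ^ (2 : ℝ))))
            ∂((volume : Measure ℝ).prod ν)) =
      ENNReal.ofReal (Real.sqrt Real.pi * (1 / 2 * Real.Gamma (((n : ℝ) - 1) / 2)) / Real.Gamma q *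
        (x ^ ((q : ℝ) - n / 2 - 1) * Real.exp (-(1 * x)))) := by
    filter_upwards [hνpos] with x hx
    have hg0 : 0 < Real.Gamma (((n : ℝ) - 1) / 2) := Real.Gamma_pos_of_pos (by linarith)
    rw [lintegral_const_mul _ (by fun_prop), lintegral_prod_mul
      (f := fun s : ℝ => ENNReal.ofReal (Real.exp (-x * s ^ 2)))
      (g := fun s : ℝ => ENNReal.ofReal (s ^ ((n : ℝ) - 2) * Real.exp (-x * s ^ (2 : ℝ))))
      (by fun_prop) (by fun_prop)]
    rw [lint_eq _ _ _ (by positivity) (integral_gaussian x)]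
    · rw [hν, lint_eq _ _ _ _ (integral_rpow_mul_exp_neg_mul_rpow (p := 2) (q := (n : ℝ) - 2) (b := x)
        (by norm_num) (by linarith) hx)]
      · have e0 : ((n : ℝ) - 2 + 1) / 2 = ((n : ℝ) - 1) / 2 := by ring
        rw [e0]
        rw [← ENNReal.ofReal_mul (by positivity), ← ENNReal.ofReal_mul (by positivity)]
        congr 1
        have e1 : Real.sqrt (Real.pi / x) = Real.sqrt Real.pi * x ^ (-(1 / 2) : ℝ) := by
          rw [Real.sqrt_div Real.pi_pos.le, Real.rpow_neg hx.le, ← Real.sqrt_eq_rpow]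
          rfl
        have e2 : x ^ ((q : ℝ) - n / 2 - 1) =
            x ^ ((q : ℝ) - 1) * x ^ (-(1 / 2) : ℝ) * x ^ (-((n : ℝ) - 2 + 1) / 2) := by
          rw [← Real.rpow_add hx, ← Real.rpow_add hx]; congr 1; ring
        rw [e1, e2, one_mul]
        ring
      · filter_upwards [hνpos] with y hy
        positivity
      · have e0 : ((n : ℝ) - 2 + 1) / 2 = ((n : ℝ) - 1) / 2 := by ring
        rw [e0]
        positivity
    · filter_upwards with y
      positivity
  rw [lintegral_congr_ae step2]
  have hg0 : 0 < Real.Gamma (((n : ℝ) - 1) / 2) := Real.Gamma_pos_of_pos (by linarith)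
  have hg1 : 0 < Real.Gamma ((q : ℝ) - n / 2) := Real.Gamma_pos_of_pos (by linarith)
  apply lint_eq
  · filter_upwards [hνpos] with x hx
    positivity
  · unfold bubI; positivity
  · rw [integral_const_mul, hν, Real.integral_rpow_mul_exp_neg_mul_Ioi (by linarith) one_pos]
    unfold bubI
    simp
    ring

theorem bubI_pos (n q : ℕ) (hn : 5 ≤ n) (hq : n < 2 * q) : 0 < bubI n q := by
  have hN : (5 : ℝ) ≤ n := by exact_mod_cast hn
  have hQ : (n : ℝ) < 2 * q := by exact_mod_cast hq
  have hq0 : (0 : ℝ) < q := by linarith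
  have hΓq : 0 < Real.Gamma q := Real.Gamma_pos_of_pos hq0
  have hg0 : 0 < Real.Gamma (((n : ℝ) - 1) / 2) := Real.Gamma_pos_of_pos (by linarith)
  have hg1 : 0 < Real.Gamma ((q : ℝ) - n / 2) := Real.Gamma_pos_of_pos (by linarith)
  unfold bubI; positivity

theorem bubI_top (n : ℕ) (hn : 5 ≤ n) : bubI n n = 2 * Real.pi / (2 ^ n * (n - 1)) := by
  have hN : (5 : ℝ) ≤ n := by exact_mod_cast hn
  have h := Real.Gamma_mul_Gamma_add_half (((n : ℝ) - 1) / 2)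
  have e1 : ((n : ℝ) - 1) / 2 + 1 / 2 = n / 2 := by ring
  have e2 : 2 * (((n : ℝ) - 1) / 2) = n - 1 := by ring
  rw [e1, e2] at h
  have h3 : Real.Gamma (n : ℝ) = (n - 1) * Real.Gamma ((n : ℝ) - 1) := by
    have := Real.Gamma_add_one (s := (n : ℝ) - 1) (by linarith)
    rwa [sub_add_cancel] at this
  have hg : 0 < Real.Gamma ((n : ℝ) - 1) := Real.Gamma_pos_of_pos (by linarith)
  have e3 : (2 : ℝ) ^ (1 - ((n : ℝ) - 1)) = 4 / 2 ^ n := by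
    rw [show (1 - ((n : ℝ) - 1)) = 2 - n by ring, Real.rpow_sub (by norm_num), Real.rpow_natCast]
    norm_num
  have e4 : (n : ℝ) - n / 2 = n / 2 := by ring
  unfold bubI
  rw [e4, h3]
  have hn1 : (n : ℝ) - 1 ≠ 0 := by linarith
  rw [show Real.sqrt Real.pi * (1 / 2 * Real.Gamma (((n : ℝ) - 1) / 2)) * Real.Gamma ((n : ℝ) / 2)
    = Real.sqrt Real.pi / 2 * (Real.Gamma (((n : ℝ) - 1) / 2) * Real.Gamma ((n : ℝ) / 2)) by ring,
    h, e3]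
  have := Real.mul_self_sqrt Real.pi_pos.le
  field_simp
  nlinarith

theorem bubI_sub (n : ℕ) (hn : 5 ≤ n) :
    bubI n (n - 1) = 2 * (n - 1) / (n - 2) * bubI n n := by
  have hN : (5 : ℝ) ≤ n := by exact_mod_cast hn
  have hcast : ((n - 1 : ℕ) : ℝ) = n - 1 := by rw [Nat.cast_sub (by omega)]; simp
  have h3 : Real.Gamma (n : ℝ) = (n - 1) * Real.Gamma ((n : ℝ) - 1) := by
    have := Real.Gamma_add_one (s := (n : ℝ) - 1) (by linarith)
    rwa [sub_add_cancel] at this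
  have h4 : Real.Gamma ((n : ℝ) - n / 2) = (n / 2 - 1) * Real.Gamma ((n : ℝ) - 1 - n / 2) := by
    have := Real.Gamma_add_one (s := (n : ℝ) - 1 - n / 2) (by linarith)
    rw [show (n : ℝ) - 1 - n / 2 + 1 = n - n / 2 by ring] at this
    rw [this]; ring
  have hg : 0 < Real.Gamma ((n : ℝ) - 1) := Real.Gamma_pos_of_pos (by linarith)
  unfold bubI
  rw [hcast, h3, h4]
  have hn1 : (n : ℝ) - 1 ≠ 0 := by linarith
  have hn2 : (n : ℝ) - 2 ≠ 0 := by linarith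
  field_simp
  try ring


theorem half_box (a b c d : ℝ) (hab : a ≤ b) (hc : 0 < c) (hcd : c ≤ d) (Ψ : ℝ × ℝ → ℝ)
    (hΨ : IntegrableOn Ψ (Ioc a b ×ˢ Ioc c d)) (hs : ∀ z, z ∉ Ioo a b ×ˢ Ioo c d → Ψ z = 0) :
    ∫ t in a..b, ∫ y in c..d, Ψ (t, y) = ∫ z in {q : ℝ × ℝ | 0 < q.2}, Ψ z := by
  rw [box_integral a b c d hab hcd Ψ hΨ]
  symm
  apply setIntegral_eq_of_subset_of_forall_sdiff_eq_zero
  · exact measurableSet_lt measurable_const measurable_snd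
  · intro z hz; exact hc.trans hz.2.1
  · intro z hz
    exact hs z fun h => hz.2 ⟨⟨h.1.1, h.1.2.le⟩, ⟨h.2.1, h.2.2.le⟩⟩

theorem bubble_tendsto (n q : ℕ) (hn : 5 ≤ n) (hq : n < 2 * q) :
    Filter.Tendsto (fun N : ℕ => ∫ t in (-((N : ℝ) + 2))..((N : ℝ) + 2),
      ∫ y in ((N : ℝ) + 2)⁻¹..((N : ℝ) + 2), ((1 + t ^ 2 + y ^ 2) ^ q)⁻¹ * y ^ (n - 2))
      Filter.atTop (nhds (bubI n q)) := by
  set Ψ : ℝ × ℝ → ℝ := fun z => ((1 + z.1 ^ 2 + z.2 ^ 2) ^ q)⁻¹ * z.2 ^ (n - 2) with hΨ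
  have hΨc : Continuous Ψ := by
    apply Continuous.mul _ (by fun_prop)
    apply Continuous.inv₀ (by fun_prop)
    intro z; positivity
  set s : ℕ → Set (ℝ × ℝ) := fun N =>
    Ioc (-((N : ℝ) + 2)) ((N : ℝ) + 2) ×ˢ Ioc ((N : ℝ) + 2)⁻¹ ((N : ℝ) + 2) with hs
  have hU : ⋃ N, s N = (univ : Set ℝ) ×ˢ Ioi (0 : ℝ) := by
    ext z
    simp only [mem_iUnion, hs, mem_prod, mem_Ioc, mem_univ, true_and, mem_Ioi]
    constructor
    · rintro ⟨N, _, h, _⟩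
      exact lt_trans (by positivity) h
    · intro hz
      obtain ⟨N, hN⟩ := exists_nat_gt (max |z.1| (max z.2 z.2⁻¹))
      simp only [max_lt_iff] at hN
      obtain ⟨h1, h2, h3⟩ := hN
      rw [abs_lt] at h1
      refine ⟨N, ⟨by linarith, by linarith⟩, ?_, by linarith⟩
      rw [inv_lt_comm₀ (by positivity) hz]
      linarith
  have hmeas : MeasurableSet ((univ : Set ℝ) ×ˢ Ioi (0 : ℝ)) :=
    MeasurableSet.univ.prod measurableSet_Ioi
  have hnn : 0 ≤ᵐ[volume.restrict ((univ : Set ℝ) ×ˢ Ioi (0 : ℝ))] Ψ := by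
    filter_upwards [ae_restrict_mem hmeas] with z hz
    have : 0 < z.2 := hz.2
    simp only [hΨ, Pi.zero_apply]; positivity
  have hl := bubble_lint n q hn hq
  have hIntegr : IntegrableOn Ψ ((univ : Set ℝ) ×ˢ Ioi (0 : ℝ)) := by
    refine ⟨hΨc.aestronglyMeasurable, ?_⟩
    rw [hasFiniteIntegral_iff_ofReal hnn]
    simp only [hΨ]
    rw [hl]; exact ENNReal.ofReal_lt_top
  have hval : ∫ z in (univ : Set ℝ) ×ˢ Ioi (0 : ℝ), Ψ z = bubI n q := by
    rw [integral_eq_lintegral_of_nonneg_ae hnn hΨc.aestronglyMeasurable]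
    simp only [hΨ]
    rw [hl, ENNReal.toReal_ofReal (bubI_pos n q hn hq).le]
  have hmono : Monotone s := by
    intro N M h
    have h' : (N : ℝ) ≤ M := by exact_mod_cast h
    apply prod_mono
    · exact Ioc_subset_Ioc (by linarith) (by linarith)
    · exact Ioc_subset_Ioc (inv_anti₀ (by positivity) (by linarith)) (by linarith)
  have := tendsto_setIntegral_of_monotone (f := Ψ) (μ := volume) (s := s)
    (fun N => measurableSet_Ioc.prod measurableSet_Ioc) hmono (by rw [hU]; exact hIntegr)
  rw [hU, hval] at this
  refine this.congr fun N => ?_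
  have hN0 : (0 : ℝ) ≤ N := Nat.cast_nonneg N
  rw [← box_integral _ _ _ _ (by linarith) _ Ψ (intOn_box _ _ _ _ _ hΨc)]
  have : ((N : ℝ) + 2)⁻¹ ≤ 1 := inv_le_one_of_one_le₀ (by linarith)
  linarith

theorem bubble_pos (n q : ℕ) (N : ℕ) : 0 < ∫ t in (-((N : ℝ) + 2))..((N : ℝ) + 2),
      ∫ y in ((N : ℝ) + 2)⁻¹..((N : ℝ) + 2), ((1 + t ^ 2 + y ^ 2) ^ q)⁻¹ * y ^ (n - 2) := by
  have hΨc : Continuous fun z : ℝ × ℝ => ((1 + z.1 ^ 2 + z.2 ^ 2) ^ q)⁻¹ * z.2 ^ (n - 2) := by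
    apply Continuous.mul _ (by fun_prop)
    apply Continuous.inv₀ (by fun_prop)
    intro z; positivity
  have hN0 : (0 : ℝ) ≤ N := Nat.cast_nonneg N
  have h1 : ((N : ℝ) + 2)⁻¹ ≤ 1 := inv_le_one_of_one_le₀ (by linarith)
  apply intervalIntegral.intervalIntegral_pos_of_pos_on
    ((contII _ _ _ hΨc).intervalIntegrable _ _) _ (by linarith)
  intro t _
  apply intervalIntegral.intervalIntegral_pos_of_pos_on
    ((hΨc.comp (by fun_prop : Continuous fun y : ℝ => (t, y))).intervalIntegrable _ _) _
    (by linarith)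
  intro y hy
  have : 0 < y := lt_trans (by positivity) hy.1
  change 0 < ((1 + t ^ 2 + y ^ 2) ^ q)⁻¹ * y ^ (n - 2)
  positivity

theorem young_opt (X E Z : ℝ) (hE : 0 ≤ E) (hZ : 0 ≤ Z) (hX : 0 ≤ X)
    (h : ∀ lam : ℝ, 0 < lam → X ≤ lam * E + lam⁻¹ * Z) : X ^ 2 ≤ 4 * (E * Z) := by
  have key : ∀ ε : ℝ, 0 < ε → X ^ 2 ≤ 4 * ((E + ε) * (Z + ε)) := by
    intro ε hε
    have hE' : 0 < E + ε := by linarith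
    have hZ' : 0 < Z + ε := by linarith
    have h1 := h (Real.sqrt (Z + ε) / Real.sqrt (E + ε)) (by positivity)
    have sE := Real.sq_sqrt hE'.le
    have sZ := Real.sq_sqrt hZ'.le
    set u := Real.sqrt (E + ε)
    set v := Real.sqrt (Z + ε)
    have hu : 0 < u := Real.sqrt_pos.2 hE'
    have hv : 0 < v := Real.sqrt_pos.2 hZ'
    have h2 : X ≤ 2 * (u * v) := by
      calc X ≤ v / u * E + (v / u)⁻¹ * Z := h1
        _ ≤ v / u * (E + ε) + (v / u)⁻¹ * (Z + ε) := by
          gcongr <;> linarith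
        _ = 2 * (u * v) := by rw [← sE, ← sZ]; field_simp; ring
    calc X ^ 2 ≤ (2 * (u * v)) ^ 2 := by gcongr
      _ = 4 * (u ^ 2 * v ^ 2) := by ring
      _ = _ := by rw [sE, sZ]
  have ht : Filter.Tendsto (fun ε : ℝ => 4 * ((E + ε) * (Z + ε))) (nhdsWithin 0 (Ioi 0))
      (nhds (4 * (E * Z))) := by
    have : Continuous fun ε : ℝ => 4 * ((E + ε) * (Z + ε)) := by fun_prop
    have h2 := this.tendsto 0
    simp only [add_zero] at h2
    exact h2.mono_left nhdsWithin_le_nhds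
  refine ge_of_tendsto ht ?_
  filter_upwards [self_mem_nhdsWithin] with ε hε using key ε hε

theorem sobolev_f (n : ℕ) (hn : 5 ≤ n) (p α : ℝ) (hp : p = 2 * n / (n - 2))
    (hα : α = 2 * (n - 1) / (n - 2))
    (a b c d : ℝ) (hc : 0 < c) (f ft fy : ℝ × ℝ → ℝ)
    (hf : Continuous f)
    (hft : ∀ t y, HasDerivAt (fun s => f (s, y)) (ft (t, y)) t)
    (hfy : ∀ t y, HasDerivAt (fun s => f (t, s)) (fy (t, y)) y)
    (hftc : Continuous ft) (hfyc : Continuous fy) (hf0 : ∀ z, 0 ≤ f z)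
    (hfs : ∀ z, z ∉ Ioo a b ×ˢ Ioo c d → f z = 0)
    (m E : ℝ) (hm : m = ∫ z in {q : ℝ × ℝ | 0 < q.2}, f z ^ p * z.2 ^ (n - 2))
    (hE : E = ∫ z in {q : ℝ × ℝ | 0 < q.2}, (ft z ^ 2 + fy z ^ 2) * z.2 ^ (n - 2))
    (hmpos : 0 < m) :
    (m / bubI n n) ^ (1 - 2 / (n : ℝ)) ≤ E / (n * (n - 2) * bubI n n) := by
  have hN : (5 : ℝ) ≤ n := by exact_mod_cast hn
  have hN2 : (0 : ℝ) < n - 2 := by linarith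
  have hα1 : 1 ≤ α := by rw [hα, le_div_iff₀ hN2]; linarith
  have hα0 : 0 < α := by linarith
  have hp0 : 0 < p := by rw [hp]; apply div_pos <;> linarith
  have hI0 := bubI_pos n n hn (by omega)
  have hI1 := bubI_pos n (n - 1) hn (by omega)
  have hI10 := bubI_sub n hn
  have ht0 := bubble_tendsto n n hn (by omega)
  have ht1 := bubble_tendsto n (n - 1) hn (by omega)
  have hJpos := bubble_pos n n
  set J0 : ℕ → ℝ := fun N : ℕ => ∫ t in (-((N : ℝ) + 2))..((N : ℝ) + 2),
      ∫ y in ((N : ℝ) + 2)⁻¹..((N : ℝ) + 2), ((1 + t ^ 2 + y ^ 2) ^ n)⁻¹ * y ^ (n - 2) with hJ0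
  set J1 : ℕ → ℝ := fun N : ℕ => ∫ t in (-((N : ℝ) + 2))..((N : ℝ) + 2),
      ∫ y in ((N : ℝ) + 2)⁻¹..((N : ℝ) + 2), ((1 + t ^ 2 + y ^ 2) ^ (n - 1))⁻¹ * y ^ (n - 2) with hJ1
  have hfp : Continuous fun z => f z ^ p := hf.rpow_const fun _ => Or.inr hp0.le
  have hft0 : ∀ z, f z = 0 → ft z = 0 := by
    intro z hz
    refine IsLocalMin.hasDerivAt_eq_zero (f := fun s => f (s, z.2)) (a := z.1) ?_ (hft z.1 z.2)
    exact Filter.Eventually.of_forall fun s => by simpa [hz] using hf0 (s, z.2)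
  have hfy0 : ∀ z, f z = 0 → fy z = 0 := by
    intro z hz
    refine IsLocalMin.hasDerivAt_eq_zero (f := fun s => f (z.1, s)) (a := z.2) ?_ (hfy z.1 z.2)
    exact Filter.Eventually.of_forall fun s => by simpa [hz] using hf0 (z.1, s)
  have hEnn : 0 ≤ E := by
    rw [hE]
    apply setIntegral_nonneg (measurableSet_lt measurable_const measurable_snd)
    intro z hz
    have : 0 < z.2 := hz
    positivity
  have main : ∀ lam : ℝ, 0 < lam → (n : ℝ) * ((m / bubI n n) ^ (1 - 1 / (n : ℝ)) * bubI n (n - 1)) ≤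
      α / 2 * (lam * E + lam⁻¹ * (m / bubI n n * (bubI n (n - 1) - bubI n n))) := by
    intro lam hlam
    have hσ : Filter.Tendsto (fun N => m / J0 N) Filter.atTop (nhds (m / bubI n n)) :=
      tendsto_const_nhds.div ht0 hI0.ne'
    have hl : Filter.Tendsto (fun N => (n : ℝ) * ((m / J0 N) ^ (1 - 1 / (n : ℝ)) * J1 N))
        Filter.atTop (nhds ((n : ℝ) * ((m / bubI n n) ^ (1 - 1 / (n : ℝ)) * bubI n (n - 1)))) :=
      ((hσ.rpow_const (Or.inl (by positivity))).mul ht1).const_mul _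
    have hr : Filter.Tendsto (fun N => α / 2 * (lam * E + lam⁻¹ * (m / J0 N * (J1 N - J0 N))))
        Filter.atTop (nhds (α / 2 * (lam * E + lam⁻¹ * (m / bubI n n * (bubI n (n - 1) - bubI n n))))) :=
      (((hσ.mul (ht1.sub ht0)).const_mul _).const_add _).const_mul _
    refine le_of_tendsto_of_tendsto hl hr ?_
    obtain ⟨N0, hN0⟩ := exists_nat_gt (max |a| (max |b| (max d c⁻¹)))
    simp only [max_lt_iff, abs_lt] at hN0
    obtain ⟨⟨ha1, ha2⟩, ⟨hb1, hb2⟩, hd1, hc1⟩ := hN0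
    filter_upwards [Filter.eventually_ge_atTop N0] with N hNN
    have hNN' : (N0 : ℝ) ≤ N := by exact_mod_cast hNN
    have hN0' : (0 : ℝ) ≤ N := Nat.cast_nonneg N
    set R : ℝ := (N : ℝ) + 2 with hR
    have hR1 : R⁻¹ ≤ 1 := inv_le_one_of_one_le₀ (by linarith)
    have hRpos : 0 < R := by linarith
    have hRi : 0 < R⁻¹ := by positivity
    have hRc : R⁻¹ < c := by rw [inv_lt_comm₀ hRpos hc]; linarith
    have hfs' : ∀ z, z ∉ Ioo (-R) R ×ˢ Ioo R⁻¹ R → f z = 0 := by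
      intro z hz
      apply hfs z
      intro h
      apply hz
      obtain ⟨⟨h1, h2⟩, h3, h4⟩ := h
      exact ⟨⟨by linarith, by linarith⟩, ⟨by linarith, by linarith⟩⟩
    have hσN : 0 < m / J0 N := div_pos hmpos (hJpos N)
    set σ := m / J0 N with hσdef
    set G : ℝ × ℝ → ℝ := fun z => σ * ((1 + z.1 ^ 2 + z.2 ^ 2) ^ n)⁻¹ with hG
    have hGc : Continuous G := by
      apply continuous_const.mul
      apply Continuous.inv₀ (by fun_prop)
      intro z; positivity
    have hm' : ∫ t in (-R)..R, ∫ y in R⁻¹..R, f (t, y) ^ p * y ^ (n - 2) = m := by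
      rw [hm]
      apply half_box (-R) R R⁻¹ R (by linarith) hRi (by linarith)
        (fun z => f z ^ p * z.2 ^ (n - 2)) (intOn_box _ _ _ _ _ (by fun_prop))
      intro z hz
      simp [hfs' z hz, Real.zero_rpow hp0.ne']
    have hE' : ∫ t in (-R)..R, ∫ y in R⁻¹..R, (ft (t, y) ^ 2 + fy (t, y) ^ 2) * y ^ (n - 2) = E := by
      rw [hE]
      apply half_box (-R) R R⁻¹ R (by linarith) hRi (by linarith)
        (fun z => (ft z ^ 2 + fy z ^ 2) * z.2 ^ (n - 2)) (intOn_box _ _ _ _ _ (by fun_prop))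
      intro z hz
      simp [hft0 z (hfs' z hz), hfy0 z (hfs' z hz)]
    have hGm : ∫ t in (-R)..R, ∫ y in R⁻¹..R, G (t, y) * y ^ (n - 2) = m := by
      simp only [hG, mul_assoc, intervalIntegral.integral_const_mul]
      rw [hσdef]
      exact div_mul_cancel₀ _ (hJpos N).ne'
    have hGL : ∫ t in (-R)..R, ∫ y in R⁻¹..R, G (t, y) ^ (1 - 1 / (n : ℝ)) * y ^ (n - 2) =
        σ ^ (1 - 1 / (n : ℝ)) * J1 N := by
      simp only [hJ1, ← intervalIntegral.integral_const_mul]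
      congr 1; ext t; congr 1; ext y
      have hρ : 0 < 1 + t ^ 2 + y ^ 2 := by positivity
      simp only [hG]
      rw [Real.mul_rpow hσN.le (by positivity), mul_assoc]
      congr 2
      rw [Real.inv_rpow (by positivity), ← Real.rpow_natCast, ← Real.rpow_mul hρ.le,
        ← Real.rpow_natCast _ (n - 1), Nat.cast_sub (by omega)]
      congr 2
      field_simp
      simp
    have hcq : ∀ q : ℕ, Continuous fun z : ℝ × ℝ => ((1 + z.1 ^ 2 + z.2 ^ 2) ^ q)⁻¹ * z.2 ^ (n - 2) := by
      intro q
      apply Continuous.mul _ (by fun_prop)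
      apply Continuous.inv₀ (by fun_prop)
      intro z; positivity
    have hGK : ∫ t in (-R)..R, ∫ y in R⁻¹..R, G (t, y) * (t ^ 2 + y ^ 2) * y ^ (n - 2) =
        σ * (J1 N - J0 N) := by
      simp only [hJ1, hJ0]
      rw [← intervalIntegral.integral_sub ((contII _ _ _ (hcq _)).intervalIntegrable _ _)
        ((contII _ _ _ (hcq _)).intervalIntegrable _ _), ← intervalIntegral.integral_const_mul]
      congr 1; ext t
      have hct : ∀ q : ℕ, Continuous fun y : ℝ => ((1 + t ^ 2 + y ^ 2) ^ q)⁻¹ * y ^ (n - 2) :=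
        fun q => (hcq q).comp (by fun_prop : Continuous fun y : ℝ => (t, y))
      rw [← intervalIntegral.integral_sub ((hct _).intervalIntegrable _ _)
        ((hct _).intervalIntegrable _ _), ← intervalIntegral.integral_const_mul]
      congr 1; ext y
      have hρ : 0 < 1 + t ^ 2 + y ^ 2 := by positivity
      have e : (1 + t ^ 2 + y ^ 2) ^ n = (1 + t ^ 2 + y ^ 2) ^ (n - 1) * (1 + t ^ 2 + y ^ 2) := by
        rw [← pow_succ]; congr 1; omega
      simp only [hG]
      rw [e]
      field_simp
      ring
    have := outer_ineq n hn p α hp hα (-R) R R⁻¹ R (by linarith) hRi (by linarith) f ft fy G lam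
      hlam hf hft hfy hftc hfyc hf0 hfs' hGc (fun z => by simp only [hG]; positivity)
      (by rw [hm', hGm])
    rw [hGL, hE', hGK] at this
    exact this
  -- optimise
  set I0 := bubI n n with hI0def
  set x := m / I0 with hx
  have hxpos : 0 < x := by positivity
  have hIα : bubI n (n - 1) = α * I0 := by rw [hI10, hα]
  rw [hIα] at main
  have hα2 : α - 1 = n / (n - 2) := by rw [hα]; field_simp; ring
  have opt := young_opt (2 * n * (x ^ (1 - 1 / (n : ℝ)) * I0)) E (x * (α * I0 - I0)) hEnn
    (by
      have : α * I0 - I0 = (α - 1) * I0 := by ring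
      rw [this]
      have : 0 ≤ α - 1 := by linarith
      positivity) (by positivity)
    (by
      intro lam hlam
      have h1 := main lam hlam
      have h2 : 0 < α := hα0
      refine le_of_mul_le_mul_left ?_ (show 0 < α / 2 by positivity)
      refine le_trans (le_of_eq ?_) h1
      ring)
  have e1 : (x ^ (1 - 1 / (n : ℝ))) ^ 2 = x * x ^ (1 - 2 / (n : ℝ)) := by
    rw [← Real.rpow_natCast, ← Real.rpow_mul hxpos.le]
    nth_rw 2 [← Real.rpow_one x]
    rw [← Real.rpow_add hxpos]
    congr 1; push_cast; ring
  have e2 : (2 * n * (x ^ (1 - 1 / (n : ℝ)) * I0)) ^ 2 =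
      4 * n ^ 2 * I0 ^ 2 * x * x ^ (1 - 2 / (n : ℝ)) := by
    rw [mul_pow, mul_pow (x ^ _), e1]; ring
  rw [e2, show α * I0 - I0 = (α - 1) * I0 by ring, hα2] at opt
  rw [le_div_iff₀ (by positivity)]
  set Y := x ^ (1 - 2 / (n : ℝ))
  have h5 : (4 * n * I0 * x / (n - 2)) * (Y * (n * (n - 2) * I0)) ≤ (4 * n * I0 * x / (n - 2)) * E := by
    calc _ = 4 * n ^ 2 * I0 ^ 2 * x * Y := by field_simp
      _ ≤ _ := opt
      _ = _ := by field_simp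
  exact le_of_mul_le_mul_left h5 (by positivity)


theorem exists_box (g : ℝ × ℝ → ℝ) (hsupp : HasCompactSupport g)
    (hsuppH : tsupport g ⊆ {q : ℝ × ℝ | 0 < q.2}) :
    ∃ a b c d : ℝ, a < b ∧ 0 < c ∧ c < d ∧ ∀ z, z ∉ Ioo a b ×ˢ Ioo c d → g z = 0 := by
  have hK : IsCompact (tsupport g) := hsupp
  obtain ⟨M, hM⟩ := hK.isBounded.exists_norm_le
  have hc : ∃ c : ℝ, 0 < c ∧ c ≤ 1 ∧ ∀ z ∈ tsupport g, c < z.2 := by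
    rcases (tsupport g).eq_empty_or_nonempty with h | h
    · exact ⟨1, one_pos, le_rfl, by simp [h]⟩
    · obtain ⟨z0, hz0, hmin⟩ := hK.exists_isMinOn h continuous_snd.continuousOn
      have hpos : 0 < z0.2 := hsuppH hz0
      refine ⟨min (z0.2 / 2) 1, by positivity, min_le_right _ _, fun z hz => ?_⟩
      have h1 : z0.2 ≤ z.2 := hmin hz
      have := min_le_left (z0.2 / 2) 1
      linarith
  obtain ⟨c, hc0, hc1, hcz⟩ := hc
  refine ⟨-(|M| + 2), |M| + 2, c, |M| + 2, ?_, hc0, ?_, ?_⟩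
  · have := abs_nonneg M; linarith
  · have := abs_nonneg M; linarith
  · intro z hz
    by_contra hg
    have hzK : z ∈ tsupport g := subset_tsupport g hg
    have h1 := hM z hzK
    have h2 := le_abs_self M
    have h3 : |z.1| ≤ ‖z‖ := norm_fst_le z
    have h4 : |z.2| ≤ ‖z‖ := norm_snd_le z
    rw [abs_le] at h3 h4
    exact hz ⟨⟨by linarith, by linarith⟩, ⟨hcz z hzK, by linarith⟩⟩

theorem cont_mul (g φ : ℝ × ℝ → ℝ) (hg : Continuous g)
    (hsuppH : tsupport g ⊆ {q : ℝ × ℝ | 0 < q.2})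
    (hφ : ContinuousOn φ {q : ℝ × ℝ | 0 < q.2}) : Continuous fun z => g z * φ z := by
  rw [continuous_iff_continuousAt]
  intro z
  by_cases hz : z ∈ tsupport g
  · have hopen : IsOpen {q : ℝ × ℝ | 0 < q.2} := isOpen_lt continuous_const continuous_snd
    exact hg.continuousAt.mul (hφ.continuousAt (hopen.mem_nhds (hsuppH hz)))
  · have : (fun z => g z * φ z) =ᶠ[nhds z] fun _ => 0 := by
      filter_upwards [notMem_tsupport_iff_eventuallyEq.1 hz] with w hw
      simp [hw]
    exact continuousAt_const.congr this.symm

theorem contDiff_mul_half (g φ : ℝ × ℝ → ℝ) (hg : ContDiff ℝ 1 g)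
    (hsuppH : tsupport g ⊆ {q : ℝ × ℝ | 0 < q.2})
    (hφ : ∀ z : ℝ × ℝ, 0 < z.2 → ContDiffAt ℝ 1 φ z) : ContDiff ℝ 1 fun z => g z * φ z := by
  rw [contDiff_iff_contDiffAt]
  intro z
  by_cases hz : z ∈ tsupport g
  · exact hg.contDiffAt.mul (hφ z (hsuppH hz))
  · have : (fun z => g z * φ z) =ᶠ[nhds z] fun _ => 0 := by
      filter_upwards [notMem_tsupport_iff_eventuallyEq.1 hz] with w hw
      simp [hw]
    exact contDiffAt_const.congr_of_eventuallyEq this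

theorem partials (f : ℝ × ℝ → ℝ) (hf : ContDiff ℝ 1 f) :
    (∀ t y, HasDerivAt (fun s => f (s, y)) (fderiv ℝ f (t, y) (1, 0)) t) ∧
    (∀ t y, HasDerivAt (fun s => f (t, s)) (fderiv ℝ f (t, y) (0, 1)) y) ∧
    Continuous (fun z => fderiv ℝ f z (1, 0)) ∧ Continuous (fun z => fderiv ℝ f z (0, 1)) := by
  have hd : ∀ z, HasFDerivAt f (fderiv ℝ f z) z := fun z =>
    (hf.differentiable one_ne_zero z).hasFDerivAt
  have hc : Continuous (fderiv ℝ f) := hf.continuous_fderiv one_ne_zero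
  refine ⟨fun t y => ?_, fun t y => ?_, hc.clm_apply continuous_const, hc.clm_apply continuous_const⟩
  · exact (hd (t, y)).comp_hasDerivAt t ((hasDerivAt_id t).prodMk (hasDerivAt_const t y))
  · exact (hd (t, y)).comp_hasDerivAt y ((hasDerivAt_const y t).prodMk (hasDerivAt_id y))

theorem muUpper_integral (Ψ : ℝ × ℝ → ℝ) :
    ∫ z, Ψ z ∂muUpper = ∫ z in {q : ℝ × ℝ | 0 < q.2}, (z.2 ^ 2)⁻¹ * Ψ z := by
  unfold muUpper
  rw [integral_withDensity_eq_integral_toReal_smul (by fun_prop)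
    (Filter.Eventually.of_forall fun z => ENNReal.ofReal_lt_top)]
  congr 1; ext z
  rw [ENNReal.toReal_ofReal (by positivity), smul_eq_mul]

theorem energy_id (k : ℝ) (n : ℕ) (hn : 5 ≤ n) (hk : k = ((n : ℝ) - 2) / 2)
    (g : ℝ × ℝ → ℝ) (hg : ContDiff ℝ 1 g) (hsupp : HasCompactSupport g)
    (hsuppH : tsupport g ⊆ {q : ℝ × ℝ | 0 < q.2}) (hnn : ∀ z, 0 ≤ g z)
    (f : ℝ × ℝ → ℝ) (hf : f = fun z => g z * z.2 ^ (-k)) (hfd : ContDiff ℝ 1 f) :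
    ∫ z in {q : ℝ × ℝ | 0 < q.2},
      (fderiv ℝ f z (1, 0) ^ 2 + fderiv ℝ f z (0, 1) ^ 2) * z.2 ^ (n - 2) =
    k * (k - 1) * (∫ z in {q : ℝ × ℝ | 0 < q.2}, (z.2 ^ 2)⁻¹ * g z ^ 2) +
      ∫ z in {q : ℝ × ℝ | 0 < q.2}, (fderiv ℝ g z (1, 0)) ^ 2 + (fderiv ℝ g z (0, 1)) ^ 2 := by
  obtain ⟨a, b, c, d, hab, hc, hcd, hbox⟩ := exists_box g hsupp hsuppH
  obtain ⟨gt, gy, gtc, gyc⟩ := partials g hg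
  obtain ⟨ft, fy, ftc, fyc⟩ := partials f hfd
  have hgc : Continuous g := hg.continuous
  have hgt0 : ∀ z, g z = 0 → fderiv ℝ g z (1, 0) = 0 := by
    intro z hz
    refine IsLocalMin.hasDerivAt_eq_zero (f := fun s => g (s, z.2)) (a := z.1) ?_ (gt z.1 z.2)
    exact Filter.Eventually.of_forall fun s => by simpa [hz] using hnn (s, z.2)
  have hgy0 : ∀ z, g z = 0 → fderiv ℝ g z (0, 1) = 0 := by
    intro z hz
    refine IsLocalMin.hasDerivAt_eq_zero (f := fun s => g (z.1, s)) (a := z.2) ?_ (gy z.1 z.2)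
    exact Filter.Eventually.of_forall fun s => by simpa [hz] using hnn (z.1, s)
  have hmeasH : MeasurableSet {q : ℝ × ℝ | 0 < q.2} :=
    measurableSet_lt measurable_const measurable_snd
  have hinv : ContinuousOn (fun z : ℝ × ℝ => z.2⁻¹) {q : ℝ × ℝ | 0 < q.2} :=
    continuous_snd.continuousOn.inv₀ fun z hz => (ne_of_gt hz)
  have c1 : Continuous fun z : ℝ × ℝ => g z * z.2⁻¹ := cont_mul g _ hgc hsuppH hinv
  -- pointwise identity
  have hpt : ∀ z : ℝ × ℝ, 0 < z.2 →
      (fderiv ℝ f z (1, 0) ^ 2 + fderiv ℝ f z (0, 1) ^ 2) * z.2 ^ (n - 2) =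
      k * (k - 1) * (g z * z.2⁻¹) ^ 2 +
        ((fderiv ℝ g z (1, 0)) ^ 2 + (fderiv ℝ g z (0, 1)) ^ 2) -
        k * (2 * (g z * z.2⁻¹) * fderiv ℝ g z (0, 1) - (g z * z.2⁻¹) ^ 2) := by
    rintro ⟨t, y⟩ hy
    simp only at hy
    have h1 : fderiv ℝ f (t, y) (1, 0) = fderiv ℝ g (t, y) (1, 0) * y ^ (-k) := by
      apply (ft t y).unique
      rw [hf]
      exact (gt t y).mul_const (y ^ (-k))
    have h2 : fderiv ℝ f (t, y) (0, 1) =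
        fderiv ℝ g (t, y) (0, 1) * y ^ (-k) + g (t, y) * (-k * y ^ (-k - 1)) := by
      apply (fy t y).unique
      rw [hf]
      exact (gy t y).mul (Real.hasDerivAt_rpow_const (Or.inl hy.ne'))
    have h3 : y ^ (-k - 1) = y ^ (-k) * y⁻¹ := by
      rw [Real.rpow_sub_one hy.ne', div_eq_mul_inv]
    have h4 : (y ^ (-k)) ^ 2 * y ^ (n - 2) = 1 := by
      rw [← Real.rpow_natCast (y ^ (-k)), ← Real.rpow_mul hy.le, ← Real.rpow_natCast,
        ← Real.rpow_add hy, Nat.cast_sub (by omega), hk]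
      push_cast
      rw [show -(((n : ℝ) - 2) / 2) * 2 + ((n : ℝ) - 2) = 0 by ring, Real.rpow_zero]
    simp only
    rw [h1, h2, h3]
    set P := y ^ (-k)
    set Q := y ^ (n - 2)
    calc _ = (P ^ 2 * Q) * (fderiv ℝ g (t, y) (1, 0) ^ 2 +
        (fderiv ℝ g (t, y) (0, 1) - k * (g (t, y) * y⁻¹)) ^ 2) := by ring
      _ = _ := by rw [h4]; ring
  rw [setIntegral_congr_fun hmeasH (fun z hz => hpt z hz)]
  -- integrability on the half plane
  have hIntegr : ∀ Ψ : ℝ × ℝ → ℝ, Continuous Ψ → (∀ z, g z = 0 → Ψ z = 0) →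
      IntegrableOn Ψ {q : ℝ × ℝ | 0 < q.2} := by
    intro Ψ hΨ h0
    have : HasCompactSupport Ψ := by
      apply hsupp.mono
      intro z hz hgz
      exact hz (h0 z hgz)
    exact (hΨ.integrable_of_hasCompactSupport this).integrableOn
  have i1 := hIntegr (fun z => k * (k - 1) * (g z * z.2⁻¹) ^ 2) (by fun_prop)
    (by intro z hz; simp [hz])
  have i2 := hIntegr (fun z => (fderiv ℝ g z (1, 0)) ^ 2 + (fderiv ℝ g z (0, 1)) ^ 2) (by fun_prop)
    (by intro z hz; simp [hgt0 z hz, hgy0 z hz])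
  have i3 := hIntegr (fun z => k * (2 * (g z * z.2⁻¹) * fderiv ℝ g z (0, 1) - (g z * z.2⁻¹) ^ 2))
    (by fun_prop) (by intro z hz; simp [hz])
  have i12 : IntegrableOn (fun z => k * (k - 1) * (g z * z.2⁻¹) ^ 2 +
      ((fderiv ℝ g z (1, 0)) ^ 2 + (fderiv ℝ g z (0, 1)) ^ 2)) {q : ℝ × ℝ | 0 < q.2} volume := i1.add i2
  rw [integral_sub i12 i3, integral_add i1 i2, integral_const_mul, integral_const_mul]
  have hz : ∫ z in {q : ℝ × ℝ | 0 < q.2},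
      (2 * (g z * z.2⁻¹) * fderiv ℝ g z (0, 1) - (g z * z.2⁻¹) ^ 2) = 0 := by
    rw [← half_box a b c d hab.le hc hcd.le
      (fun z => (2 * (g z * z.2⁻¹) * fderiv ℝ g z (0, 1) - (g z * z.2⁻¹) ^ 2))
      (intOn_box _ _ _ _ _ (by fun_prop)) (by intro z hz; simp [hbox z hz])]
    have : ∀ t, ∫ y in c..d, (2 * (g (t, y) * y⁻¹) * fderiv ℝ g (t, y) (0, 1) - (g (t, y) * y⁻¹) ^ 2) = 0 := by
      intro t
      have c1t : Continuous fun y => g (t, y) * y⁻¹ :=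
        c1.comp (by fun_prop : Continuous fun y : ℝ => (t, y))
      have gyt : Continuous fun y => fderiv ℝ g (t, y) (0, 1) :=
        gyc.comp (by fun_prop : Continuous fun y : ℝ => (t, y))
      rw [intervalIntegral.integral_eq_sub_of_hasDerivAt
        (f := fun y => g (t, y) ^ 2 * y⁻¹) _
        (Continuous.intervalIntegrable (by fun_prop) _ _)]
      · simp [hbox (t, c) (by simp), hbox (t, d) (by simp)]
      · intro y hy
        rw [uIcc_of_le hcd.le] at hy
        have hy0 : y ≠ 0 := (lt_of_lt_of_le hc hy.1).ne'
        refine HasDerivAt.congr_deriv (((gy t y).fun_pow 2).fun_mul (hasDerivAt_inv hy0)) ?_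
        push_cast
        field_simp
        ring
    simp [this]
  rw [hz, mul_zero, sub_zero]
  congr 2
  apply setIntegral_congr_fun hmeasH
  intro z _
  simp only
  rw [mul_pow, inv_pow, mul_comm]

theorem const_id (n : ℕ) (hn : 5 ≤ n) (k : ℝ) (hk : k = ((n : ℝ) - 2) / 2) :
    bubI n n * (1 / (4 * bubI n n)) ^ (1 + 1 / k) =
      ((2 * k + 1) / (2 * Real.pi)) ^ (1 / k) := by
  have hN : (5 : ℝ) ≤ n := by exact_mod_cast hn
  have hk0 : 0 < k := by linarith
  have hI := bubI_pos n n hn (by omega)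
  have hIv := bubI_top n hn
  set I := bubI n n
  have e1 : (2 * k + 1) / (2 * Real.pi) = (4 ^ k)⁻¹ * (1 / (4 * I)) := by
    have h4 : (4 : ℝ) ^ k = 2 ^ n / 4 := by
      rw [show (4 : ℝ) = 2 ^ (2 : ℝ) by norm_num, ← Real.rpow_mul (by norm_num), hk,
        show 2 * (((n : ℝ) - 2) / 2) = n - 2 by ring, Real.rpow_sub (by norm_num),
        Real.rpow_natCast]
    rw [h4, hIv, hk]
    have hn1 : (n : ℝ) - 1 ≠ 0 := by linarith
    have := Real.pi_pos
    field_simp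
    ring
  rw [e1, Real.mul_rpow (by positivity) (by positivity), Real.inv_rpow (by positivity),
    ← Real.rpow_mul (by norm_num), mul_one_div_cancel hk0.ne', Real.rpow_one,
    Real.rpow_add (by positivity), Real.rpow_one]
  field_simp



end

/-- A one-parameter family of Sobolev inequalities on the hyperbolic plane
(inequality (3.13)): for an integer `n ≥ 5`, `k̃ = (n−2)/2`, `p = 2 + 2/k̃ = 2n/(n−2)`,
and a smooth compactly supported nonnegative `g` on the upper half-plane,
`∫ g^p dμ ≤ ((k̃−1)/(k̃+1))^{1+1/k̃}·((2k̃+1)/(2π))^{1/k̃}`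
`    ·[∫ g² dμ + (1/(k̃(k̃−1)))·∫ (|∂ₜg|² + |∂_y g|²) dt dy]^{1+1/k̃}`. -/
theorem sobolev_family_hyperbolic
    (n : ℕ) (hn : 5 ≤ n) (kt p : ℝ) (hkt : kt = ((n : ℝ) - 2) / 2)
    (hp : p = 2 + 2 / kt)
    (g : ℝ × ℝ → ℝ)
    (hsmooth : ContDiff ℝ (⊤ : ℕ∞) g)
    (hsupp : HasCompactSupport g)
    (hsuppH : tsupport g ⊆ {q : ℝ × ℝ | 0 < q.2})
    (hnn : ∀ z, 0 ≤ g z) :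
    ∫ z, (g z) ^ p ∂muUpper
      ≤ ((kt - 1) / (kt + 1)) ^ (1 + 1 / kt)
          * ((2 * kt + 1) / (2 * Real.pi)) ^ (1 / kt)
          * ((∫ z, (g z) ^ 2 ∂muUpper) + 1 / (kt * (kt - 1)) *
              ∫ z in {q : ℝ × ℝ | 0 < q.2},
                (fderiv ℝ g z (1, 0)) ^ 2 + (fderiv ℝ g z (0, 1)) ^ 2)
            ^ (1 + 1 / kt) := by
  have hN : (5 : ℝ) ≤ n := by exact_mod_cast hn
  have hk0 : 0 < kt := by linarith
  have hk1 : 0 < kt - 1 := by linarith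
  have hp' : p = 2 * n / (n - 2) := by
    rw [hp, hkt]
    have : (n : ℝ) - 2 ≠ 0 := by linarith
    field_simp; ring
  have hp0 : 0 < p := by rw [hp]; positivity
  have hg1 : ContDiff ℝ 1 g := hsmooth.of_le (by exact_mod_cast le_top)
  have hmeasH : MeasurableSet {q : ℝ × ℝ | 0 < q.2} :=
    measurableSet_lt measurable_const measurable_snd
  obtain ⟨a, b, c, d, hab, hc, hcd, hbox⟩ := exists_box g hsupp hsuppH
  set f : ℝ × ℝ → ℝ := fun z => g z * z.2 ^ (-kt) with hf
  have hfd : ContDiff ℝ 1 f := contDiff_mul_half g _ hg1 hsuppH fun z hz =>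
    contDiffAt_snd.rpow_const_of_ne hz.ne'
  have hf0 : ∀ z, 0 ≤ f z := by
    intro z
    by_cases hz : z ∈ Set.Ioo a b ×ˢ Set.Ioo c d
    · have : 0 < z.2 := hc.trans hz.2.1
      have := hnn z
      simp only [hf]; positivity
    · simp [hf, hbox z hz]
  obtain ⟨ft, fy, ftc, fyc⟩ := partials f hfd
  have hen := energy_id kt n hn hkt g hg1 hsupp hsuppH hnn f hf hfd
  set S := ∫ z, (g z) ^ 2 ∂muUpper with hS
  set D := ∫ z in {q : ℝ × ℝ | 0 < q.2}, (fderiv ℝ g z (1, 0)) ^ 2 + (fderiv ℝ g z (0, 1)) ^ 2 with hD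
  set m := ∫ z, (g z) ^ p ∂muUpper with hm
  have hS0 : 0 ≤ S := integral_nonneg fun z => by positivity
  have hD0 : 0 ≤ D := integral_nonneg fun z => by positivity
  have hm0 : 0 ≤ m := integral_nonneg fun z => Real.rpow_nonneg (hnn z) _
  rw [← muUpper_integral (fun z => g z ^ 2), ← hS] at hen
  have hbr : 0 ≤ S + 1 / (kt * (kt - 1)) * D := by positivity
  rcases hm0.eq_or_lt with h0 | hmpos
  · rw [← h0]; positivity
  have hmf : m = ∫ z in {q : ℝ × ℝ | 0 < q.2}, f z ^ p * z.2 ^ (n - 2) := by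
    rw [hm, muUpper_integral]
    apply setIntegral_congr_fun hmeasH
    intro z hz
    have hz0 : 0 < z.2 := hz
    have e : (z.2 ^ (-kt)) ^ p * z.2 ^ (n - 2) = (z.2 ^ 2)⁻¹ := by
      rw [← Real.rpow_mul hz0.le, ← Real.rpow_natCast, ← Real.rpow_add hz0, Nat.cast_sub (by omega),
        ← Real.rpow_natCast, ← Real.rpow_neg hz0.le]
      congr 1
      rw [hp]
      push_cast
      have : kt * (2 + 2 / kt) = 2 * kt + 2 := by field_simp
      rw [neg_mul, this, hkt]; ring
    simp only [hf]
    rw [Real.mul_rpow (hnn z) (by positivity), mul_assoc, e, mul_comm]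
  have sob := sobolev_f n hn p _ hp' rfl a b c d hc f _ _ hfd.continuous ft fy ftc fyc hf0
    (fun z hz => by simp [hf, hbox z hz]) m _ hmf rfl hmpos
  rw [hen] at sob
  have hI := bubI_pos n n hn (by omega)
  have hcid := const_id n hn kt hkt
  set I := bubI n n
  set X := S + 1 / (kt * (kt - 1)) * D with hX
  have hEX : kt * (kt - 1) * S + D = kt * (kt - 1) * X := by rw [hX]; field_simp
  have hnk : (n : ℝ) = 2 * kt + 2 := by rw [hkt]; ring
  have e1 : (kt * (kt - 1) * S + D) / (n * (n - 2) * I) =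
      (kt - 1) / (kt + 1) * X * (1 / (4 * I)) := by
    rw [hEX, hnk, show 2 * kt + 2 - 2 = 2 * kt by ring, show 2 * kt + 2 = 2 * (kt + 1) by ring]
    field_simp
    ring
  rw [e1] at sob
  have hpow := Real.rpow_le_rpow (by positivity) sob (show 0 ≤ 1 + 1 / kt by positivity)
  have e2 : (1 - 2 / (n : ℝ)) * (1 + 1 / kt) = 1 := by
    rw [hnk, show 2 * kt + 2 = 2 * (kt + 1) by ring]
    field_simp
    ring
  rw [← Real.rpow_mul (by positivity), e2, Real.rpow_one, Real.mul_rpow (by positivity) (by positivity),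
    Real.mul_rpow (by positivity) hbr, div_le_iff₀ hI] at hpow
  refine hpow.trans (le_of_eq ?_)
  rw [← hcid]
  ring
end

section
/- Uniqueness of the positive decaying (ground state) solution: Fix real numbers m > 2, ã > 0 and b̃ ≥ m, and set f(s) = ã·s^{1+2/m} − b̃·s. Then there is at most one α > 0 such that the solution u of u''(τ) + coth(τ)·u'(τ) + f(u(τ)) = 0 on (0,∞) with u(0) = α and lim_{τ→0+} u'(τ) = 0 satisfies u(τ) > 0 for all τ > 0 and lim_{τ→∞} u(τ) = 0. Equivalently, the semi-linear Poisson equation Δu + f(u) = 0 on the hyperbolic plane has at most one radial positive solution decaying to zero at infinity. -/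
open Set Filter

namespace GSU

/-- Right-hand side data of the first-order system for a solution. -/
structure Sol (a b p : ℝ) (u y : ℝ → ℝ) : Prop where
  hu : ∀ t, 0 < t → HasDerivAt u (y t) t
  hy : ∀ t, 0 < t → HasDerivAt y
    (-(Real.cosh t / Real.sinh t) * y t - (a * (u t) ^ p - b * u t)) t
  pos : ∀ t, 0 < t → 0 < u t
  dec : Tendsto u atTop (nhds 0)

lemma neg_of_lim {g g' : ℝ → ℝ} {T : ℝ} (hT : 0 < T)
    (hg : ∀ t, 0 < t → HasDerivAt g (g' t) t)
    (hneg : ∀ t, 0 < t → t < T → g' t < 0)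
    (hlim : Tendsto g (nhdsWithin 0 (Ioi 0)) (nhds 0)) : g T < 0 := by
  have hanti : StrictAntiOn g (Ioc 0 T) := by
    apply strictAntiOn_of_deriv_neg (convex_Ioc 0 T)
    · intro t ht
      exact (hg t ht.1).continuousAt.continuousWithinAt
    · intro t ht
      rw [interior_Ioc] at ht
      rw [(hg t ht.1).deriv]
      exact hneg t ht.1 ht.2
  have h1 : g T < g (T / 2) :=
    hanti ⟨by linarith, by linarith⟩ ⟨hT, le_refl T⟩ (by linarith)
  have h2 : g (T / 2) ≤ 0 := by
    apply ge_of_tendsto hlim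
    have : Ioo (0 : ℝ) (T / 2) ∈ nhdsWithin (0 : ℝ) (Ioi 0) := Ioo_mem_nhdsGT (by linarith)
    filter_upwards [this] with x hx
    exact (hanti ⟨hx.1, by linarith [hx.2]⟩ ⟨by linarith, by linarith⟩ hx.2).le
  linarith

lemma cross {p x y : ℝ} (hp : 1 < p) (hx : 0 < x) (hxy : x < y) :
    x ^ p * y < y ^ p * x := by
  have hy : 0 < y := hx.trans hxy
  have h : x ^ (p - 1) < y ^ (p - 1) := Real.rpow_lt_rpow hx.le hxy (by linarith)
  have e1 : x ^ p = x ^ (p - 1) * x := by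
    rw [← Real.rpow_add_one hx.ne']; congr 1; ring
  have e2 : y ^ p = y ^ (p - 1) * y := by
    rw [← Real.rpow_add_one hy.ne']; congr 1; ring
  rw [e1, e2]
  have : 0 < x * y := mul_pos hx hy
  nlinarith

lemma sinh_pos {t : ℝ} (ht : 0 < t) : 0 < Real.sinh t := Real.sinh_pos_iff.2 ht

lemma Sol.sy {a b p : ℝ} {u y : ℝ → ℝ} (S : Sol a b p u y) (t : ℝ) (ht : 0 < t) :
    HasDerivAt (fun t => Real.sinh t * y t) (Real.sinh t * (b * u t - a * (u t) ^ p)) t := by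
  have hs := (sinh_pos ht).ne'
  refine ((Real.hasDerivAt_sinh t).mul (S.hy t ht)).congr_deriv ?_
  field_simp
  ring

lemma Sol.pow_small {a b p : ℝ} {u y : ℝ → ℝ} (S : Sol a b p u y) (hp : 1 < p) :
    Tendsto (fun t => (u t) ^ (p - 1)) atTop (nhds 0) := by
  have h := S.dec.rpow_const (p := p - 1) (Or.inr (by linarith))
  rwa [Real.zero_rpow (by linarith)] at h

lemma rpow_split {p x : ℝ} (hx : 0 < x) : x ^ p = x ^ (p - 1) * x := by
  rw [← Real.rpow_add_one hx.ne']; congr 1; ring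

lemma Sol.decay {a b p : ℝ} {u y : ℝ → ℝ} (S : Sol a b p u y) (hp : 1 < p) (hb : 0 < b) :
    ∃ T C : ℝ, 1 ≤ T ∧ 0 < C ∧ ∀ t, T ≤ t → |Real.sinh t * y t| ≤ C ∧
      |Real.sinh t * u t| ≤ C ∧ |(u t) ^ (p - 1)| ≤ 1 := by
  have h0 := S.pow_small hp
  have h1 : Tendsto (fun t => a * (u t) ^ (p - 1)) atTop (nhds 0) := by
    simpa using h0.const_mul a
  have ev : ∀ᶠ t in atTop, a * (u t) ^ (p - 1) < b ∧ (u t) ^ (p - 1) < 1 ∧ 1 ≤ t :=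
    (h1.eventually (gt_mem_nhds hb)).and
      ((h0.eventually (gt_mem_nhds one_pos)).and (eventually_ge_atTop 1))
  obtain ⟨T, hT⟩ := eventually_atTop.1 ev
  have hT1 : 1 ≤ T := (hT T le_rfl).2.2
  have hmono : StrictMonoOn (fun t => Real.sinh t * y t) (Ici T) := by
    apply strictMonoOn_of_deriv_pos (convex_Ici T)
    · intro t ht
      have ht' : T ≤ t := ht
      exact (S.sy t (by linarith)).continuousAt.continuousWithinAt
    · intro t ht
      rw [interior_Ici] at ht
      have ht' : T < t := ht
      have t0 : 0 < t := by linarith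
      rw [(S.sy t t0).deriv]
      apply mul_pos (sinh_pos t0)
      have := (hT t ht'.le).1
      rw [rpow_split (S.pos t t0)]
      nlinarith [S.pos t t0]
  have hneg : ∀ t, T ≤ t → Real.sinh t * y t < 0 := by
    intro t0 ht0
    by_contra hcon
    push Not at hcon
    have hum : StrictMonoOn u (Ici t0) := by
      apply strictMonoOn_of_deriv_pos (convex_Ici t0)
      · intro t ht
        have ht' : t0 ≤ t := ht
        exact (S.hu t (by linarith)).continuousAt.continuousWithinAt
      · intro t ht
        rw [interior_Ici] at ht
        have ht' : t0 < t := ht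
        have tp : 0 < t := by linarith
        rw [(S.hu t tp).deriv]
        have h3 : Real.sinh t0 * y t0 < Real.sinh t * y t :=
          hmono ht0 (show T ≤ t by linarith) ht'
        exact pos_of_mul_pos_right (lt_of_le_of_lt hcon h3) (sinh_pos tp).le
    have : u t0 ≤ 0 := by
      apply ge_of_tendsto S.dec
      filter_upwards [eventually_ge_atTop t0] with t ht
      exact hum.monotoneOn (mem_Ici.2 le_rfl) ht ht
    linarith [S.pos t0 (by linarith)]
  set C := -(Real.sinh T * y T) with hC
  have hCpos : 0 < C := by linarith [hneg T le_rfl]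
  have hlow : ∀ t, T ≤ t → -C ≤ Real.sinh t * y t := by
    intro t ht
    have := hmono.monotoneOn (mem_Ici.2 le_rfl) ht ht
    linarith
  have hder : ∀ t, 0 < t → HasDerivAt (fun t => u t - C * (Real.sinh t)⁻¹)
      (y t - C * (-Real.cosh t / Real.sinh t ^ 2)) t := by
    intro t ht
    exact (S.hu t ht).sub (((Real.hasDerivAt_sinh t).inv (sinh_pos ht).ne').const_mul C)
  have hm2 : MonotoneOn (fun t => u t - C * (Real.sinh t)⁻¹) (Ici T) := by
    apply monotoneOn_of_deriv_nonneg (convex_Ici T)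
    · intro t ht
      have ht' : T ≤ t := ht
      exact (hder t (by linarith)).continuousAt.continuousWithinAt
    · intro t ht
      rw [interior_Ici] at ht
      have ht' : T < t := ht
      exact (hder t (by linarith)).differentiableAt.differentiableWithinAt
    · intro t ht
      rw [interior_Ici] at ht
      have ht' : T < t := ht
      have tp : 0 < t := by linarith
      rw [(hder t tp).deriv]
      have hs := sinh_pos tp
      have h4 := hlow t ht'.le
      have h5 : Real.sinh t < Real.cosh t := Real.sinh_lt_cosh t
      have : y t - C * (-Real.cosh t / Real.sinh t ^ 2) =
        (Real.sinh t * (Real.sinh t * y t) + C * Real.cosh t) / Real.sinh t ^ 2 := by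
        field_simp
        ring
      rw [this]
      apply div_nonneg _ (by positivity)
      nlinarith
  have hsinh : Tendsto Real.sinh atTop atTop :=
    tendsto_atTop_mono' atTop
      ((eventually_ge_atTop 0).mono fun t ht => Real.self_le_sinh_iff.2 ht) tendsto_id
  have hl : Tendsto (fun t => u t - C * (Real.sinh t)⁻¹) atTop (nhds 0) := by
    simpa using S.dec.sub ((tendsto_inv_atTop_zero.comp hsinh).const_mul C)
  refine ⟨T, C, hT1, hCpos, fun t ht => ⟨?_, ?_, ?_⟩⟩
  · rw [abs_le]
    exact ⟨hlow t ht, by linarith [hneg t ht]⟩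
  · have tp : 0 < t := by linarith
    have hs := sinh_pos tp
    rw [abs_of_pos (mul_pos hs (S.pos t tp))]
    have : u t - C * (Real.sinh t)⁻¹ ≤ 0 := by
      apply ge_of_tendsto hl
      filter_upwards [eventually_ge_atTop t] with r hr
      exact hm2 (mem_Ici.2 ht) (mem_Ici.2 (ht.trans hr)) hr
    have h6 : u t ≤ C * (Real.sinh t)⁻¹ := by linarith
    calc Real.sinh t * u t ≤ Real.sinh t * (C * (Real.sinh t)⁻¹) := by gcongr
      _ = C := by field_simp
  · have tp : 0 < t := by linarith
    rw [abs_of_pos (Real.rpow_pos_of_pos (S.pos t tp) _)]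
    exact (hT t ht).2.1.le

/-- The bracket in the energy. -/
noncomputable def Br (a b p β : ℝ) (u y : ℝ → ℝ) (t : ℝ) : ℝ :=
  y t ^ 2 / 2 + β * (Real.cosh t / Real.sinh t) * (u t * y t)
    + a * β / (2 - 2 * β) * (u t * (u t) ^ p)
    + (2 * β ^ 2 / Real.sinh t ^ 2 + 2 * β ^ 2 - β - b) / 2 * u t ^ 2

/-- The energy. -/
noncomputable def En (a b p β : ℝ) (u y : ℝ → ℝ) (t : ℝ) : ℝ :=
  Real.sinh t ^ (2 - 2 * β) * Br a b p β u y t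

/-- Coefficient in the derivative of the energy. -/
noncomputable def K (b β t : ℝ) : ℝ :=
  Real.cosh t / Real.sinh t * Real.sinh t ^ (2 - 2 * β) / 2 *
    (-4 * β ^ 3 / Real.sinh t ^ 2 - (2 - 4 * β) * (β - β ^ 2 + b))

lemma hasDeriv_P (β t : ℝ) (ht : 0 < t) :
    HasDerivAt (fun t => Real.sinh t ^ (2 - 2 * β))
      ((2 - 2 * β) * (Real.cosh t / Real.sinh t) * Real.sinh t ^ (2 - 2 * β)) t := by
  have hs := sinh_pos ht
  refine ((Real.hasDerivAt_sinh t).rpow_const (p := 2 - 2 * β) (Or.inl hs.ne')).congr_deriv ?_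
  rw [Real.rpow_sub_one hs.ne']
  field_simp

lemma Sol.En_deriv {a b p β : ℝ} {u y : ℝ → ℝ} (S : Sol a b p u y)
    (hβ : 0 < β) (hβ2 : β < 1 / 2) (hp : p = 2 / β - 3) (t : ℝ) (ht : 0 < t) :
    HasDerivAt (En a b p β u y) (K b β t * u t ^ 2) t := by
  have hs := (sinh_pos ht)
  have hupos := S.pos t ht
  have h1 := S.hu t ht
  have h2 := S.hy t ht
  have hup : HasDerivAt (fun t => (u t) ^ p) (y t * p * ((u t) ^ p / u t)) t := by
    refine (h1.rpow_const (p := p) (Or.inl hupos.ne')).congr_deriv ?_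
    rw [Real.rpow_sub_one hupos.ne']
  have hc : HasDerivAt (fun t => Real.cosh t / Real.sinh t)
      ((Real.sinh t * Real.sinh t - Real.cosh t * Real.cosh t) / Real.sinh t ^ 2) t :=
    (Real.hasDerivAt_cosh t).div (Real.hasDerivAt_sinh t) hs.ne'
  have hq : HasDerivAt (fun t => 2 * β ^ 2 / Real.sinh t ^ 2)
      (2 * β ^ 2 * (-2 * Real.cosh t / Real.sinh t ^ 3)) t := by
    have := (((Real.hasDerivAt_sinh t).pow 2).inv (pow_pos hs 2).ne').const_mul (2 * β ^ 2)
    refine (this.congr_deriv ?_).congr_of_eventuallyEq ?_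
    · simp only [Pi.pow_apply]
      field_simp
      norm_num
    · exact Eventually.of_forall fun x => by simp [div_eq_mul_inv]
  have hBr : HasDerivAt (Br a b p β u y) _ t :=
    (((((h2.pow 2).div_const 2).add ((hc.const_mul β).mul (h1.mul h2))).add
      ((h1.mul hup).const_mul (a * β / (2 - 2 * β)))).add
      (((((hq.add_const (2 * β ^ 2)).sub_const β).sub_const b).div_const 2).mul (h1.pow 2)))
  refine ((hasDeriv_P β t ht).mul hBr).congr_deriv ?_
  have hc2 : Real.cosh t ^ 2 = Real.sinh t ^ 2 + 1 := by rw [Real.cosh_sq]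
  have hne : 2 - 2 * β ≠ 0 := by linarith
  simp only [Br, K, Pi.mul_apply, Pi.pow_apply]
  generalize Real.sinh t ^ (2 - 2 * β) = P
  generalize (u t) ^ p = Q
  generalize Real.sinh t = s at *
  generalize Real.cosh t = c at *
  generalize u t = U at *
  generalize y t = Y at *
  subst hp
  have hne' : 1 - β ≠ 0 := by linarith
  rw [show 2 - 2 * β = 2 * (1 - β) by ring]
  linear_combination (norm := (field_simp; ring)) (-2 * β ^ 2 / s ^ 2 * P * U * Y) * hc2

lemma sinh_atTop : Tendsto Real.sinh atTop atTop :=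
  tendsto_atTop_mono' atTop
    ((eventually_ge_atTop 0).mono fun t ht => Real.self_le_sinh_iff.2 ht) tendsto_id

lemma Sol.En_lim {a b p β : ℝ} {u y : ℝ → ℝ} (S : Sol a b p u y) (hp : 1 < p)
    (hb : 0 < b) (ha : 0 < a) (hβ : 0 < β) (hβ2 : β < 1 / 2) :
    Tendsto (En a b p β u y) atTop (nhds 0) := by
  obtain ⟨T, C, hT, hC, h⟩ := S.decay hp hb
  set M := C ^ 2 / 2 + β * 2 * (C * C) + a * β / (2 - 2 * β) * (C * C * 1)
    + (2 * β ^ 2 * 1 + 2 * β ^ 2 + β + b) / 2 * C ^ 2 with hM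
  have hlim : Tendsto (fun t => Real.sinh t ^ (-(2 * β)) * M) atTop (nhds 0) := by
    have := ((tendsto_rpow_neg_atTop (y := 2 * β) (by linarith)).comp sinh_atTop).mul_const M
    simpa using this
  apply squeeze_zero_norm' _ hlim
  filter_upwards [eventually_ge_atTop T] with t ht
  have tp : 0 < t := by linarith
  have hs := sinh_pos tp
  have hs1 : 1 ≤ Real.sinh t := by
    have : t ≤ Real.sinh t := Real.self_le_sinh_iff.2 tp.le
    linarith
  obtain ⟨h1, h2, h3⟩ := h t ht
  have hc : |Real.cosh t / Real.sinh t| ≤ 2 := by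
    rw [abs_of_pos (div_pos (Real.cosh_pos t) hs), div_le_iff₀ hs]
    have := Real.cosh_sq t
    nlinarith [Real.cosh_pos t]
  have hi : |1 / Real.sinh t ^ 2| ≤ 1 := by
    rw [abs_of_pos (by positivity), div_le_one (by positivity)]
    nlinarith
  have hd : 0 < a * β / (2 - 2 * β) := div_pos (by positivity) (by linarith)
  have e1 : En a b p β u y t = Real.sinh t ^ (-(2 * β)) *
      ((Real.sinh t * y t) ^ 2 / 2
        + β * (Real.cosh t / Real.sinh t) * ((Real.sinh t * u t) * (Real.sinh t * y t))
        + a * β / (2 - 2 * β) *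
          ((Real.sinh t * u t) * (Real.sinh t * u t) * (u t) ^ (p - 1))
        + (2 * β ^ 2 * (1 / Real.sinh t ^ 2) + 2 * β ^ 2 - β - b) / 2
          * (Real.sinh t * u t) ^ 2) := by
    have e2 : Real.sinh t ^ (2 - 2 * β) = Real.sinh t ^ (-(2 * β)) * Real.sinh t ^ 2 := by
      rw [← Real.rpow_natCast (Real.sinh t) 2, ← Real.rpow_add hs]
      congr 1
      push_cast
      ring
    simp only [En, Br]
    rw [e2, rpow_split (p := p) (S.pos t tp)]
    ring
  rw [e1, Real.norm_eq_abs, abs_mul, abs_of_pos (Real.rpow_pos_of_pos hs _)]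
  apply mul_le_mul_of_nonneg_left _ (Real.rpow_pos_of_pos hs _).le
  generalize Real.sinh t * y t = A at *
  generalize Real.sinh t * u t = B at *
  generalize (u t) ^ (p - 1) = R at *
  generalize Real.cosh t / Real.sinh t = c at *
  generalize 1 / Real.sinh t ^ 2 = i at *
  refine (abs_add_le _ _).trans (add_le_add ((abs_add_le _ _).trans
    (add_le_add ((abs_add_le _ _).trans (add_le_add ?_ ?_)) ?_)) ?_)
  · rw [abs_div, abs_pow, abs_two]
    gcongr
  · rw [abs_mul, abs_mul, abs_mul, abs_of_pos hβ]
    gcongr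
  · rw [abs_mul, abs_mul, abs_mul, abs_of_pos hd]
    gcongr
  · rw [abs_mul, abs_div, abs_pow, abs_two]
    gcongr
    have := abs_le.1 hi
    rw [abs_le]
    constructor <;> nlinarith [sq_nonneg β, pow_pos hβ 2]

lemma K_neg {b β t : ℝ} (hb : 0 < b) (hβ : 0 < β) (hβ2 : β < 1 / 2) (ht : 0 < t) :
    K b β t < 0 := by
  have hs := sinh_pos ht
  have hc := Real.cosh_pos t
  unfold K
  apply mul_neg_of_pos_of_neg
  · have := Real.rpow_pos_of_pos hs (2 - 2 * β)
    positivity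
  · have h1 : 0 < 4 * β ^ 3 / Real.sinh t ^ 2 := by positivity
    have h2 : 0 < (2 - 4 * β) * (β - β ^ 2 + b) := mul_pos (by linarith) (by nlinarith)
    have h3 : -4 * β ^ 3 / Real.sinh t ^ 2 = -(4 * β ^ 3 / Real.sinh t ^ 2) := by ring
    rw [h3]
    linarith

lemma Sol.En_pos {a b p β : ℝ} {u y : ℝ → ℝ} (S : Sol a b p u y) (hp1 : 1 < p)
    (hb : 0 < b) (ha : 0 < a) (hβ : 0 < β) (hβ2 : β < 1 / 2) (hp : p = 2 / β - 3)
    (t : ℝ) (ht : 0 < t) : 0 < En a b p β u y t := by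
  have hanti : StrictAntiOn (En a b p β u y) (Ioi 0) := by
    apply strictAntiOn_of_deriv_neg (convex_Ioi 0)
    · intro r hr
      exact (S.En_deriv hβ hβ2 hp r hr).continuousAt.continuousWithinAt
    · intro r hr
      rw [interior_Ioi] at hr
      rw [(S.En_deriv hβ hβ2 hp r hr).deriv]
      exact mul_neg_of_neg_of_pos (K_neg hb hβ hβ2 hr) (pow_pos (S.pos r hr) 2)
  have h1 : En a b p β u y (t + 1) < En a b p β u y t :=
    hanti ht (show 0 < t + 1 by linarith) (by linarith)
  have h2 : 0 ≤ En a b p β u y (t + 1) := by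
    apply le_of_tendsto (S.En_lim hp1 hb ha hβ hβ2)
    filter_upwards [eventually_ge_atTop (t + 1)] with r hr
    exact hanti.antitoneOn (show 0 < t + 1 by linarith) (show 0 < r by linarith) hr
  linarith

lemma main {a b p β α₁ α₂ : ℝ} {u₁ y₁ u₂ y₂ : ℝ → ℝ}
    (S₁ : Sol a b p u₁ y₁) (S₂ : Sol a b p u₂ y₂) (hp1 : 1 < p)
    (hb : 0 < b) (ha : 0 < a) (hβ : 0 < β) (hβ2 : β < 1 / 2) (hp : p = 2 / β - 3)
    (hα₁ : 0 < α₁)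
    (hu₁ : Tendsto u₁ (nhdsWithin 0 (Ioi 0)) (nhds α₁))
    (hu₂ : Tendsto u₂ (nhdsWithin 0 (Ioi 0)) (nhds α₂))
    (hy₁ : Tendsto y₁ (nhdsWithin 0 (Ioi 0)) (nhds 0))
    (hy₂ : Tendsto y₂ (nhdsWithin 0 (Ioi 0)) (nhds 0))
    (hlt : α₁ < α₂) : False := by
  -- the Wronskian
  set W : ℝ → ℝ := fun t => (Real.sinh t * y₂ t) * u₁ t - (Real.sinh t * y₁ t) * u₂ t with hW
  have hWd : ∀ t, 0 < t → HasDerivAt W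
      (a * Real.sinh t * ((u₁ t) ^ p * u₂ t - (u₂ t) ^ p * u₁ t)) t := by
    intro t ht
    refine (((S₂.sy t ht).mul (S₁.hu t ht)).sub
      ((S₁.sy t ht).mul (S₂.hu t ht))).congr_deriv ?_
    ring
  have hsl : Tendsto Real.sinh (nhdsWithin 0 (Ioi 0)) (nhds 0) := by
    have : Tendsto Real.sinh (nhds 0) (nhds (Real.sinh 0)) := Real.continuous_sinh.continuousAt
    rw [Real.sinh_zero] at this
    exact this.mono_left nhdsWithin_le_nhds
  have hcl : Tendsto Real.cosh (nhdsWithin 0 (Ioi 0)) (nhds 1) := by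
    have : Tendsto Real.cosh (nhds 0) (nhds (Real.cosh 0)) := Real.continuous_cosh.continuousAt
    rw [Real.cosh_zero] at this
    exact this.mono_left nhdsWithin_le_nhds
  have hWl : Tendsto W (nhdsWithin 0 (Ioi 0)) (nhds 0) := by
    simpa using ((hsl.mul hy₂).mul hu₁).sub ((hsl.mul hy₁).mul hu₂)
  have hWc : ∀ t, 0 < t → ContinuousAt W t := fun t ht => (hWd t ht).continuousAt
  -- the quotient
  have hwd : ∀ t, 0 < t → HasDerivAt (fun t => u₂ t / u₁ t)
      (W t / (Real.sinh t * u₁ t ^ 2)) t := by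
    intro t ht
    have h1 := (S₁.pos t ht).ne'
    have h2 := (sinh_pos ht).ne'
    refine ((S₂.hu t ht).div (S₁.hu t ht) h1).congr_deriv ?_
    simp only [hW]
    field_simp
  set X : ℝ → ℝ := fun t => En a b p β u₁ y₁ t * (u₂ t / u₁ t) ^ 2 - En a b p β u₂ y₂ t with hX
  have hXd : ∀ t, 0 < t → HasDerivAt X
      (2 * (u₂ t / u₁ t) * (W t / (Real.sinh t * u₁ t ^ 2)) * En a b p β u₁ y₁ t) t := by
    intro t ht
    have h1 := (S₁.pos t ht).ne'
    have h2 := (sinh_pos ht).ne'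
    refine (((S₁.En_deriv hβ hβ2 hp t ht).mul ((hwd t ht).pow 2)).sub
      (S₂.En_deriv hβ hβ2 hp t ht)).congr_deriv ?_
    simp only [Pi.pow_apply]
    push_cast
    field_simp
    ring_nf
  have hXneg : ∀ t, 0 < t → W t < 0 →
      2 * (u₂ t / u₁ t) * (W t / (Real.sinh t * u₁ t ^ 2)) * En a b p β u₁ y₁ t < 0 := by
    intro t ht hWt
    have h1 := S₁.pos t ht
    have h2 := sinh_pos ht
    have h3 := S₂.pos t ht
    have h4 := S₁.En_pos hp1 hb ha hβ hβ2 hp t ht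
    apply mul_neg_of_neg_of_pos _ h4
    apply mul_neg_of_pos_of_neg (by positivity)
    exact div_neg_of_neg_of_pos hWt (by positivity)
  have hXe : ∀ t, 0 < t → X t = Real.sinh t ^ (2 - 2 * β) *
      (((y₁ t * (u₂ t / u₁ t)) ^ 2 - y₂ t ^ 2) / 2
        + a * β / (2 - 2 * β) * (u₁ t * (u₁ t) ^ p * (u₂ t / u₁ t) ^ 2 - u₂ t * (u₂ t) ^ p))
      + Real.sinh t ^ (1 - 2 * β) * Real.cosh t * β *
        (u₁ t * y₁ t * (u₂ t / u₁ t) ^ 2 - u₂ t * y₂ t) := by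
    intro t ht
    have h1 := (S₁.pos t ht).ne'
    have h2 := (sinh_pos ht).ne'
    have e : Real.sinh t ^ (1 - 2 * β) = Real.sinh t ^ (2 - 2 * β) / Real.sinh t := by
      rw [← Real.rpow_sub_one h2]
      congr 1
      ring
    simp only [hX, En, Br]
    rw [e]
    have hne : 1 - β ≠ 0 := by linarith
    rw [show a * β / (2 - 2 * β) = a * β / (2 * (1 - β)) by ring_nf]
    generalize Real.sinh t ^ (2 - 2 * β) = P
    field_simp
    ring
  have hXl : Tendsto X (nhdsWithin 0 (Ioi 0)) (nhds 0) := by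
    have hα₂ : 0 < α₂ := hα₁.trans hlt
    have hs1 : Tendsto (fun t => Real.sinh t ^ (2 - 2 * β)) (nhdsWithin 0 (Ioi 0)) (nhds 0) := by
      have h := hsl.rpow_const (p := 2 - 2 * β) (Or.inr (by linarith))
      rwa [Real.zero_rpow (by linarith)] at h
    have hs2 : Tendsto (fun t => Real.sinh t ^ (1 - 2 * β)) (nhdsWithin 0 (Ioi 0)) (nhds 0) := by
      have h := hsl.rpow_const (p := 1 - 2 * β) (Or.inr (by linarith))
      rwa [Real.zero_rpow (by linarith)] at h
    have hw := hu₂.div hu₁ hα₁.ne'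
    have hq1 := hu₁.rpow_const (p := p) (Or.inl hα₁.ne')
    have hq2 := hu₂.rpow_const (p := p) (Or.inl hα₂.ne')
    have key := (hs1.mul (((((hy₁.mul hw).pow 2).sub (hy₂.pow 2)).div_const 2).add
      ((((hu₁.mul hq1).mul (hw.pow 2)).sub (hu₂.mul hq2)).const_mul (a * β / (2 - 2 * β))))).add
      (((hs2.mul hcl).mul_const β).mul (((hu₁.mul hy₁).mul (hw.pow 2)).sub (hu₂.mul hy₂)))
    simp only [zero_mul, add_zero] at key
    refine key.congr' ?_
    filter_upwards [self_mem_nhdsWithin] with t ht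
    rw [hXe t ht]
    rfl
  -- W is negative near zero
  have hnear : ∃ δ, 0 < δ ∧ ∀ t, 0 < t → t < δ → W t < 0 := by
    have hev : ∀ᶠ t in nhdsWithin (0 : ℝ) (Ioi 0), u₁ t < u₂ t :=
      hu₁.eventually_lt hu₂ hlt
    obtain ⟨δ, hδ, hδ2⟩ := (mem_nhdsGT_iff_exists_Ioo_subset).1 hev
    refine ⟨δ, hδ, fun t ht htδ => neg_of_lim ht hWd ?_ hWl⟩
    intro r hr hrt
    have : u₁ r < u₂ r := hδ2 ⟨hr, hrt.trans htδ⟩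
    apply mul_neg_of_pos_of_neg (mul_pos ha (sinh_pos hr))
    linarith [cross hp1 (S₁.pos r hr) this]
  have hwanti : ∀ T, 0 < T → (∀ t, 0 < t → t < T → W t < 0) →
      StrictAntiOn (fun t => u₂ t / u₁ t) (Ioc 0 T) := by
    intro T hT hneg
    apply strictAntiOn_of_deriv_neg (convex_Ioc 0 T)
    · intro t ht
      exact (hwd t ht.1).continuousAt.continuousWithinAt
    · intro t ht
      rw [interior_Ioc] at ht
      rw [(hwd t ht.1).deriv]
      exact div_neg_of_neg_of_pos (hneg t ht.1 ht.2)
        (mul_pos (sinh_pos ht.1) (pow_pos (S₁.pos t ht.1) 2))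
  by_cases hall : ∀ t, 0 < t → W t < 0
  · -- contradiction at infinity
    have hX1 : X 1 < 0 :=
      neg_of_lim one_pos hXd (fun t ht _ => hXneg t ht (hall t ht)) hXl
    have hXanti : StrictAntiOn X (Ioi 0) := by
      apply strictAntiOn_of_deriv_neg (convex_Ioi 0)
      · intro r hr
        exact (hXd r hr).continuousAt.continuousWithinAt
      · intro r hr
        rw [interior_Ioi] at hr
        rw [(hXd r hr).deriv]
        exact hXneg r hr (hall r hr)
    have hXinf : Tendsto X atTop (nhds 0) := by
      have hE1 := S₁.En_lim hp1 hb ha hβ hβ2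
      have hE2 := S₂.En_lim hp1 hb ha hβ hβ2
      have h1 : Tendsto (fun t => En a b p β u₁ y₁ t * (u₂ t / u₁ t) ^ 2) atTop (nhds 0) := by
        have hm := hE1.mul_const ((u₂ 1 / u₁ 1) ^ 2)
        rw [zero_mul] at hm
        refine squeeze_zero' ?_ ?_ hm
        · filter_upwards [eventually_ge_atTop 1] with t ht
          have := S₁.En_pos hp1 hb ha hβ hβ2 hp t (by linarith)
          positivity
        · filter_upwards [eventually_ge_atTop 1] with t ht
          have tp : 0 < t := by linarith
          have h0 := S₁.En_pos hp1 hb ha hβ hβ2 hp t tp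
          have h1 := S₁.pos t tp
          have h2 := S₂.pos t tp
          have h3 : u₂ t / u₁ t ≤ u₂ 1 / u₁ 1 :=
            (hwanti t tp (fun r hr _ => hall r hr)).antitoneOn ⟨one_pos, ht⟩ ⟨tp, le_rfl⟩ ht
          have h4 : 0 < u₂ t / u₁ t := by positivity
          gcongr
      simpa using h1.sub hE2
    have : 0 ≤ X 1 := by
      apply le_of_tendsto hXinf
      filter_upwards [eventually_ge_atTop 1] with r hr
      exact hXanti.antitoneOn (show (0 : ℝ) < 1 from one_pos) (show 0 < r by linarith) hr
    linarith
  · push Not at hall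
    obtain ⟨t₁, ht₁, hWt₁⟩ := hall
    obtain ⟨δ, hδ, hδW⟩ := hnear
    set Z : Set ℝ := {t | 0 < t ∧ 0 ≤ W t} with hZ
    have hZne : Z.Nonempty := ⟨t₁, ht₁, hWt₁⟩
    have hZlow : ∀ t ∈ Z, δ ≤ t := by
      intro t ht
      by_contra hcon
      push Not at hcon
      linarith [hδW t ht.1 hcon, ht.2]
    have hZb : BddBelow Z := ⟨δ, hZlow⟩
    set T := sInf Z with hT
    have hTδ : δ ≤ T := le_csInf hZne hZlow
    have hTpos : 0 < T := by linarith
    have hbelow : ∀ t, 0 < t → t < T → W t < 0 := by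
      intro t ht htT
      by_contra hcon
      push Not at hcon
      have : T ≤ t := csInf_le hZb ⟨ht, hcon⟩
      linarith
    have hWT1 : 0 ≤ W T := by
      by_contra hcon
      push Not at hcon
      have hev : ∀ᶠ t in nhds T, W t < 0 := (hWc T hTpos).eventually (gt_mem_nhds hcon)
      obtain ⟨ε, hε, hball⟩ := Metric.eventually_nhds_iff.1 hev
      obtain ⟨z, hz, hzl⟩ := exists_lt_of_csInf_lt hZne (show sInf Z < T + ε by linarith)
      have hzT : T ≤ z := csInf_le hZb hz
      have : W z < 0 := hball (by rw [Real.dist_eq, abs_lt]; constructor <;> linarith)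
      linarith [hz.2]
    have hWT2 : W T ≤ 0 := by
      have hl : Tendsto W (nhdsWithin T (Iio T)) (nhds (W T)) :=
        (hWc T hTpos).tendsto.mono_left nhdsWithin_le_nhds
      apply le_of_tendsto hl
      filter_upwards [Ioo_mem_nhdsLT hTpos] with t ht
      exact (hbelow t ht.1 ht.2).le
    have hWT : W T = 0 := le_antisymm hWT2 hWT1
    have hu1 := S₁.pos T hTpos
    have hu2 := S₂.pos T hTpos
    have hsT := sinh_pos hTpos
    have hcmp : u₂ T < u₁ T := by
      by_contra hcon
      push Not at hcon
      have hw1 : 1 ≤ u₂ T / u₁ T := (one_le_div hu1).2 hcon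
      have : W T < 0 := by
        refine neg_of_lim hTpos hWd ?_ hWl
        intro r hr hrT
        have h5 : u₂ T / u₁ T < u₂ r / u₁ r :=
          hwanti T hTpos hbelow ⟨hr, hrT.le⟩ ⟨hTpos, le_rfl⟩ hrT
        have h6 : u₁ r < u₂ r := (one_lt_div (S₁.pos r hr)).1 (lt_of_le_of_lt hw1 h5)
        apply mul_neg_of_pos_of_neg (mul_pos ha (sinh_pos hr))
        linarith [cross hp1 (S₁.pos r hr) h6]
      linarith
    have hXT : X T < 0 :=
      neg_of_lim hTpos hXd (fun t ht htT => hXneg t ht (hbelow t ht htT)) hXl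
    have hrel : y₂ T = y₁ T * (u₂ T / u₁ T) := by
      have h7 : Real.sinh T * (y₂ T * u₁ T - y₁ T * u₂ T) = 0 := by
        rw [← hWT]
        simp only [hW]
        ring
      have h8 : y₂ T * u₁ T - y₁ T * u₂ T = 0 :=
        (mul_eq_zero.1 h7).resolve_left hsT.ne'
      field_simp
      linarith
    have hval : X T = Real.sinh T ^ (2 - 2 * β) * (a * β / (2 - 2 * β)) * (u₂ T / u₁ T) *
        ((u₁ T) ^ p * u₂ T - (u₂ T) ^ p * u₁ T) := by
      rw [hXe T hTpos, hrel]
      field_simp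
      ring
    have hPpos := Real.rpow_pos_of_pos hsT (2 - 2 * β)
    have hd : 0 < a * β / (2 - 2 * β) := div_pos (by positivity) (by linarith)
    have : 0 < X T := by
      rw [hval]
      apply mul_pos (by positivity)
      linarith [cross hp1 hu2 hcmp]
    linarith

lemma mkSol {m a b : ℝ} {F u : ℝ → ℝ} (hF : ∀ s, F s = a * s ^ (1 + 2 / m) - b * s)
    (hud : ∀ τ ∈ Ioi (0 : ℝ), DifferentiableAt ℝ u τ)
    (hud' : ∀ τ ∈ Ioi (0 : ℝ), DifferentiableAt ℝ (deriv u) τ)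
    (hode : ∀ τ ∈ Ioi (0 : ℝ),
      deriv (deriv u) τ + (Real.cosh τ / Real.sinh τ) * deriv u τ + F (u τ) = 0)
    (hpos : ∀ τ ∈ Ioi (0 : ℝ), 0 < u τ)
    (hdec : Tendsto u atTop (nhds 0)) : Sol a b (1 + 2 / m) u (deriv u) where
  hu t ht := (hud t ht).hasDerivAt
  hy t ht := by
    refine (hud' t ht).hasDerivAt.congr_deriv ?_
    have h := hode t ht
    rw [hF] at h
    linarith
  pos := hpos
  dec := hdec

end GSU


/-- Uniqueness of the positive decaying (ground state) solution: for `m > 2`,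
`ã > 0`, `b̃ ≥ m` and `f(s) = ã·s^{1+2/m} − b̃·s`, there is at most one initial
value `α > 0` such that the solution of `u'' + coth(τ)·u' + f(u) = 0` on `(0,∞)`
with `u(0) = α`, `u'(0⁺) = 0` stays positive and decays to zero at infinity. -/
theorem ground_state_uniqueness
    (m a b : ℝ) (hm : 2 < m) (ha : 0 < a) (hb : m ≤ b)
    (F : ℝ → ℝ) (hF : ∀ s, F s = a * s ^ (1 + 2 / m) - b * s)
    (α₁ α₂ : ℝ) (hα₁ : 0 < α₁) (hα₂ : 0 < α₂)
    (u₁ u₂ : ℝ → ℝ)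
    (hu₁c : ContinuousOn u₁ (Ici 0))
    (hu₁d : ∀ τ ∈ Ioi (0 : ℝ), DifferentiableAt ℝ u₁ τ)
    (hu₁d' : ∀ τ ∈ Ioi (0 : ℝ), DifferentiableAt ℝ (deriv u₁) τ)
    (hode₁ : ∀ τ ∈ Ioi (0 : ℝ),
      deriv (deriv u₁) τ + (Real.cosh τ / Real.sinh τ) * deriv u₁ τ + F (u₁ τ) = 0)
    (hu₁0 : u₁ 0 = α₁)
    (hu₁'0 : Tendsto (deriv u₁) (nhdsWithin 0 (Ioi 0)) (nhds 0))
    (hpos₁ : ∀ τ ∈ Ioi (0 : ℝ), 0 < u₁ τ)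
    (hdec₁ : Tendsto u₁ atTop (nhds 0))
    (hu₂c : ContinuousOn u₂ (Ici 0))
    (hu₂d : ∀ τ ∈ Ioi (0 : ℝ), DifferentiableAt ℝ u₂ τ)
    (hu₂d' : ∀ τ ∈ Ioi (0 : ℝ), DifferentiableAt ℝ (deriv u₂) τ)
    (hode₂ : ∀ τ ∈ Ioi (0 : ℝ),
      deriv (deriv u₂) τ + (Real.cosh τ / Real.sinh τ) * deriv u₂ τ + F (u₂ τ) = 0)
    (hu₂0 : u₂ 0 = α₂)
    (hu₂'0 : Tendsto (deriv u₂) (nhdsWithin 0 (Ioi 0)) (nhds 0))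
    (hpos₂ : ∀ τ ∈ Ioi (0 : ℝ), 0 < u₂ τ)
    (hdec₂ : Tendsto u₂ atTop (nhds 0)) :
    α₁ = α₂ := by
  have hm0 : 0 < m := by linarith
  have hb0 : 0 < b := by linarith
  have S₁ := GSU.mkSol hF hu₁d hu₁d' hode₁ hpos₁ hdec₁
  have S₂ := GSU.mkSol hF hu₂d hu₂d' hode₂ hpos₂ hdec₂
  have hp1 : 1 < 1 + 2 / m := by
    have : 0 < 2 / m := by positivity
    linarith
  have hβ : 0 < 2 / (1 + 2 / m + 3) := by positivity
  have hβ2 : 2 / (1 + 2 / m + 3) < 1 / 2 := by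
    rw [div_lt_div_iff₀ (by linarith) (by norm_num)]
    linarith
  have hp : 1 + 2 / m = 2 / (2 / (1 + 2 / m + 3)) - 3 := by
    rw [div_div_cancel₀ two_ne_zero]
    ring
  have hl₁ : Tendsto u₁ (nhdsWithin 0 (Ioi 0)) (nhds α₁) := by
    have h := hu₁c 0 self_mem_Ici
    rw [← hu₁0]
    exact h.tendsto.mono_left (nhdsWithin_mono 0 Ioi_subset_Ici_self)
  have hl₂ : Tendsto u₂ (nhdsWithin 0 (Ioi 0)) (nhds α₂) := by
    have h := hu₂c 0 self_mem_Ici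
    rw [← hu₂0]
    exact h.tendsto.mono_left (nhdsWithin_mono 0 Ioi_subset_Ici_self)
  rcases lt_trichotomy α₁ α₂ with h | h | h
  · exact (GSU.main S₁ S₂ hp1 hb0 ha hβ hβ2 hp hα₁ hl₁ hl₂ hu₁'0 hu₂'0 h).elim
  · exact h
  · exact (GSU.main S₂ S₁ hp1 hb0 ha hβ hβ2 hp hα₂ hl₂ hl₁ hu₂'0 hu₁'0 h).elim
end

section
/- Strict admissibility of initial values in G ∪ N (Theorem 5.1): Assume additionally b̃ ≥ m. Let α ∈ G ∪ N, let u be the corresponding solution, and let w be the solution of the linearized equation w''(τ) + coth(τ)·w'(τ) + f'(u(τ))·w(τ) = 0 on (0,∞) with w(0) = 1 and lim_{τ→0+} w'(τ) = 0, where f'(s) = ã(1+2/m)s^{2/m} − b̃. Then w has exactly one zero in (0, b(α)); moreover if α ∈ N then w(b(α)) < 0, while if α ∈ G then w is unbounded on (0, ∞). -/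
open Set Filter

namespace SA
open Real Topology

lemma lt_of_deriv {g g' : ℝ → ℝ} {s T : ℝ} (hs : s < T)
    (hd : ∀ t ∈ Icc s T, HasDerivAt g (g' t) t) (hp : ∀ t ∈ Ioo s T, 0 < g' t) : g s < g T := by
  obtain ⟨c, hc, h⟩ := exists_hasDerivAt_eq_slope g g' hs
    (fun t ht => (hd t ht).continuousAt.continuousWithinAt)
    (fun t ht => hd t (Ioo_subset_Icc_self ht))
  have h1 := hp c hc
  rw [h] at h1
  have h2 : 0 < T - s := by linarith
  have := (div_pos_iff_of_pos_right h2).1 h1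
  linarith

lemma le_of_deriv {g g' : ℝ → ℝ} {s T : ℝ} (hs : s ≤ T)
    (hd : ∀ t ∈ Icc s T, HasDerivAt g (g' t) t) (hp : ∀ t ∈ Ioo s T, 0 ≤ g' t) : g s ≤ g T := by
  rcases hs.eq_or_lt with rfl | hs
  · exact le_rfl
  obtain ⟨c, hc, h⟩ := exists_hasDerivAt_eq_slope g g' hs
    (fun t ht => (hd t ht).continuousAt.continuousWithinAt)
    (fun t ht => hd t (Ioo_subset_Icc_self ht))
  have h1 := hp c hc
  rw [h] at h1
  have h2 : 0 < T - s := by linarith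
  have := (div_nonneg_iff.1 h1)
  rcases this with h | h <;> linarith

lemma lim_le {g g' : ℝ → ℝ} {L T : ℝ} (hT : 0 < T)
    (hd : ∀ t ∈ Ioc 0 T, HasDerivAt g (g' t) t) (hp : ∀ t ∈ Ioo 0 T, 0 ≤ g' t)
    (hl : Tendsto g (𝓝[>] 0) (𝓝 L)) : L ≤ g T := by
  refine le_of_tendsto hl ?_
  filter_upwards [Ioo_mem_nhdsGT hT] with t ht
  exact le_of_deriv ht.2.le (fun x hx => hd x ⟨ht.1.trans_le hx.1, hx.2⟩)
    (fun x hx => hp x ⟨ht.1.trans hx.1, hx.2⟩)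

lemma lim_lt {g g' : ℝ → ℝ} {L T : ℝ} (hT : 0 < T)
    (hd : ∀ t ∈ Ioc 0 T, HasDerivAt g (g' t) t) (hp : ∀ t ∈ Ioo 0 T, 0 < g' t)
    (hl : Tendsto g (𝓝[>] 0) (𝓝 L)) : L < g T := by
  have h1 : L ≤ g (T/2) := lim_le (by linarith) (fun x hx => hd x ⟨hx.1, by linarith [hx.2]⟩)
    (fun x hx => (hp x ⟨hx.1, by linarith [hx.2]⟩).le) hl
  refine h1.trans_lt (lt_of_deriv (by linarith) (fun x hx => hd x ⟨by linarith [hx.1], hx.2⟩)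
    (fun x hx => hp x ⟨by linarith [hx.1], hx.2⟩))

lemma first_zero {g : ℝ → ℝ} {s T : ℝ} (hs : s < T) (hg : ContinuousOn g (Icc s T))
    (h0 : 0 < g s) (h1 : g T ≤ 0) : ∃ c ∈ Ioc s T, g c = 0 ∧ ∀ t ∈ Ico s c, 0 < g t := by
  set S := {t ∈ Icc s T | g t ≤ 0} with hS
  have hcl : IsClosed S := by
    have := hg.preimage_isClosed_of_isClosed isClosed_Icc (isClosed_Iic (a := (0:ℝ)))
    exact this
  have hne : S.Nonempty := ⟨T, ⟨hs.le, le_rfl⟩, h1⟩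
  have hbd : BddBelow S := ⟨s, fun x hx => hx.1.1⟩
  have hc : sInf S ∈ S := hcl.csInf_mem hne hbd
  set c := sInf S
  have hsc : s < c := by
    rcases hc.1.1.eq_or_lt with h | h
    · have := hc.2; rw [← h] at this; linarith
    · exact h
  refine ⟨c, ⟨hsc, hc.1.2⟩, ?_, ?_⟩
  · obtain ⟨t, ht, h⟩ := intermediate_value_Icc' hsc.le
      (hg.mono (Icc_subset_Icc_right hc.1.2)) (show (0:ℝ) ∈ Icc (g c) (g s) from ⟨hc.2, h0.le⟩)
    have : c ≤ t := csInf_le hbd ⟨⟨ht.1, ht.2.trans hc.1.2⟩, h.le⟩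
    rw [← h, le_antisymm ht.2 this]
  · intro t ht
    by_contra h
    have : c ≤ t := csInf_le hbd ⟨⟨ht.1, ht.2.le.trans hc.1.2⟩, not_lt.1 h⟩
    linarith [ht.2]

lemma deriv_nonpos {g : ℝ → ℝ} {s c d : ℝ} (hs : s < c) (hd : HasDerivAt g d c)
    (h0 : g c = 0) (h : ∀ t ∈ Ioo s c, 0 < g t) : d ≤ 0 := by
  have h1 := hd.tendsto_slope.mono_left (nhdsWithin_mono c (s := Iio c) (fun x hx => ne_of_lt hx))
  refine le_of_tendsto h1 ?_
  filter_upwards [Ioo_mem_nhdsLT hs] with t ht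
  rw [slope_def_field, h0]
  have := h t ht
  exact div_nonpos_of_nonneg_of_nonpos (by linarith) (by linarith [ht.2])

/-- Decay of bounded positive solutions. -/
lemma decay {y y1 Q : ℝ → ℝ} {T M : ℝ} (hT : 0 < T)
    (hy : ∀ t, T ≤ t → HasDerivAt y (y1 t) t)
    (hy1 : ∀ t, T ≤ t → HasDerivAt y1 (-(cosh t / sinh t) * y1 t + Q t * y t) t)
    (hQ : ∀ t, T ≤ t → 3/4 ≤ Q t) (hpos : ∀ t, T ≤ t → 0 < y t) (hM : ∀ t, T ≤ t → y t ≤ M) :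
    (∀ t, T ≤ t → y1 t ≤ -(3/2) * y t) ∧ ∃ C > 0, ∀ t, T ≤ t → y t ≤ C * exp (-(3/2) * t) := by
  have key : ∀ t, T ≤ t → y1 t ≤ -(3/2) * y t := by
    intro t0 ht0
    by_contra hcon
    push Not at hcon
    set ψ : ℝ → ℝ := fun t => (y1 t + 3/2 * y t) * (sinh t * exp (-(3/2) * t)) with hψ
    have hψd : ∀ t, T ≤ t → HasDerivAt ψ
        ((Q t * sinh t - 9/4 * sinh t + 3/2 * cosh t) * y t * exp (-(3/2) * t)) t := by
      intro t ht
      have hs : 0 < sinh t := sinh_pos_iff.2 (by linarith)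
      have e1 : HasDerivAt (fun t => exp (-(3/2) * t)) (exp (-(3/2) * t) * (-(3/2))) t := by
        have := ((hasDerivAt_id t).const_mul (-(3/2):ℝ)).exp
        simpa using this
      have := ((hy1 t ht).add ((hy t ht).const_mul (3/2))).mul ((hasDerivAt_sinh t).mul e1)
      refine this.congr_deriv ?_
      simp only [Pi.add_apply, Pi.mul_apply]
      field_simp
      ring
    have hψ0 : 0 < ψ t0 := by
      have hs : 0 < sinh t0 := sinh_pos_iff.2 (by linarith)
      have : 0 < y1 t0 + 3/2 * y t0 := by linarith
      simp only [hψ]; positivity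
    have hψm : ∀ t, t0 ≤ t → ψ t0 ≤ ψ t := by
      intro t ht
      refine le_of_deriv ht (fun x hx => hψd x (ht0.trans hx.1)) (fun x hx => ?_)
      have hTx : T ≤ x := ht0.trans hx.1.le
      have hs : 0 < sinh x := sinh_pos_iff.2 (by linarith)
      have hc : sinh x < cosh x := sinh_lt_cosh x
      have := hQ x hTx
      have := hpos x hTx
      have : 0 ≤ Q x * sinh x - 9/4 * sinh x + 3/2 * cosh x := by nlinarith
      positivity
    set ρ : ℝ → ℝ := fun t => y t * exp (3/2 * t) - ψ t0 * exp (2 * t) with hρ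
    have hρm : ∀ t, t0 ≤ t → ρ t0 ≤ ρ t := by
      intro t ht
      refine le_of_deriv (g' := fun t => (y1 t + 3/2 * y t) * exp (3/2*t) - 2 * ψ t0 * exp (2*t)) ht
        (fun x hx => ?_) (fun x hx => ?_)
      · have e1 : HasDerivAt (fun t => exp (3/2 * t)) (exp (3/2 * x) * (3/2)) x := by
          have := ((hasDerivAt_id x).const_mul (3/2:ℝ)).exp
          simpa using this
        have e2 : HasDerivAt (fun t => exp (2 * t)) (exp (2 * x) * 2) x := by
          have := ((hasDerivAt_id x).const_mul (2:ℝ)).exp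
          simpa using this
        refine (((hy x (ht0.trans hx.1)).mul e1).sub (e2.const_mul (ψ t0))).congr_deriv ?_
        ring
      · have hTx : T ≤ x := ht0.trans hx.1.le
        have hs : 0 < sinh x := sinh_pos_iff.2 (by linarith)
        have h1 := hψm x hx.1.le
        have h2 : 2 * sinh x ≤ exp x := by
          rw [sinh_eq]; linarith [exp_pos (-x)]
        have h3 : exp (3/2*x) * exp (-(3/2)*x) = 1 := by rw [← exp_add]; simp
        have h4 : exp (2*x) * exp (-(3/2)*x) * exp x = exp (3/2*x) := by
          rw [← exp_add, ← exp_add]; ring_nf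
        have hφ : 0 < y1 x + 3/2 * y x := by
          have : 0 < ψ x := hψ0.trans_le h1
          simp only [hψ] at this
          exact pos_of_mul_pos_left this (by positivity)
        have h5 : 2 * ψ x * exp (2*x) ≤ (y1 x + 3/2 * y x) * exp (3/2*x) := by
          rw [← h4]
          have : (y1 x + 3/2 * y x) * (exp (2*x) * exp (-(3/2)*x)) * (2 * sinh x) ≤
            (y1 x + 3/2 * y x) * (exp (2*x) * exp (-(3/2)*x)) * exp x := by gcongr
          simp only [hψ]; nlinarith
        have : 2 * ψ t0 * exp (2*x) ≤ 2 * ψ x * exp (2*x) := by gcongr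
        linarith
    -- contradiction
    have hlim : Tendsto (fun t => ψ t0 * exp (t/2) + ρ t0 * exp (-(3/2)*t)) atTop atTop := by
      refine Tendsto.atTop_add (C := 0) ?_ ?_
      · exact (tendsto_exp_atTop.comp (tendsto_id.atTop_div_const (by norm_num))).const_mul_atTop hψ0
      · have : Tendsto (fun t : ℝ => exp (-(3/2)*t)) atTop (𝓝 0) :=
          tendsto_exp_atBot.comp (tendsto_id.const_mul_atTop_of_neg (by norm_num))
        simpa using this.const_mul (ρ t0)
    obtain ⟨t, h1, h2⟩ := ((hlim.eventually_gt_atTop M).and (eventually_ge_atTop t0)).exists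
    have h3 := hρm t h2
    have h4 := hM t (ht0.trans h2)
    have h5 : ρ t * exp (-(3/2)*t) = y t - ψ t0 * exp (t/2) := by
      simp only [hρ, sub_mul, mul_assoc, ← exp_add]
      ring_nf; simp
    have h6 : ρ t0 * exp (-(3/2)*t) ≤ ρ t * exp (-(3/2)*t) := by gcongr
    linarith
  refine ⟨key, y T * exp (3/2*T), by have := hpos T le_rfl; positivity, fun t ht => ?_⟩
  have : -(y T * exp (3/2*T)) ≤ -(y t * exp (3/2*t)) := by
    refine le_of_deriv (g := fun t => -(y t * exp (3/2*t)))
      (g' := fun t => -((y1 t + 3/2 * y t) * exp (3/2*t))) ht (fun x hx => ?_) (fun x hx => ?_)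
    · have e1 : HasDerivAt (fun t => exp (3/2 * t)) (exp (3/2 * x) * (3/2)) x := by
        have := ((hasDerivAt_id x).const_mul (3/2:ℝ)).exp
        simpa using this
      refine (((hy x hx.1).mul e1).neg).congr_deriv ?_
      ring
    · have := key x hx.1.le
      have h : 0 ≤ -(y1 x + 3/2*y x) := by linarith
      have := mul_nonneg h (exp_pos (3/2*x)).le
      linarith
  have h2 : y t = y t * exp (3/2*t) * exp (-(3/2)*t) := by
    rw [mul_assoc, ← exp_add]; simp
  rw [h2]; exact mul_le_mul_of_nonneg_right (by linarith) (exp_pos _).le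

structure Sys (q a b α : ℝ) (u u1 w w1 : ℝ → ℝ) : Prop where
  hq : 0 < q
  ha : 0 < a
  hb : 2 < b
  hbq : 2 ≤ b * q
  hα : 0 < α
  hu : ∀ t, 0 < t → HasDerivAt u (u1 t) t
  hu1 : ∀ t, 0 < t → HasDerivAt u1
    (-(cosh t / sinh t) * u1 t - (a * u t ^ (1 + q) - b * u t)) t
  u0 : Tendsto u (𝓝[>] 0) (𝓝 α)
  u10 : Tendsto u1 (𝓝[>] 0) (𝓝 0)
  hw : ∀ t, 0 < t → HasDerivAt w (w1 t) t
  hw1 : ∀ t, 0 < t → HasDerivAt w1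
    (-(cosh t / sinh t) * w1 t - (a * (1 + q) * u t ^ q - b) * w t) t
  w0 : Tendsto w (𝓝[>] 0) (𝓝 1)
  w10 : Tendsto w1 (𝓝[>] 0) (𝓝 0)

variable {q a b α : ℝ} {u u1 w w1 : ℝ → ℝ}

lemma Sys.rpow_succ (S : Sys q a b α u u1 w w1) {x : ℝ} (hx : 0 ≤ x) : x ^ (1 + q) = x * x ^ q := by
  rw [rpow_add_of_nonneg hx zero_le_one S.hq.le, rpow_one]

lemma Sys.rpow_succ2 (S : Sys q a b α u u1 w w1) {x : ℝ} (hx : 0 ≤ x) :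
    x ^ (2 + q) = x ^ 2 * x ^ q := by
  rw [rpow_add_of_nonneg hx zero_le_two S.hq.le, rpow_two]

noncomputable def En (q a b : ℝ) (u u1 : ℝ → ℝ) (t : ℝ) : ℝ :=
  u1 t ^ 2 / 2 + (a / (2 + q) * u t ^ (2 + q) - b / 2 * u t ^ 2)

lemma Sys.En_anti (S : Sys q a b α u u1 w w1) {s t : ℝ} (hs : 0 < s) (hst : s ≤ t) :
    En q a b u u1 t ≤ En q a b u u1 s := by
  have hq := S.hq
  have : -En q a b u u1 s ≤ -En q a b u u1 t := by
    refine le_of_deriv (g := fun t => -En q a b u u1 t)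
      (g' := fun t => cosh t / sinh t * u1 t ^ 2) hst (fun x hx => ?_) (fun x hx => ?_)
    · have hx0 : 0 < x := hs.trans_le hx.1
      have h1 := S.hu x hx0
      have h2 := S.hu1 x hx0
      have h3 := h1.rpow_const (p := 2 + q) (Or.inr (by linarith))
      have := (((h2.pow 2).div_const 2).add ((h3.const_mul (a/(2+q))).sub
        ((h1.pow 2).const_mul (b/2)))).neg
      refine this.congr_deriv ?_
      have e : 2 + q - 1 = 1 + q := by ring
      rw [e]
      have : 2 + q ≠ 0 := by positivity
      field_simp
      push_cast
      ring
    · have hx0 : 0 < x := hs.trans hx.1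
      have := sinh_pos_iff.2 hx0
      positivity
  linarith

/-- If the potential energy is nonnegative then `F > 0`. -/
lemma Sys.F_pos (S : Sys q a b α u u1 w w1) {x : ℝ} (hx : 0 < x)
    (h : 0 ≤ a / (2 + q) * x ^ (2 + q) - b / 2 * x ^ 2) : 0 < a * x ^ (1 + q) - b * x := by
  have hq := S.hq
  have hb := S.hb
  rw [S.rpow_succ hx.le]
  rw [S.rpow_succ2 hx.le] at h
  have h2 : 0 ≤ x ^ 2 * (a / (2+q) * x ^ q - b / 2) := by linarith
  have h3 : 0 ≤ a / (2+q) * x ^ q - b / 2 := nonneg_of_mul_nonneg_right h2 (by positivity)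
  have h4 : a / (2+q) * x ^ q * (2 + q) = a * x ^ q := by
    have : 2 + q ≠ 0 := by positivity
    field_simp
  have h5 : b < a * x ^ q := by nlinarith
  nlinarith

lemma Sys.vd (S : Sys q a b α u u1 w w1) {t : ℝ} (ht : 0 < t) :
    HasDerivAt (fun t => sinh t * u1 t) (-(sinh t * (a * u t ^ (1 + q) - b * u t))) t := by
  have hs : 0 < sinh t := sinh_pos_iff.2 ht
  refine ((hasDerivAt_sinh t).mul (S.hu1 t ht)).congr_deriv ?_
  field_simp
  ring

lemma sinh0 : Tendsto sinh (𝓝[>] (0:ℝ)) (𝓝 0) := by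
  have := (continuous_sinh.tendsto 0).mono_left (nhdsWithin_le_nhds (s := Ioi (0:ℝ)))
  simpa using this

lemma cosh0 : Tendsto cosh (𝓝[>] (0:ℝ)) (𝓝 1) := by
  have := (continuous_cosh.tendsto 0).mono_left (nhdsWithin_le_nhds (s := Ioi (0:ℝ)))
  simpa using this

lemma Sys.F0 (S : Sys q a b α u u1 w w1) :
    Tendsto (fun t => a * u t ^ (1 + q) - b * u t) (𝓝[>] 0) (𝓝 (a * α ^ (1 + q) - b * α)) :=
  ((S.u0.rpow_const (Or.inl S.hα.ne')).const_mul a).sub (S.u0.const_mul b)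

lemma Sys.u1_neg (S : Sys q a b α u u1 w w1) {T : ℝ} (hT : 0 < T)
    (hpos : ∀ t ∈ Ioo 0 T, 0 < u t) (hE : ∀ t ∈ Ioo 0 T, 0 ≤ En q a b u u1 t) :
    ∀ t ∈ Ioo 0 T, u1 t < 0 := by
  have hFα : 0 < a * α ^ (1 + q) - b * α := by
    refine S.F_pos S.hα ?_
    have h1 : Tendsto (En q a b u u1) (𝓝[>] 0)
        (𝓝 ((0:ℝ) ^ 2 / 2 + (a / (2 + q) * α ^ (2 + q) - b / 2 * α ^ 2))) :=
      ((S.u10.pow 2).div_const 2).add (((S.u0.rpow_const (Or.inl S.hα.ne')).const_mul _).sub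
        ((S.u0.pow 2).const_mul _))
    have h2 := ge_of_tendsto h1 (b := 0) (by
      filter_upwards [Ioo_mem_nhdsGT hT] with t ht using hE t ht)
    linarith
  have hev : ∀ᶠ t in 𝓝[>] (0:ℝ), 0 < a * u t ^ (1 + q) - b * u t := S.F0.eventually_const_lt hFα
  obtain ⟨δ, hδ, hδ2⟩ := mem_nhdsGT_iff_exists_Ioo_subset.1 hev
  have hδ : 0 < δ := hδ
  have near : ∀ t ∈ Ioo 0 δ, u1 t < 0 := by
    intro t ht
    have : (0:ℝ) < -(sinh t * u1 t) := by
      refine lim_lt (g := fun t => -(sinh t * u1 t)) ht.1 (fun x hx => (S.vd hx.1).neg)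
        (fun x hx => ?_) ?_
      · have := hδ2 (show x ∈ Ioo 0 δ from ⟨hx.1, hx.2.trans ht.2⟩)
        have h2 : 0 < sinh x := sinh_pos_iff.2 hx.1
        rw [neg_neg]
        exact mul_pos h2 this
      · simpa using (sinh0.mul S.u10).neg
    have h2 : 0 < sinh t := sinh_pos_iff.2 ht.1
    by_contra h
    have := mul_nonneg h2.le (not_lt.1 h)
    linarith
  intro t ht
  by_contra hcon
  have htδ : δ ≤ t := by
    by_contra h
    exact hcon (near t ⟨ht.1, not_le.1 h⟩)
  obtain ⟨c, hc, hc0, hc1⟩ := first_zero (g := fun t => -u1 t) (s := δ/2) (T := t) (by linarith)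
    (fun x hx => (S.hu1 x (by linarith [hx.1])).continuousAt.neg.continuousWithinAt)
    (by have := near (δ/2) ⟨by linarith, by linarith⟩; simpa using this)
    (by simpa using hcon)
  have hcp : 0 < c := by linarith [hc.1]
  have h1 := deriv_nonpos hc.1 (S.hu1 c hcp).neg hc0 (fun x hx => hc1 x ⟨hx.1.le, hx.2⟩)
  have hc0' : u1 c = 0 := by simpa using hc0
  have hcT : c ∈ Ioo 0 T := ⟨hcp, hc.2.trans_lt ht.2⟩
  have h2 := hE c hcT
  rw [En, hc0'] at h2
  have h3 := S.F_pos (hpos c hcT) (by linarith)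
  rw [hc0'] at h1
  linarith

/-- Wronskian of `u` and `w`. -/
lemma Sys.Wd (S : Sys q a b α u u1 w w1) {t : ℝ} (ht : 0 < t) (hu : 0 ≤ u t) :
    HasDerivAt (fun t => -(sinh t * (u t * w1 t - w t * u1 t)))
      (sinh t * (w t * (a * q * u t ^ q * u t))) t := by
  have hs : 0 < sinh t := sinh_pos_iff.2 ht
  refine ((hasDerivAt_sinh t).mul (((S.hu t ht).mul (S.hw1 t ht)).sub
    ((S.hw t ht).mul (S.hu1 t ht)))).neg.congr_deriv ?_
  simp only [Pi.sub_apply, Pi.mul_apply]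
  rw [S.rpow_succ hu]
  field_simp
  ring

lemma Sys.W_neg (S : Sys q a b α u u1 w w1) {T : ℝ} (hT : 0 < T) (huT : 0 ≤ u T)
    (hpos : ∀ t ∈ Ioo 0 T, 0 < u t) (hw : ∀ t ∈ Ioo 0 T, 0 < w t) :
    u T * w1 T - w T * u1 T < 0 := by
  have : (0:ℝ) < -(sinh T * (u T * w1 T - w T * u1 T)) := by
    refine lim_lt (g := fun t => -(sinh t * (u t * w1 t - w t * u1 t))) hT (fun x hx => S.Wd hx.1 ?_)
      (fun x hx => ?_) ?_
    · rcases hx.2.eq_or_lt with h | h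
      · rwa [h]
      · exact (hpos x ⟨hx.1, h⟩).le
    · have := hpos x hx
      have := hw x hx
      have := sinh_pos_iff.2 hx.1
      have := S.ha
      have := S.hq
      positivity
    · simpa using (sinh0.mul ((S.u0.mul S.w10).sub (S.w0.mul S.u10))).neg
  have hs : 0 < sinh T := sinh_pos_iff.2 hT
  by_contra h
  have := mul_nonneg hs.le (not_lt.1 h)
  linarith

/-- Wronskian of `v = sinh u' + β u` and `w`. -/
noncomputable def Zf (q a b β : ℝ) (u u1 w w1 : ℝ → ℝ) (t : ℝ) : ℝ :=
  sinh t * ((sinh t * u1 t + β * u t) * w1 t -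
    w t * (-(sinh t * (a * u t ^ (1 + q) - b * u t)) + β * u1 t))

noncomputable def Ph (q a b β : ℝ) (u : ℝ → ℝ) (t : ℝ) : ℝ :=
  2 * cosh t * (b - a * u t ^ q) + β * a * q * u t ^ q

lemma Sys.Zd (S : Sys q a b α u u1 w w1) (β : ℝ) {t : ℝ} (ht : 0 < t) (hu : 0 ≤ u t) :
    HasDerivAt (Zf q a b β u u1 w w1) (-(sinh t * w t * u t * Ph q a b β u t)) t := by
  have hs : 0 < sinh t := sinh_pos_iff.2 ht
  have hq := S.hq
  have h3 := (S.hu t ht).rpow_const (p := 1 + q) (Or.inr (by linarith))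
  have hF := (h3.const_mul a).sub ((S.hu t ht).const_mul b)
  have hv := (S.vd ht).add ((S.hu t ht).const_mul β)
  have hv1 := (((hasDerivAt_sinh t).mul hF).neg).add ((S.hu1 t ht).const_mul β)
  refine ((hasDerivAt_sinh t).mul ((hv.mul (S.hw1 t ht)).sub
    ((S.hw t ht).mul hv1))).congr_deriv ?_
  simp only [Pi.sub_apply, Pi.mul_apply, Pi.add_apply, Pi.neg_apply, Ph]
  have e : 1 + q - 1 = q := by ring
  rw [e, S.rpow_succ hu]
  field_simp
  ring

lemma Sys.Z0 (S : Sys q a b α u u1 w w1) (β : ℝ) :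
    Tendsto (Zf q a b β u u1 w w1) (𝓝[>] 0) (𝓝 0) := by
  have := sinh0.mul ((((sinh0.mul S.u10).add (S.u0.const_mul β)).mul S.w10).sub
    (S.w0.mul (((sinh0.mul S.F0).neg).add (S.u10.const_mul β))))
  simp only [mul_zero, zero_mul, sub_zero, add_zero, neg_zero, zero_add] at this
  exact this

/-- `h = cosh τ (1 - b/(a u^q))` is strictly decreasing while `a u^q ≥ b`. -/
lemma Sys.h_anti (S : Sys q a b α u u1 w w1) {s t : ℝ} (hs : 0 < s) (hst : s < t)
    (hpos : ∀ x ∈ Ioc 0 t, 0 < u x) (hneg : ∀ x ∈ Ioo 0 t, u1 x < 0)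
    (hbig : b ≤ a * u t ^ q) :
    cosh t * (1 - b / a * u t ^ (-q)) < cosh s * (1 - b / a * u s ^ (-q)) := by
  have hq := S.hq
  have ha := S.ha
  have hb := S.hb
  have hdec : ∀ x ∈ Ioo 0 t, u t < u x := by
    intro x hx
    have := lt_of_deriv (g := fun t => -u t) hx.2 (fun y hy => (S.hu y (hx.1.trans_le hy.1)).neg)
      (fun y hy => by have := hneg y ⟨hx.1.trans hy.1, hy.2⟩; linarith)
    linarith
  have ht : 0 < t := hs.trans hst
  have hut : 0 < u t := hpos t ⟨ht, le_rfl⟩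
  have hB : ∀ x ∈ Ioo 0 t, b < a * u x ^ q := by
    intro x hx
    have : u t ^ q < u x ^ q := rpow_lt_rpow hut.le (hdec x hx) hq
    nlinarith
  have hD : ∀ x ∈ Ioo 0 t, (a * u x ^ (1+q) - b * u x) * (cosh x - 1) ≤ -(sinh x * u1 x) := by
    intro x hx
    have : (0:ℝ) ≤ -(sinh x * u1 x) - (a * u x ^ (1+q) - b * u x) * (cosh x - 1) := by
      refine lim_le (g := fun x => -(sinh x * u1 x) - (a * u x ^ (1+q) - b * u x) * (cosh x - 1))
        (g' := fun x => -((a * (1+q) * u x ^ q - b) * u1 x * (cosh x - 1))) hx.1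
        (fun y hy => ?_) (fun y hy => ?_) ?_
      · have h3 := (S.hu y hy.1).rpow_const (p := 1 + q) (Or.inr (by linarith))
        have hF := (h3.const_mul a).sub ((S.hu y hy.1).const_mul b)
        refine ((S.vd hy.1).neg.sub (hF.mul ((hasDerivAt_cosh y).sub_const 1))).congr_deriv ?_
        have e : 1 + q - 1 = q := by ring
        simp only [Pi.sub_apply]
        rw [e]
        ring
      · have hy' : y ∈ Ioo 0 t := ⟨hy.1, hy.2.trans hx.2⟩
        have h1 := hB y hy'
        have h2 : 0 < -u1 y := by have := hneg y hy'; linarith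
        have h3 : 0 ≤ cosh y - 1 := by have := one_le_cosh y; linarith
        have h4 : 0 ≤ a * (1+q) * u y ^ q - b := by nlinarith
        have := mul_nonneg (mul_nonneg h4 h2.le) h3
        linarith
      · simpa using ((sinh0.mul S.u10).neg).sub (S.F0.mul (cosh0.sub_const 1))
    linarith
  have : -(cosh s * (1 - b / a * u s ^ (-q))) < -(cosh t * (1 - b / a * u t ^ (-q))) := by
    refine lt_of_deriv (g := fun t => -(cosh t * (1 - b / a * u t ^ (-q))))
      (g' := fun x => -(sinh x * (1 - b / a * u x ^ (-q)) + cosh x * (b / a * q * u x ^ (-q-1) * u1 x)))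
      hst (fun x hx => ?_) (fun x hx => ?_)
    · have hx0 : 0 < x := hs.trans_le hx.1
      have h3 := (S.hu x hx0).rpow_const (p := -q) (Or.inl (hpos x ⟨hx0, hx.2⟩).ne')
      refine ((hasDerivAt_cosh x).mul ((h3.const_mul (b/a)).const_sub 1)).neg.congr_deriv ?_
      ring
    · have hx0 : 0 < x := hs.trans hx.1
      have hx' : x ∈ Ioo 0 t := ⟨hx0, hx.2⟩
      have hux : 0 < u x := hpos x ⟨hx0, hx.2.le⟩
      have hsx : 0 < sinh x := sinh_pos_iff.2 hx0
      have hc1 : 1 < cosh x := one_lt_cosh.2 hx0.ne'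
      have hsq : cosh x ^ 2 = sinh x ^ 2 + 1 := by rw [cosh_sq]
      set P := u x ^ q with hP
      have hPpos : 0 < P := rpow_pos_of_pos hux q
      have e1 : u x ^ (-q) = 1 / P := by rw [rpow_neg hux.le, one_div]
      have e2 : u x ^ (-q-1) = 1 / (P * u x) := by
        rw [rpow_sub hux, rpow_one, e1]; field_simp
      have hd := hD x hx'
      rw [S.rpow_succ hux.le, ← hP] at hd
      have hBx := hB x hx'
      rw [← hP] at hBx
      rw [e1, e2]
      -- goal: sinh (1 - b/(aP)) < cosh * b q /(a P u) * (-u1)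
      have g1 : sinh x ^ 2 * (a * P - b) * u x < cosh x * (b * q) * (-(sinh x * u1 x)) := by
        have h1 : cosh x * (b * q) * ((a * P - b) * u x * (cosh x - 1)) ≤
            cosh x * (b * q) * (-(sinh x * u1 x)) := by
          refine mul_le_mul_of_nonneg_left ?_ (by positivity)
          linarith
        have hK : 0 < (a * P - b) * u x := mul_pos (by linarith) hux
        have h2 : cosh x * 2 * ((a * P - b) * u x * (cosh x - 1)) ≤
            cosh x * (b * q) * ((a * P - b) * u x * (cosh x - 1)) := by
          have : 0 ≤ (a * P - b) * u x * (cosh x - 1) := mul_nonneg hK.le (by linarith)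
          have := S.hbq
          gcongr
        have h3 : sinh x ^ 2 < cosh x * 2 * (cosh x - 1) := by nlinarith
        have h4 := mul_lt_mul_of_pos_left h3 hK
        linarith
      have g2 : sinh x * (a * P - b) * u x + cosh x * (b * q) * u1 x < 0 := by
        by_contra h
        have := mul_nonneg hsx.le (not_lt.1 h)
        nlinarith
      have g3 : sinh x * (1 - b / a * (1/P)) + cosh x * (b/a*q*(1/(P * u x)) * u1 x) =
          (sinh x * (a * P - b) * u x + cosh x * (b * q) * u1 x) / (a * P * u x) := by
        field_simp
      rw [g3]
      have := div_neg_of_neg_of_pos g2 (show 0 < a * P * u x by positivity)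
      linarith
  linarith

/-- Core: after the first zero, `w` stays negative. -/
lemma Sys.core (S : Sys q a b α u u1 w w1) {T c : ℝ} (hc : 0 < c) (hcT : c < T)
    (hpos : ∀ t ∈ Ioo 0 T, 0 < u t) (huT : 0 ≤ u T)
    (hE : ∀ t ∈ Ioo 0 T, 0 ≤ En q a b u u1 t) 
    (hw : ∀ t ∈ Ioo 0 c, 0 < w t) (hwc : w c = 0) :
    let β := -(sinh c * u1 c) / u c
    (0 < β) ∧ Zf q a b β u u1 w w1 c = 0 ∧ (∀ t ∈ Ico c T, 0 < Ph q a b β u t) ∧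
    (∀ t ∈ Ioc c T, sinh t * u1 t + β * u t ≤ 0) ∧ ∀ t ∈ Ioc c T, w t < 0 := by
  intro β
  have hT : 0 < T := hc.trans hcT
  have hneg := S.u1_neg hT hpos hE
  have hq := S.hq
  have ha := S.ha
  have hb := S.hb
  have hcc : c ∈ Ioo 0 T := ⟨hc, hcT⟩
  have huc := hpos c hcc
  have hsc : 0 < sinh c := sinh_pos_iff.2 hc
  have hβ : 0 < β := by
    have := hneg c hcc
    refine div_pos ?_ huc
    have := mul_pos hsc (neg_pos.2 this)
    linarith
  have hvc : sinh c * u1 c + β * u c = 0 := by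
    simp only [β]; field_simp; ring
  have hZc : Zf q a b β u u1 w w1 c = 0 := by
    simp [Zf, hvc, hwc]
  have hPh : ∀ t ∈ Ico c T, 0 < Ph q a b β u t := by
    intro s hs
    by_contra hcon
    push Not at hcon
    have hs0 : 0 < s := hc.trans_le hs.1
    have hus := hpos s ⟨hs0, hs.2⟩
    have hPiff : ∀ x, 0 < u x → Ph q a b β u x =
        a * u x ^ q * (β * q - 2 * (cosh x * (1 - b / a * u x ^ (-q)))) := by
      intro x hx
      have : 0 < u x ^ q := rpow_pos_of_pos hx q
      rw [rpow_neg hx.le, Ph]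
      field_simp
      ring
    have hbig : b ≤ a * u s ^ q := by
      by_contra h
      push Not at h
      have h1 : 0 < b - a * u s ^ q := by linarith
      have h2 : 0 < u s ^ q := rpow_pos_of_pos hus q
      have h3 := cosh_pos s
      have : 0 < Ph q a b β u s := by unfold Ph; positivity
      linarith
    have hPneg : ∀ x ∈ Ioo 0 c, Ph q a b β u x < 0 := by
      intro x hx
      have hxs : x < s := hx.2.trans_le hs.1
      have hux := hpos x ⟨hx.1, hxs.trans hs.2⟩
      have h1 := S.h_anti hx.1 hxs (fun y hy => hpos y ⟨hy.1, hy.2.trans_lt hs.2⟩)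
        (fun y hy => hneg y ⟨hy.1, hy.2.trans hs.2⟩) hbig
      rw [hPiff s hus] at hcon
      rw [hPiff x hux]
      have p1 : 0 < a * u s ^ q := mul_pos ha (rpow_pos_of_pos hus q)
      have p2 : 0 < a * u x ^ q := mul_pos ha (rpow_pos_of_pos hux q)
      have h2 : β * q - 2 * (cosh s * (1 - b / a * u s ^ (-q))) ≤ 0 := by
        by_contra h
        have := mul_pos p1 (not_le.1 h)
        linarith
      exact mul_neg_of_pos_of_neg p2 (by linarith)
    have : 0 < Zf q a b β u u1 w w1 c := by
      refine lim_lt hc (fun x hx => S.Zd β hx.1 (hpos x ⟨hx.1, hx.2.trans_lt hcT⟩).le)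
        (fun x hx => ?_) (S.Z0 β)
      have h1 := hPneg x hx
      have h2 := hw x hx
      have h3 := hpos x ⟨hx.1, hx.2.trans hcT⟩
      have h4 : 0 < sinh x := sinh_pos_iff.2 hx.1
      have := mul_pos (mul_pos (mul_pos h4 h2) h3) (neg_pos.2 h1)
      linarith
    linarith
  have hv : ∀ t ∈ Ioc c T, sinh t * u1 t + β * u t ≤ 0 := by
    have h1 : ∀ t ∈ Ioo c T, sinh t * u1 t + β * u t ≤ 0 := by
      intro t ht
      have hut := hpos t ⟨hc.trans ht.1, ht.2⟩
      have : -(sinh c * u1 c / u c) ≤ -(sinh t * u1 t / u t) := by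
        refine le_of_deriv (g := fun t => -(sinh t * u1 t / u t)) (g' := fun t =>
          sinh t * ((u1 t ^ 2 + u t * (a * u t ^ (1 + q) - b * u t)) / u t ^ 2)) ht.1.le
          (fun x hx => ?_) (fun x hx => ?_)
        · have hx0 : 0 < x := hc.trans_le hx.1
          have hux := hpos x ⟨hx0, hx.2.trans_lt ht.2⟩
          refine ((S.vd hx0).div (S.hu x hx0) hux.ne').neg.congr_deriv ?_
          field_simp
          ring
        · have hx0 : 0 < x := hc.trans hx.1
          have hxT : x ∈ Ioo 0 T := ⟨hx0, hx.2.trans ht.2⟩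
          have hux := hpos x hxT
          have h1 := hE x hxT
          have hsx : 0 < sinh x := sinh_pos_iff.2 hx0
          have h2 : 0 < u x ^ q := rpow_pos_of_pos hux q
          rw [En, S.rpow_succ2 hux.le] at h1
          rw [S.rpow_succ hux.le]
          have h3 : a / (2 + q) ≤ a / 2 := by gcongr; linarith
          have h4 : a / (2 + q) * (u x ^ 2 * u x ^ q) ≤ a / 2 * (u x ^ 2 * u x ^ q) := by gcongr
          have : 0 ≤ u1 x ^ 2 + u x * (a * (u x * u x ^ q) - b * u x) := by linarith
          positivity
      have h2 : sinh t * u1 t / u t ≤ -β := by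
        have : -β = sinh c * u1 c / u c := by simp only [β]; ring
        linarith
      rw [div_le_iff₀ hut] at h2
      linarith
    intro t ht
    rcases ht.2.eq_or_lt with rfl | h
    · have hcont : ContinuousAt (fun t => sinh t * u1 t + β * u t) t :=
        ((S.vd hT).continuousAt).add ((S.hu t hT).continuousAt.const_mul β |>.congr (by rfl))
      refine le_of_tendsto (hcont.tendsto.mono_left (nhdsWithin_le_nhds (s := Iio t))) ?_
      filter_upwards [Ioo_mem_nhdsLT hcT] with x hx using h1 x hx
    · exact h1 t ⟨ht.1, h⟩
  refine ⟨hβ, hZc, hPh, hv, ?_⟩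
  have hw1c : w1 c < 0 := by
    have := S.W_neg hc huc.le (fun x hx => hpos x ⟨hx.1, hx.2.trans hcT⟩) hw
    rw [hwc] at this
    by_contra h
    have := mul_nonneg huc.le (not_lt.1 h)
    linarith
  intro t ht
  by_contra hcon
  -- a point just right of c where w < 0
  have hslope : ∀ᶠ x in 𝓝[>] c, slope w c x < 0 :=
    ((S.hw c hc).tendsto_slope.mono_left
      (nhdsWithin_mono c (fun x (hx : c < x) => hx.ne'))).eventually_lt_const hw1c
  obtain ⟨e, he, he2⟩ := mem_nhdsGT_iff_exists_Ioo_subset.1 hslope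
  have he : c < e := he
  have near : ∀ x ∈ Ioo c e, w x < 0 := by
    intro x hx
    have := he2 hx
    simp only [mem_ofPred_eq, slope_def_field, hwc, sub_zero] at this
    by_contra h
    have := div_nonneg (not_lt.1 h) (show 0 ≤ x - c by linarith [hx.1])
    linarith
  have hte : e ≤ t := by
    by_contra h
    exact hcon (near t ⟨ht.1, not_le.1 h⟩)
  obtain ⟨d, hd, hd0, hd1⟩ := first_zero (g := fun t => -w t) (s := (c+e)/2) (T := t) (by linarith)
    (fun x hx => (S.hw x (by linarith [hx.1])).continuousAt.neg.continuousWithinAt)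
    (by have := near ((c+e)/2) ⟨by linarith, by linarith⟩; simpa using this)
    (by simpa using hcon)
  have hcd : c < d := by linarith [hd.1]
  have hdp : 0 < d := hc.trans hcd
  have hwd : w d = 0 := by simpa using hd0
  have hwneg : ∀ x ∈ Ioo c d, w x < 0 := by
    intro x hx
    rcases lt_or_ge x e with h | h
    · exact near x ⟨hx.1, h⟩
    · have := hd1 x ⟨by linarith, hx.2⟩
      linarith
  have hw1d : 0 ≤ w1 d := by
    have := deriv_nonpos hcd (S.hw d hdp).neg hd0 (fun x hx => by
      have := hwneg x hx; show 0 < -w x; linarith)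
    linarith
  have hdT : d ≤ T := hd.2.trans ht.2
  have hZ : Zf q a b β u u1 w w1 c < Zf q a b β u u1 w w1 d := by
    refine lt_of_deriv hcd (fun x hx => S.Zd β (hc.trans_le hx.1) ?_) (fun x hx => ?_)
    · rcases (hx.2.trans hdT).eq_or_lt with h | h
      · rwa [h]
      · exact (hpos x ⟨hc.trans_le hx.1, h⟩).le
    · have hx0 : 0 < x := hc.trans hx.1
      have hxT : x < T := hx.2.trans_le hdT
      have h1 := hPh x ⟨hx.1.le, hxT⟩
      have h2 := hwneg x hx
      have h3 := hpos x ⟨hx0, hxT⟩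
      have h4 : 0 < sinh x := sinh_pos_iff.2 hx0
      have := mul_pos (mul_pos (mul_pos h4 (neg_pos.2 h2)) h3) h1
      linarith
  have h1 := hv d ⟨hcd, hdT⟩
  rw [hZc, Zf, hwd] at hZ
  have hsd : 0 < sinh d := sinh_pos_iff.2 hdp
  have := mul_nonneg hsd.le (mul_nonneg (neg_nonneg.2 h1) hw1d)
  linarith


/-- Case `G`: eventually `a (1+q) u^q` is small, hence both equations have decaying solutions. -/
lemma Sys.small (S : Sys q a b α u u1 w w1) (hlim : Tendsto u atTop (𝓝 0)) :
    ∃ T > 0, ∀ t, T ≤ t → u t ≤ 1 ∧ a * (1 + q) * u t ^ q ≤ 1 := by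
  have h1 : Tendsto (fun t => a * (1 + q) * u t ^ q) atTop (𝓝 (a * (1 + q) * 0 ^ q)) :=
    (hlim.rpow_const (Or.inr S.hq.le)).const_mul _
  rw [zero_rpow S.hq.ne', mul_zero] at h1
  have h2 := (h1.eventually_le_const zero_lt_one).and (hlim.eventually_le_const zero_lt_one)
  obtain ⟨T, hT⟩ := eventually_atTop.1 h2
  refine ⟨max T 1, by positivity, fun t ht => ?_⟩
  have := hT t ((le_max_left _ _).trans ht)
  exact ⟨this.2, this.1⟩

lemma Sys.u_decay (S : Sys q a b α u u1 w w1) (hpos : ∀ t, 0 < t → 0 < u t)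
    {T : ℝ} (hT : 0 < T) (hs : ∀ t, T ≤ t → u t ≤ 1 ∧ a * (1 + q) * u t ^ q ≤ 1) :
    (∀ t, T ≤ t → u1 t ≤ -(3/2) * u t) ∧ ∃ C > 0, ∀ t, T ≤ t → u t ≤ C * exp (-(3/2) * t) := by
  refine decay (Q := fun t => b - a * u t ^ q) (M := 1) hT (fun t ht => S.hu t (hT.trans_le ht))
    (fun t ht => ?_) (fun t ht => ?_) (fun t ht => hpos t (hT.trans_le ht)) (fun t ht => (hs t ht).1)
  · have ht0 := hT.trans_le ht
    refine (S.hu1 t ht0).congr_deriv ?_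
    rw [S.rpow_succ (hpos t ht0).le]
    ring
  · have h1 := (hs t ht).2
    have h2 : 0 < u t ^ q := rpow_pos_of_pos (hpos t (hT.trans_le ht)) q
    have hq := S.hq
    have ha := S.ha
    have hb := S.hb
    have h3 : 0 < a * q * u t ^ q := by positivity
    show 3/4 ≤ b - a * u t ^ q
    linarith

lemma two_sinh_le (t : ℝ) : sinh t ≤ exp t := by
  rw [sinh_eq]; linarith [exp_pos (-t), exp_pos t]

lemma Sys.G_zero (S : Sys q a b α u u1 w w1) (hpos : ∀ t, 0 < t → 0 < u t)
    (hlim : Tendsto u atTop (𝓝 0)) (hw : ∀ t, 0 < t → 0 < w t) : False := by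
  obtain ⟨T, hT, hs⟩ := S.small hlim
  obtain ⟨-, C, hC, hdec⟩ := S.u_decay hpos hT hs
  have hsT : 0 < sinh T := sinh_pos_iff.2 hT
  have hWT := S.W_neg hT (hpos T hT).le (fun t ht => hpos t ht.1) (fun t ht => hw t ht.1)
  set k := -(sinh T * (u T * w1 T - w T * u1 T)) with hk
  have hk0 : 0 < k := by
    have := mul_pos hsT (neg_pos.2 hWT); linarith
  have hWk : ∀ t, T ≤ t → k ≤ -(sinh t * (u t * w1 t - w t * u1 t)) := by
    intro t ht
    refine le_of_deriv (g := fun t => -(sinh t * (u t * w1 t - w t * u1 t))) ht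
      (fun x hx => S.Wd (hT.trans_le hx.1) (hpos x (hT.trans_le hx.1)).le) (fun x hx => ?_)
    have hx0 := hT.trans hx.1
    have := hpos x hx0
    have := hw x hx0
    have := sinh_pos_iff.2 hx0
    have := S.ha
    have := S.hq
    positivity
  set δ := k / C ^ 2 with hδ
  have hδ0 : 0 < δ := by positivity
  have hmain : ∀ t, T ≤ t → -(w T / u T + δ * T) ≤ -(w t / u t + δ * t) := by
    intro t ht
    refine le_of_deriv (g := fun t => -(w t / u t + δ * t))
      (g' := fun t => -((w1 t * u t - w t * u1 t) / u t ^ 2 + δ)) ht (fun x hx => ?_) (fun x hx => ?_)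
    · have hx0 := hT.trans_le hx.1
      refine (((S.hw x hx0).div (S.hu x hx0) (hpos x hx0).ne').add
        ((hasDerivAt_id x).const_mul δ)).neg.congr_deriv ?_
      ring
    · have hx0 := hT.trans hx.1
      have hux := hpos x hx0
      have hsx : 0 < sinh x := sinh_pos_iff.2 hx0
      have h1 := hWk x hx.1.le
      have h2 := hdec x hx.1.le
      have h3 : sinh x * u x ^ 2 ≤ C ^ 2 := by
        have e : exp x * (C * exp (-(3/2)*x)) ^ 2 = C ^ 2 * exp (-2*x) := by
          rw [mul_pow, ← exp_nat_mul, mul_left_comm, ← exp_add]; push_cast; ring_nf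
        have e2 : exp (-2*x) ≤ 1 := exp_le_one_iff.2 (by linarith)
        calc sinh x * u x ^ 2 ≤ exp x * (C * exp (-(3/2)*x)) ^ 2 := by
              gcongr; exact two_sinh_le x
          _ = C ^ 2 * exp (-2*x) := e
          _ ≤ C ^ 2 * 1 := by gcongr
          _ = C ^ 2 := mul_one _
      have h4 : δ ≤ k / (sinh x * u x ^ 2) := by
        rw [hδ]; gcongr
      have h5 : k / (sinh x * u x ^ 2) ≤ -((w1 x * u x - w x * u1 x) / u x ^ 2) := by
        rw [div_le_iff₀ (by positivity)]
        have : -((w1 x * u x - w x * u1 x) / u x ^ 2) * (sinh x * u x ^ 2) =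
          -(sinh x * (u x * w1 x - w x * u1 x)) := by field_simp
        rw [this]; exact h1
      linarith
  have hA : 0 < w T / u T := div_pos (hw T hT) (hpos T hT)
  set t := T + w T / u T / δ with ht
  have htT : T ≤ t := by have : 0 < w T / u T / δ := by positivity
                         linarith
  have h1 := hmain t htT
  have h2 : 0 < w t / u t := div_pos (hw t (hT.trans_le htT)) (hpos t (hT.trans_le htT))
  have h3 : δ * t = δ * T + w T / u T := by
    rw [ht]
    have := (hpos T hT).ne'
    field_simp
  linarith

lemma Sys.G_unb (S : Sys q a b α u u1 w w1) (hpos : ∀ t, 0 < t → 0 < u t)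
    (hlim : Tendsto u atTop (𝓝 0)) {c β M : ℝ} (hc : 0 < c) (hβ : 0 < β)
    (hZc : Zf q a b β u u1 w w1 c = 0) (hPh : ∀ t, c < t → 0 < Ph q a b β u t)
    (hv : ∀ t, c < t → sinh t * u1 t + β * u t ≤ 0) (hw : ∀ t, c < t → w t < 0)
    (hM : ∀ t, 0 < t → |w t| ≤ M) : False := by
  obtain ⟨T0, hT0, hs0⟩ := S.small hlim
  set T := max T0 (c + 1) with hTdef
  have hTT0 : T0 ≤ T := le_max_left _ _
  have hTc : c < T := by have := le_max_right T0 (c+1); linarith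
  have hT : 0 < T := hc.trans hTc
  have hs : ∀ t, T ≤ t → u t ≤ 1 ∧ a * (1 + q) * u t ^ q ≤ 1 := fun t ht => hs0 t (hTT0.trans ht)
  obtain ⟨hu1, C, hC, hdec⟩ := S.u_decay hpos hT hs
  obtain ⟨hy1, D, hD, hydec⟩ := decay (y := fun t => -w t) (y1 := fun t => -w1 t)
    (Q := fun t => b - a * (1 + q) * u t ^ q) (M := M) hT
    (fun t ht => (S.hw t (hT.trans_le ht)).neg)
    (fun t ht => (S.hw1 t (hT.trans_le ht)).neg.congr_deriv (by ring))
    (fun t ht => by have := (hs t ht).2; have := S.hb; show 3/4 ≤ b - a * (1 + q) * u t ^ q; linarith)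
    (fun t ht => by have := hw t (hTc.trans_le ht); show 0 < -w t; linarith)
    (fun t ht => (neg_le_abs _).trans (hM t (hT.trans_le ht)))
  have hZpos : ∀ x, c < x → 0 < -(sinh x * w x * u x * Ph q a b β u x) := by
    intro x hx
    have hx0 := hc.trans hx
    have h4 : 0 < sinh x := sinh_pos_iff.2 hx0
    have := mul_pos (mul_pos (mul_pos h4 (neg_pos.2 (hw x hx))) (hpos x hx0)) (hPh x hx)
    linarith
  have hZT : 0 < Zf q a b β u u1 w w1 T := by
    rw [← hZc]
    exact lt_of_deriv hTc (fun x hx => S.Zd β (hc.trans_le hx.1) (hpos x (hc.trans_le hx.1)).le)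
      (fun x hx => hZpos x hx.1)
  have hZm : ∀ t, T ≤ t → Zf q a b β u u1 w w1 T ≤ Zf q a b β u u1 w w1 t := fun t ht =>
    le_of_deriv ht (fun x hx => S.Zd β (hT.trans_le hx.1) (hpos x (hT.trans_le hx.1)).le)
      (fun x hx => (hZpos x (hTc.trans hx.1)).le)
  have hb := S.hb
  have ha := S.ha
  have hZb : ∀ t, T ≤ t → Zf q a b β u u1 w w1 t ≤ b * C * D * exp (-t) := by
    intro t ht
    have ht0 := hT.trans_le ht
    have hst : 0 < sinh t := sinh_pos_iff.2 ht0
    have hut := hpos t ht0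
    have hwt : 0 < -w t := neg_pos.2 (hw t (hTc.trans_le ht))
    have h1 : 0 ≤ w1 t := by have := hy1 t ht; linarith
    have h2 := hv t (hTc.trans_le ht)
    have h3 : u1 t ≤ 0 := by have := hu1 t ht; linarith
    have h4 : 0 < u t ^ (1+q) := rpow_pos_of_pos hut _
    have h5 : (sinh t * u1 t + β * u t) * w1 t ≤ 0 := mul_nonpos_of_nonpos_of_nonneg h2 h1
    have h6 : -(sinh t * (a * u t ^ (1 + q) - b * u t)) + β * u1 t ≤ sinh t * (b * u t) := by
      have e1 : 0 < sinh t * (a * u t ^ (1+q)) := by positivity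
      have e2 : 0 ≤ β * (-u1 t) := mul_nonneg hβ.le (by linarith)
      linarith
    have h7 : -w t * (-(sinh t * (a * u t ^ (1 + q) - b * u t)) + β * u1 t) ≤
        -w t * (sinh t * (b * u t)) := by gcongr
    have h8 : Zf q a b β u u1 w w1 t ≤ sinh t * (-w t * (sinh t * (b * u t))) := by
      rw [Zf]; gcongr; linarith
    have e : exp t * (D * exp (-(3/2)*t) * (exp t * (b * (C * exp (-(3/2)*t))))) =
        b * C * D * exp (-t) := by
      have : exp (-t) = exp t * exp (-(3/2)*t) * exp t * exp (-(3/2)*t) := by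
        rw [← exp_add, ← exp_add, ← exp_add]; ring_nf
      rw [this]; ring
    refine h8.trans (e ▸ ?_)
    have := two_sinh_le t
    have := hdec t ht
    have := hydec t ht
    gcongr
  have hlim2 : Tendsto (fun t => b * C * D * exp (-t)) atTop (𝓝 (b * C * D * 0)) :=
    (tendsto_exp_neg_atTop_nhds_zero).const_mul _
  rw [mul_zero] at hlim2
  obtain ⟨t, h1, h2⟩ := ((hlim2.eventually_lt_const hZT).and (eventually_ge_atTop T)).exists
  have := hZm t h2
  have := hZb t h2
  linarith

end SA

/-- Strict admissibility of initial values in `G ∪ N` (Theorem 5.1): assume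
`b̃ ≥ m`, let `α ∈ G ∪ N` with solution `u`, and let `w` solve the linearized
equation `w'' + coth(τ)·w' + f'(u)·w = 0` with `w(0) = 1`, `w'(0⁺) = 0`, where
`f'(s) = ã(1+2/m)s^{2/m} − b̃`.  Then `w` has exactly one zero in `(0, b(α))`;
moreover if `α ∈ N` then `w(b(α)) < 0`, while if `α ∈ G` then `w` is unbounded
on `(0, ∞)`.  The two conjuncts treat the cases `α ∈ N` and `α ∈ G`. -/
theorem strict_admissibility
    (m a b : ℝ) (hm : 2 < m) (ha : 0 < a) (hb : m ≤ b)
    (F : ℝ → ℝ) (hF : ∀ s, F s = a * s ^ (1 + 2 / m) - b * s)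
    (α : ℝ) (hα : 0 < α)
    (u : ℝ → ℝ)
    (huc : ContinuousOn u (Ici 0))
    (hud : ∀ τ ∈ Ioi (0 : ℝ), DifferentiableAt ℝ u τ)
    (hud' : ∀ τ ∈ Ioi (0 : ℝ), DifferentiableAt ℝ (deriv u) τ)
    (hode : ∀ τ ∈ Ioi (0 : ℝ),
      deriv (deriv u) τ + (Real.cosh τ / Real.sinh τ) * deriv u τ + F (u τ) = 0)
    (hu0 : u 0 = α)
    (hu'0 : Tendsto (deriv u) (nhdsWithin 0 (Ioi 0)) (nhds 0))
    (w : ℝ → ℝ)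
    (hwc : ContinuousOn w (Ici 0))
    (hwd : ∀ τ ∈ Ioi (0 : ℝ), DifferentiableAt ℝ w τ)
    (hwd' : ∀ τ ∈ Ioi (0 : ℝ), DifferentiableAt ℝ (deriv w) τ)
    (hwode : ∀ τ ∈ Ioi (0 : ℝ),
      deriv (deriv w) τ + (Real.cosh τ / Real.sinh τ) * deriv w τ
        + (a * (1 + 2 / m) * u τ ^ (2 / m) - b) * w τ = 0)
    (hw0 : w 0 = 1)
    (hw'0 : Tendsto (deriv w) (nhdsWithin 0 (Ioi 0)) (nhds 0)) :
    (∀ bα : ℝ, 0 < bα → u bα = 0 → (∀ τ ∈ Ico 0 bα, 0 < u τ) →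
        (∃! τ, τ ∈ Ioo 0 bα ∧ w τ = 0) ∧ w bα < 0) ∧
    ((∀ τ ∈ Ioi (0 : ℝ), 0 < u τ) → Tendsto u atTop (nhds 0) →
        (∃! τ, τ ∈ Ioi (0 : ℝ) ∧ w τ = 0) ∧
        ¬ ∃ M : ℝ, ∀ τ ∈ Ioi (0 : ℝ), |w τ| ≤ M) := by
  
  have hm0 : (0:ℝ) < m := by linarith
  have ioi : ∀ f : ℝ → ℝ, ContinuousOn f (Ici 0) →
      Tendsto f (nhdsWithin 0 (Ioi 0)) (nhds (f 0)) := fun f hf =>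
    (hf 0 self_mem_Ici).mono_left (nhdsWithin_mono 0 Ioi_subset_Ici_self)
  have S : SA.Sys (2/m) a b α u (deriv u) w (deriv w) := by
    refine ⟨by positivity, ha, by linarith, ?_, hα, fun t ht => (hud t ht).hasDerivAt,
      fun t ht => ?_, hu0 ▸ ioi u huc, hu'0, fun t ht => (hwd t ht).hasDerivAt, fun t ht => ?_,
      hw0 ▸ ioi w hwc, hw'0⟩
    · rw [mul_div_assoc', le_div_iff₀ hm0]; linarith
    · refine (hud' t ht).hasDerivAt.congr_deriv ?_
      have := hode t ht
      rw [hF] at this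
      linarith
    · refine (hwd' t ht).hasDerivAt.congr_deriv ?_
      have := hwode t ht
      linarith
  -- location of the first zero
  have firstz : ∀ T, 0 < T → w T ≤ 0 → ∃ c ∈ Ioc 0 T, w c = 0 ∧ ∀ t ∈ Ico 0 c, 0 < w t :=
    fun T hT h => SA.first_zero hT (hwc.mono Icc_subset_Ici_self) (by rw [hw0]; exact one_pos) h
  constructor
  · intro B hB huB hpos
    have hpos' : ∀ t ∈ Ioo 0 B, 0 < u t := fun t ht => hpos t ⟨ht.1.le, ht.2⟩
    have hEB : 0 ≤ SA.En (2/m) a b u (deriv u) B := by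
      have : (2:ℝ) + 2/m ≠ 0 := by positivity
      rw [SA.En, huB, Real.zero_rpow this]
      have := sq_nonneg (deriv u B)
      simp only [mul_zero]
      norm_num
      positivity
    have hE : ∀ t ∈ Ioo 0 B, 0 ≤ SA.En (2/m) a b u (deriv u) t := fun t ht =>
      hEB.trans (S.En_anti ht.1 ht.2.le)
    have hneg := S.u1_neg hB hpos' hE
    have hu1B : deriv u B ≤ 0 := by
      have hcont := (hud' B hB).continuousAt
      refine le_of_tendsto (hcont.tendsto.mono_left (nhdsWithin_le_nhds (s := Iio B))) ?_
      filter_upwards [Ioo_mem_nhdsLT hB] with x hx using (hneg x hx).le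
    have hex : ∃ t ∈ Ioo 0 B, w t ≤ 0 := by
      by_contra hcon
      push Not at hcon
      have h1 := S.W_neg hB huB.ge hpos' hcon
      have h2 : 0 ≤ w B := by
        have hcont := (hwd B hB).continuousAt
        refine ge_of_tendsto (hcont.tendsto.mono_left (nhdsWithin_le_nhds (s := Iio B))) ?_
        filter_upwards [Ioo_mem_nhdsLT hB] with x hx using (hcon x hx).le
      rw [huB] at h1
      have := mul_nonneg h2 (neg_nonneg.2 hu1B)
      linarith
    obtain ⟨t, ht, hwt⟩ := hex
    obtain ⟨c, hc, hc0, hc1⟩ := firstz t ht.1 hwt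
    have hcB : c < B := hc.2.trans_lt ht.2
    obtain ⟨-, -, -, -, hfin⟩ := S.core hc.1 hcB hpos' huB.ge hE
      (fun x hx => hc1 x ⟨hx.1.le, hx.2⟩) hc0
    refine ⟨⟨c, ⟨⟨hc.1, hcB⟩, hc0⟩, ?_⟩, hfin B ⟨hcB, le_rfl⟩⟩
    rintro d ⟨hd, hd0⟩
    rcases lt_trichotomy d c with h | h | h
    · exact absurd hd0 (hc1 d ⟨hd.1.le, h⟩).ne'
    · exact h
    · exact absurd hd0 (hfin d ⟨h, hd.2.le⟩).ne
  · intro hpos hlim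
    have hE : ∀ t, 0 < t → 0 ≤ SA.En (2/m) a b u (deriv u) t := by
      intro t ht
      have h1 : Tendsto (fun s => a / (2 + 2/m) * u s ^ (2 + 2/m) - b / 2 * u s ^ 2) atTop
          (nhds (a / (2 + 2/m) * 0 ^ (2 + 2/m) - b / 2 * 0 ^ 2)) :=
        ((hlim.rpow_const (Or.inr (by positivity))).const_mul _).sub ((hlim.pow 2).const_mul _)
      have h0 : (2:ℝ) + 2/m ≠ 0 := by positivity
      rw [Real.zero_rpow h0] at h1
      simp only [mul_zero, ne_eq, OfNat.ofNat_ne_zero, not_false_eq_true, zero_pow, sub_zero] at h1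
      refine le_of_tendsto h1 ?_
      filter_upwards [eventually_ge_atTop t] with s hs
      refine le_trans ?_ (S.En_anti ht hs)
      rw [SA.En]
      have := sq_nonneg (deriv u s)
      linarith
    have hex : ∃ t, 0 < t ∧ w t ≤ 0 := by
      by_contra hcon
      push Not at hcon
      exact S.G_zero hpos hlim hcon
    obtain ⟨t, ht, hwt⟩ := hex
    obtain ⟨c, hc, hc0, hc1⟩ := firstz t ht hwt
    have core := fun T (hT : c < T) => S.core hc.1 hT (fun t ht => hpos t ht.1)
      (hpos T (hc.1.trans hT)).le (fun t ht => hE t ht.1) (fun x hx => hc1 x ⟨hx.1.le, hx.2⟩) hc0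
    have hfin : ∀ t, c < t → w t < 0 := fun t ht => (core t ht).2.2.2.2 t ⟨ht, le_rfl⟩
    refine ⟨⟨c, ⟨hc.1, hc0⟩, ?_⟩, ?_⟩
    · rintro d ⟨hd, hd0⟩
      rcases lt_trichotomy d c with h | h | h
      · exact absurd hd0 (hc1 d ⟨le_of_lt hd, h⟩).ne'
      · exact h
      · exact absurd hd0 (hfin d h).ne
    · rintro ⟨M, hM⟩
      exact S.G_unb hpos hlim hc.1 (core (c+1) (by linarith)).1 (core (c+1) (by linarith)).2.1
        (fun t ht => (core (t+1) (by linarith)).2.2.1 t ⟨ht.le, by linarith⟩)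
        (fun t ht => (core t ht).2.2.2.1 t ⟨ht, le_rfl⟩) hfin hM
end
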